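/- arXiv:2110.08541 — 3 statements merged into one kernel-verified Lean document; each statement's English description precedes it below -/
import Mathlib

section
/- Let S ⊂ S² be a simply connected domain with smooth boundary and (spherical) area θ, and let β ∈ C¹(S¹, S²) be a simple, positively oriented parametrization of its boundary ∂S, regarded as a closed curve β : [0,1] → S² with β(0) = β(1). Then the parallel transport around β is rotation by θ in the tangent plane at β(0): for every v ∈ ℝ³ with v · β(0) = 0, Π_β v = R_{β(0)}^{(θ)} v = v cos θ + (β(0) × v) sin θ. -/
open MeasureTheory Set Filter Matrix
open scoped RealInnerProductSpace Topology ENNReal NNReal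

noncomputable section

/-- Euclidean 3-space. -/
abbrev E3 : Type := EuclideanSpace ℝ (Fin 3)

/-- Cross product on `ℝ³`. -/
def cross3 (v w : E3) : E3 :=
  (WithLp.equiv 2 (Fin 3 → ℝ)).symm
    ![v 1 * w 2 - v 2 * w 1, v 2 * w 0 - v 0 * w 2, v 0 * w 1 - v 1 * w 0]

/-- The `i`-th row of a 3×3 matrix, as a vector in `ℝ³`; for `r ∈ SO(3)` this is `rᵀ eᵢ`. -/
def row3 (M : Matrix (Fin 3) (Fin 3) ℝ) (i : Fin 3) : E3 :=
  (WithLp.equiv 2 (Fin 3 → ℝ)).symm (M i)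

/-- The set of rotation matrices. -/
def SO3 : Set (Matrix (Fin 3) (Fin 3) ℝ) :=
  {M | M * Mᵀ = 1 ∧ M.det = 1}

/-- Lebesgue measure restricted to the unit interval `I = (0,1)`. -/
def muI : Measure ℝ := volume.restrict (Set.Ioo 0 1)

/-- `f` is absolutely continuous on `[a,b]` with (a.e.) derivative `f'` (fundamental theorem of
calculus form); this encodes `f ∈ W^{1,1}((a,b))` via its continuous representative. -/
def FTCOn (f f' : ℝ → E3) (a b : ℝ) : Prop :=
  IntervalIntegrable f' volume a b ∧
  ∀ t ∈ Set.Icc a b, f t = f a + ∫ s in a..t, f' s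

/-- `V` is the parallel transport of `v` along the spherical curve `β` (with derivative `β'`)
on `[a,b]`: the absolutely continuous solution of `V' = -(V·β')β`, `V a = v`, in integral form.
`V t` is the quantity denoted `Π_{β|_(a,t)} v`. -/
def IsParTrans (β β' : ℝ → E3) (a b : ℝ) (v : E3) (V : ℝ → E3) : Prop :=
  V a = v ∧
  IntervalIntegrable (fun s => ⟪V s, β' s⟫ • β s) volume a b ∧
  ∀ t ∈ Set.Icc a b, V t = v - ∫ s in a..t, ⟪V s, β' s⟫ • β s

/-!
Reflecting the tangent plane at `β t` onto the one at a fixed pole `x` turns parallel transport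
into rotation of a fixed plane, with angular speed `⟪x, β t × β' t⟫ / (‖x‖ - ⟪x, β t⟫)` up to sign.
So the holonomy is rotation by minus the integral `F x` of this kernel, for every `x` off the cone
over the curve. Hence `F` is constant there modulo `2π` and, being continuous, locally constant.
Near a boundary point the difference of the kernels on the two sides of the curve is asymptotically
`4π` times a half-plane Poisson kernel, so `F` jumps by `4π` across the cone. From almost every `x`
the half-plane wedge spanned by `x` and the curve point nearest to it reaches one of the two sides
without meeting the cone; thus `F = c` on the cone over `S` and `F = c - 4π` almost everywhere else.
The kernel is odd under reflection in the plane of `β t` and `β' t`, so `F` has mean zero over the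
unit ball, which forces `c = 4π - 3 vol(cone over S in the ball) = 4π - area S`.
-/

lemma real_inner_eq_dotProduct (x y : E3) : ⟪x, y⟫ = x.ofLp ⬝ᵥ y.ofLp := by
  simp [EuclideanSpace.inner_eq_star_dotProduct, dotProduct_comm]

lemma cross3_eq_toLp (x y : E3) : cross3 x y = WithLp.toLp 2 (x.ofLp ⨯₃ y.ofLp) := by
  simp [cross3, cross_apply]

/-- The cross product of `E3` as a continuous bilinear map. -/
def cross3L : E3 →L[ℝ] E3 →L[ℝ] E3 :=
  LinearMap.toContinuousBilinearMap <|
    ((crossProduct (R := ℝ)).compl₁₂ (WithLp.linearEquiv 2 ℝ (Fin 3 → ℝ)).toLinearMap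
      (WithLp.linearEquiv 2 ℝ (Fin 3 → ℝ)).toLinearMap).compr₂
      (WithLp.linearEquiv 2 ℝ (Fin 3 → ℝ)).symm.toLinearMap

lemma cross3L_apply (x y : E3) : cross3L x y = cross3 x y := by
  simp [cross3L, cross3_eq_toLp]

lemma continuous_cross3 {X : Type*} [TopologicalSpace X] {f g : X → E3} (hf : Continuous f)
    (hg : Continuous g) : Continuous fun x ↦ cross3 (f x) (g x) := by
  have h : Continuous fun p : E3 × E3 ↦ cross3 p.1 p.2 := by
    simpa only [cross3L_apply] using cross3L.isBoundedBilinearMap.continuous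
  exact h.comp (hf.prodMk hg)

lemma cross3_add_left (x y z : E3) : cross3 (x + y) z = cross3 x z + cross3 y z := by
  simpa only [cross3L_apply] using cross3L.map_add₂ x y z

lemma cross3_smul_left (c : ℝ) (x y : E3) : cross3 (c • x) y = c • cross3 x y := by
  simpa only [cross3L_apply] using cross3L.map_smul₂ c x y

lemma cross3_add_right (x y z : E3) : cross3 x (y + z) = cross3 x y + cross3 x z := by
  simpa only [cross3L_apply] using (cross3L x).map_add y z

lemma cross3_smul_right (c : ℝ) (x y : E3) : cross3 x (c • y) = c • cross3 x y := by
  simpa only [cross3L_apply] using (cross3L x).map_smul c y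

lemma cross3_self (x : E3) : cross3 x x = 0 := by
  rw [cross3_eq_toLp, cross_self, WithLp.toLp_zero]

lemma cross3_anticomm (x y : E3) : cross3 x y = -cross3 y x := by
  simp only [cross3_eq_toLp, ← cross_anticomm y.ofLp x.ofLp, WithLp.toLp_neg]

lemma inner_cross3_self_left (x y : E3) : ⟪x, cross3 x y⟫ = 0 := by
  simp only [cross3_eq_toLp, real_inner_eq_dotProduct, dot_self_cross]

lemma inner_cross3_self_right (x y : E3) : ⟪y, cross3 x y⟫ = 0 := by
  simp only [cross3_eq_toLp, real_inner_eq_dotProduct, dot_cross_self]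

lemma inner_cross3_rotate (x y z : E3) : ⟪x, cross3 y z⟫ = ⟪y, cross3 z x⟫ := by
  simp only [cross3_eq_toLp, real_inner_eq_dotProduct]
  exact triple_product_permutation _ _ _

lemma inner_cross3_cross3 (w x y z : E3) :
    ⟪cross3 w x, cross3 y z⟫ = ⟪w, y⟫ * ⟪x, z⟫ - ⟪w, z⟫ * ⟪x, y⟫ := by
  simp only [cross3_eq_toLp, real_inner_eq_dotProduct, cross_dot_cross]

lemma norm_cross3_sq (x y : E3) : ‖cross3 x y‖ ^ 2 = ‖x‖ ^ 2 * ‖y‖ ^ 2 - ⟪x, y⟫ ^ 2 := by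
  simp only [← real_inner_self_eq_norm_sq, inner_cross3_cross3]
  rw [real_inner_comm x y]
  ring

lemma norm_cross3_of_inner_eq_zero {x y : E3} (h : ⟪x, y⟫ = 0) : ‖cross3 x y‖ = ‖x‖ * ‖y‖ := by
  rw [← sq_eq_sq₀ (norm_nonneg _) (by positivity), norm_cross3_sq, h]
  ring

lemma cross3_cross3 (x y z : E3) : cross3 x (cross3 y z) = ⟪x, z⟫ • y - ⟪x, y⟫ • z := by
  simp only [cross3_eq_toLp, real_inner_eq_dotProduct, cross_cross_eq_smul_sub_smul',
    dotProduct_comm y.ofLp, WithLp.toLp_sub, WithLp.toLp_smul, WithLp.toLp_ofLp]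

lemma triple_smul_eq_sum (x y z w : E3) :
    ⟪x, cross3 y z⟫ • w = ⟪w, cross3 y z⟫ • x + ⟪w, cross3 z x⟫ • y + ⟪w, cross3 x y⟫ • z := by
  simp only [real_inner_eq_dotProduct, vec3_dotProduct, cross3]
  ext i
  fin_cases i <;>
  · simp only [WithLp.equiv_symm_apply, cons_val_zero, cons_val_one, cons_val, Fin.zero_eta,
      Fin.isValue, Fin.mk_one, Fin.reduceFinMk, PiLp.smul_apply, smul_eq_mul, PiLp.add_apply]
    ring

lemma triple_smul_eq_sum_cross3 (x y z w : E3) :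
    ⟪x, cross3 y z⟫ • w = ⟪w, x⟫ • cross3 y z + ⟪w, y⟫ • cross3 z x + ⟪w, z⟫ • cross3 x y := by
  simp only [real_inner_eq_dotProduct, vec3_dotProduct, cross3]
  ext i
  fin_cases i <;>
  · simp only [WithLp.equiv_symm_apply, cons_val_zero, cons_val_one, cons_val, Fin.zero_eta,
      Fin.isValue, Fin.mk_one, Fin.reduceFinMk, PiLp.smul_apply, smul_eq_mul, PiLp.add_apply]
    ring

lemma reflection_orthogonal_singleton_apply {E : Type*} [NormedAddCommGroup E]
    [InnerProductSpace ℝ E] (u v : E) :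
    (ℝ ∙ u)ᗮ.reflection v = v - (2 * (⟪u, v⟫ / ‖u‖ ^ 2)) • u := by
  rw [Submodule.reflection_orthogonal_apply, Submodule.reflection_singleton_apply, neg_sub,
    two_smul, two_mul, add_smul, RCLike.ofReal_real_eq_id, id_eq]

lemma cross3_reflection {u : E3} (hu : u ≠ 0) (y z : E3) :
    cross3 ((ℝ ∙ u)ᗮ.reflection y) ((ℝ ∙ u)ᗮ.reflection z) =
      -(ℝ ∙ u)ᗮ.reflection (cross3 y z) := by
  have hu' : ‖u‖ ≠ 0 := norm_ne_zero_iff.2 hu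
  have h := triple_smul_eq_sum_cross3 u y z u
  rw [real_inner_self_eq_norm_sq, cross3_anticomm z u] at h
  have h' : (⟪u, cross3 y z⟫ / ‖u‖ ^ 2) • u =
      cross3 y z - (⟪u, y⟫ / ‖u‖ ^ 2) • cross3 u z + (⟪u, z⟫ / ‖u‖ ^ 2) • cross3 u y := by
    rw [div_eq_inv_mul, mul_smul, h]
    match_scalars <;> field_simp
  simp only [reflection_orthogonal_singleton_apply, mul_smul _ _ u, h']
  simp only [sub_eq_add_neg, ← neg_smul, cross3_add_left, cross3_add_right, cross3_smul_left,
    cross3_smul_right, cross3_self, cross3_anticomm y u]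
  module

lemma inner_deriv_eq_zero_of_norm_eq_one {E : Type*} [NormedAddCommGroup E]
    [InnerProductSpace ℝ E] {β : ℝ → E} {a b : ℝ} (hab : a < b) (hβ : Differentiable ℝ β)
    (hnorm : ∀ t ∈ Icc a b, ‖β t‖ = 1) : ∀ t ∈ Icc a b, ⟪β t, deriv β t⟫ = 0 := by
  intro t ht
  have hder := (hβ t).hasDerivAt.norm_sq.hasDerivWithinAt (s := Icc a b)
  have hconst : HasDerivWithinAt (‖β ·‖ ^ 2) 0 (Icc a b) t :=
    (hasDerivWithinAt_const t (Icc a b) (1 : ℝ)).congr (fun s hs ↦ by simp [hnorm s hs])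
      (by simp [hnorm t ht])
  simpa using (uniqueDiffOn_Icc hab t ht).eq_deriv _ hder hconst

lemma eq_of_hasDerivWithinAt_Icc_zero {E : Type*} [NormedAddCommGroup E] [NormedSpace ℝ E]
    {f : ℝ → E} {a b : ℝ} (hf : ∀ t ∈ Icc a b, HasDerivWithinAt f 0 (Icc a b) t) :
    ∀ t ∈ Icc a b, f t = f a :=
  constant_of_has_deriv_right_zero (fun t ht ↦ (hf t ht).continuousWithinAt) fun t ht ↦
    ((hf t (Ico_subset_Icc_self ht)).mono_of_mem_nhdsWithin (Icc_mem_nhdsGE_of_mem ht))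

namespace IsParTrans

variable {β β' : ℝ → E3} {a b : ℝ} {v : E3} {V : ℝ → E3}

lemma continuousOn (hab : a ≤ b) (hV : IsParTrans β β' a b v V) : ContinuousOn V (Icc a b) := by
  have hprim := intervalIntegral.continuousOn_primitive_interval
    ((uIcc_of_le hab).symm ▸ (intervalIntegrable_iff_integrableOn_Icc_of_le hab).1 hV.2.1)
  rw [uIcc_of_le hab] at hprim
  exact (continuousOn_const.sub hprim).congr hV.2.2

lemma hasDerivWithinAt (hab : a ≤ b) (hβ : Continuous β) (hβ' : Continuous β')
    (hV : IsParTrans β β' a b v V) {t : ℝ} (ht : t ∈ Icc a b) :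
    HasDerivWithinAt V (-(⟪V t, β' t⟫ • β t)) (Icc a b) t := by
  have hpic := ODE.hasDerivWithinAt_picard_Icc (f := fun s w ↦ -(⟪w, β' s⟫ • β s)) (u := univ)
    (left_mem_Icc.2 hab) (by unfold Function.uncurry; fun_prop) (hV.continuousOn hab)
    (fun _ _ ↦ mem_univ _) v ht
  have hVpic : ∀ s ∈ Icc a b,
      V s = ODE.picard (fun s w ↦ -(⟪w, β' s⟫ • β s)) a v V s := fun s hs ↦ by
    rw [hV.2.2 s hs, ODE.picard_apply, intervalIntegral.integral_neg, sub_eq_add_neg]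
  exact hpic.congr hVpic (hVpic t ht)

lemma inner_eq_zero (hab : a ≤ b) (hβ : Differentiable ℝ β) (hβ' : Continuous (deriv β))
    (hnorm : ∀ t ∈ Icc a b, ‖β t‖ = 1) (hv : ⟪v, β a⟫ = 0)
    (hV : IsParTrans β (deriv β) a b v V) : ∀ t ∈ Icc a b, ⟪V t, β t⟫ = 0 := by
  intro t ht
  have hder : ∀ s ∈ Icc a b, HasDerivWithinAt (fun s ↦ ⟪V s, β s⟫) 0 (Icc a b) s := by
    intro s hs
    refine ((hV.hasDerivWithinAt hab hβ.continuous hβ' hs).inner ℝ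
      (hβ s).hasDerivAt.hasDerivWithinAt).congr_deriv ?_
    rw [inner_neg_left, real_inner_smul_left, real_inner_self_eq_norm_sq, hnorm s hs]
    ring
  rw [eq_of_hasDerivWithinAt_Icc_zero hder t ht, hV.1, hv]

end IsParTrans

lemma eq_rotation_of_hasDerivWithinAt {x : E3} (hx : ‖x‖ = 1) {a b : ℝ} (hab : a ≤ b)
    {ω : ℝ → ℝ} (hω : ContinuousOn ω (Icc a b)) {U : ℝ → E3} (hUx : ∀ t ∈ Icc a b, ⟪x, U t⟫ = 0)
    (hU : ∀ t ∈ Icc a b, HasDerivWithinAt U (ω t • cross3 x (U t)) (Icc a b) t) :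
    U b = Real.cos (∫ s in a..b, ω s) • U a + Real.sin (∫ s in a..b, ω s) • cross3 x (U a) := by
  have hxx : ∀ t ∈ Icc a b, cross3 x (cross3 x (U t)) = -U t := fun t ht ↦ by
    rw [cross3_cross3, hUx t ht, real_inner_self_eq_norm_sq, hx]
    module
  have hΦ : ∀ t ∈ Icc a b, HasDerivWithinAt (fun t ↦ ∫ s in a..t, ω s) (ω t) (Icc a b) t := by
    intro t ht
    refine (ODE.hasDerivWithinAt_picard_Icc (f := fun s _ ↦ ω s) (u := univ) (α := fun _ ↦ 0)
      (left_mem_Icc.2 hab) (hω.comp continuousOn_fst fun _ hp ↦ hp.1) continuousOn_const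
      (fun _ _ ↦ mem_univ _) 0 ht).congr (fun s _ ↦ ?_) ?_ <;>
    simp
  have hconst : Real.cos (∫ s in a..b, ω s) • U b - Real.sin (∫ s in a..b, ω s) • cross3 x (U b) =
      U a := by
    have hder : ∀ t ∈ Icc a b, HasDerivWithinAt (fun t ↦ Real.cos (∫ s in a..t, ω s) • U t -
        Real.sin (∫ s in a..t, ω s) • cross3 x (U t)) 0 (Icc a b) t := by
      intro t ht
      have hxU := (cross3L x).hasFDerivAt.comp_hasDerivWithinAt t (hU t ht)
      simp only [cross3L_apply, cross3_smul_right, hxx t ht] at hxU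
      refine (((hΦ t ht).cos.smul (hU t ht)).sub ((hΦ t ht).sin.smul hxU)).congr_deriv ?_
      simp only [Function.comp_apply, cross3L_apply]
      module
    simpa using eq_of_hasDerivWithinAt_Icc_zero hder b (right_mem_Icc.2 hab)
  rw [← hconst, sub_eq_add_neg, ← neg_smul, cross3_add_right, cross3_smul_right,
    cross3_smul_right, hxx b (right_mem_Icc.2 hab)]
  match_scalars
  · linear_combination -Real.sin_sq_add_cos_sq (∫ s in a..b, ω s)
  · ring

/-- The connection form of the sphere in the gauge obtained by reflecting the tangent plane at `b`
onto the one at `x / ‖x‖`: its value at the point `b` on the tangent vector `d`. It is homogeneous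
of degree zero in `x` and singular only where `b = x / ‖x‖`. -/
def connForm (x b d : E3) : ℝ := ⟪x, cross3 b d⟫ / (‖x‖ - ⟪x, b⟫)

lemma connForm_smul_left {c : ℝ} (hc : 0 < c) (x b d : E3) :
    connForm (c • x) b d = connForm x b d := by
  rw [connForm, real_inner_smul_left, real_inner_smul_left, norm_smul, Real.norm_of_nonneg hc.le,
    ← mul_sub, mul_div_mul_left _ _ hc.ne', connForm]

/-- The total connection form along the arc `β` on `[a, b]`, in the gauge with pole `x`. -/
def connAngle (β : ℝ → E3) (a b : ℝ) (x : E3) : ℝ := ∫ t in a..b, connForm x (β t) (deriv β t)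

lemma connAngle_smul {c : ℝ} (hc : 0 < c) (β : ℝ → E3) (a b : ℝ) (x : E3) :
    connAngle β a b (c • x) = connAngle β a b x := by
  simp only [connAngle, connForm_smul_left hc]

/-- The vectors that do not lie on any of the rays spanned by the unit vectors in `Γ`. -/
def offCone {E : Type*} [NormedAddCommGroup E] [InnerProductSpace ℝ E] (Γ : Set E) : Set E :=
  {x | ∀ y ∈ Γ, ⟪x, y⟫ < ‖x‖}

lemma smul_mem_offCone {E : Type*} [NormedAddCommGroup E] [InnerProductSpace ℝ E] {Γ : Set E}
    {c : ℝ} (hc : 0 < c) {x : E} (hx : x ∈ offCone Γ) : c • x ∈ offCone Γ := fun y hy ↦ by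
  rw [real_inner_smul_left, norm_smul, Real.norm_of_nonneg hc.le]
  exact mul_lt_mul_of_pos_left (hx y hy) hc

lemma reflection_sub_right {E : Type*} [NormedAddCommGroup E] [InnerProductSpace ℝ E] {x b : E}
    (h : ‖x‖ = ‖b‖) : (ℝ ∙ (x - b))ᗮ.reflection b = x :=
  (Submodule.reflection_involutive _).eq_iff.2 (Submodule.reflection_sub h).symm

lemma reflection_sub_apply_of_inner_eq_zero {E : Type*} [NormedAddCommGroup E]
    [InnerProductSpace ℝ E] {x b v : E} (hx : ‖x‖ = 1) (hb : ‖b‖ = 1) (hv : ⟪v, b⟫ = 0) :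
    (ℝ ∙ (x - b))ᗮ.reflection v = v - (⟪x, v⟫ / (1 - ⟪x, b⟫)) • (x - b) := by
  rw [reflection_orthogonal_singleton_apply, norm_sub_sq_real, hx, hb, inner_sub_left,
    real_inner_comm v b, hv, ← mul_div_assoc,
    show (1 : ℝ) ^ 2 - 2 * ⟪x, b⟫ + 1 ^ 2 = 2 * (1 - ⟪x, b⟫) by ring,
    mul_div_mul_left _ _ two_ne_zero, sub_zero]

lemma connForm_smul_cross3_reflection {x b d v : E3} (hx : ‖x‖ = 1) (hb : ‖b‖ = 1)
    (hxb : ⟪x, b⟫ ≠ 1) (hbd : ⟪b, d⟫ = 0) (hv : ⟪v, b⟫ = 0) :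
    connForm x b d • cross3 x ((ℝ ∙ (x - b))ᗮ.reflection v) =
      -(⟪v, d⟫ • b) -
        (((-(⟪v, d⟫ * ⟪x, b⟫)) * (1 - ⟪x, b⟫) + ⟪x, v⟫ * ⟪x, d⟫) / (1 - ⟪x, b⟫) ^ 2) • (x - b) +
        (⟪x, v⟫ / (1 - ⟪x, b⟫)) • d := by
  set w := (ℝ ∙ (x - b))ᗮ.reflection v with hw
  have hRx : (ℝ ∙ (x - b))ᗮ.reflection x = b := Submodule.reflection_sub (hx.trans hb.symm)
  have hRb : (ℝ ∙ (x - b))ᗮ.reflection b = x := reflection_sub_right (hx.trans hb.symm)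
  have hwx : ⟪w, x⟫ = 0 := by
    rw [hw, ← hv, ← LinearIsometryEquiv.inner_map_map (ℝ ∙ (x - b))ᗮ.reflection v, hRb]
  have hwb : ⟪w, b⟫ = ⟪x, v⟫ := by
    rw [real_inner_comm v x, hw, ← LinearIsometryEquiv.inner_map_map (ℝ ∙ (x - b))ᗮ.reflection v,
      hRx]
  have hwd : ⟪w, d⟫ = ⟪v, d⟫ - ⟪x, v⟫ / (1 - ⟪x, b⟫) * ⟪x, d⟫ := by
    rw [hw, reflection_sub_apply_of_inner_eq_zero hx hb hv, inner_sub_left, real_inner_smul_left,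
      inner_sub_left, hbd, sub_zero]
  have hg : 1 - ⟪x, b⟫ ≠ 0 := sub_ne_zero.2 hxb.symm
  rw [connForm, hx, div_eq_inv_mul, mul_smul, triple_smul_eq_sum, inner_cross3_cross3,
    inner_cross3_cross3, inner_cross3_cross3, real_inner_self_eq_norm_sq, hx, hwx, hwb, hwd]
  match_scalars <;> field_simp <;> ring

lemma hasDerivWithinAt_reflection_transport {x : E3} (hx : ‖x‖ = 1) {β V : ℝ → E3} {d : E3}
    {s : Set ℝ} {t : ℝ} (ht : t ∈ s) (hβ : HasDerivWithinAt β d s t)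
    (hV : HasDerivWithinAt V (-(⟪V t, d⟫ • β t)) s t) (hnorm : ∀ r ∈ s, ‖β r‖ = 1)
    (hVβ : ∀ r ∈ s, ⟪V r, β r⟫ = 0) (hβd : ⟪β t, d⟫ = 0) (hxβ : ⟪x, β t⟫ ≠ 1) :
    HasDerivWithinAt (fun r ↦ (ℝ ∙ (x - β r))ᗮ.reflection (V r))
      (connForm x (β t) d • cross3 x ((ℝ ∙ (x - β t))ᗮ.reflection (V t))) s t := by
  have hexplicit : ∀ r ∈ s, (ℝ ∙ (x - β r))ᗮ.reflection (V r) =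
      V r - (⟪x, V r⟫ / (1 - ⟪x, β r⟫)) • (x - β r) := fun r hr ↦
    reflection_sub_apply_of_inner_eq_zero hx (hnorm r hr) (hVβ r hr)
  have hnum := (hasDerivWithinAt_const t s x).inner ℝ hV
  have hden := ((hasDerivWithinAt_const t s x).inner ℝ hβ).const_sub 1
  have hquot := (hnum.div hden (sub_ne_zero.2 hxβ.symm)).smul (hβ.const_sub x)
  refine ((hV.sub hquot).congr_deriv ?_).congr hexplicit (hexplicit t ht)
  rw [connForm_smul_cross3_reflection hx (hnorm t ht) hxβ hβd (hVβ t ht)]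
  simp only [Pi.div_apply, inner_zero_left, inner_neg_right, real_inner_smul_right]
  module

section Holonomy

variable {β : ℝ → E3} {a b : ℝ} {v : E3} {V : ℝ → E3}

lemma continuousOn_connForm (hβ : ContDiff ℝ 1 β) {x : E3}
    (hx : x ∈ offCone (β '' Icc a b)) :
    ContinuousOn (fun t ↦ connForm x (β t) (deriv β t)) (Icc a b) := by
  have hβ' : Continuous (deriv β) := hβ.continuous_deriv le_rfl
  have hβc : Continuous β := hβ.continuous
  refine ContinuousOn.div ?_ (by fun_prop) fun t ht ↦ (sub_pos.2 (hx _ (mem_image_of_mem β ht))).ne'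
  exact (continuous_const.inner (continuous_cross3 hβc hβ')).continuousOn

lemma IsParTrans.eq_rotation_of_norm_eq_one (hab : a < b) (hβ : ContDiff ℝ 1 β)
    (hnorm : ∀ t ∈ Icc a b, ‖β t‖ = 1) (hclosed : β a = β b) (hv : ⟪v, β a⟫ = 0)
    (hV : IsParTrans β (deriv β) a b v V) {x : E3} (hx : ‖x‖ = 1)
    (hxβ : x ∈ offCone (β '' Icc a b)) :
    V b = Real.cos (connAngle β a b x) • v - Real.sin (connAngle β a b x) • cross3 (β a) v := by
  have hβd : Differentiable ℝ β := hβ.differentiable one_ne_zero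
  have hβ' : Continuous (deriv β) := hβ.continuous_deriv le_rfl
  have hVβ := hV.inner_eq_zero hab.le hβd hβ' hnorm hv
  have hne : ∀ t ∈ Icc a b, ⟪x, β t⟫ < 1 := fun t ht ↦ hx ▸ hxβ _ (mem_image_of_mem β ht)
  have ha := left_mem_Icc.2 hab.le
  have hRβ : ∀ t ∈ Icc a b, (ℝ ∙ (x - β t))ᗮ.reflection (β t) = x := fun t ht ↦
    reflection_sub_right (hx.trans (hnorm t ht).symm)
  have hrot := eq_rotation_of_hasDerivWithinAt hx hab.le (continuousOn_connForm hβ hxβ)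
    (U := fun t ↦ (ℝ ∙ (x - β t))ᗮ.reflection (V t))
    (fun t ht ↦ by
      rw [real_inner_comm, ← hVβ t ht,
        ← LinearIsometryEquiv.inner_map_map (ℝ ∙ (x - β t))ᗮ.reflection (V t), hRβ t ht])
    fun t ht ↦ hasDerivWithinAt_reflection_transport hx ht (hβd t).hasDerivAt.hasDerivWithinAt
      (hV.hasDerivWithinAt hab.le hβ.continuous hβ' ht) hnorm hVβ
      (inner_deriv_eq_zero_of_norm_eq_one hab hβd hnorm t ht) (hne t ht).ne
  have hxa : x - β a ≠ 0 := sub_ne_zero.2 fun h ↦ by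
    have := hne a ha
    rw [h, real_inner_self_eq_norm_sq, hnorm a ha] at this
    norm_num at this
  have hcross := cross3_reflection hxa (β a) v
  rw [hRβ a ha] at hcross
  apply (ℝ ∙ (x - β a))ᗮ.reflection.injective
  simp only [hV.1, ← hclosed, hcross] at hrot
  rw [hrot, map_sub, map_smul, map_smul, smul_neg, ← sub_eq_add_neg, connAngle]

lemma IsParTrans.eq_rotation (hab : a < b) (hβ : ContDiff ℝ 1 β)
    (hnorm : ∀ t ∈ Icc a b, ‖β t‖ = 1) (hclosed : β a = β b) (hv : ⟪v, β a⟫ = 0)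
    (hV : IsParTrans β (deriv β) a b v V) {x : E3} (hx : x ∈ offCone (β '' Icc a b)) :
    V b = Real.cos (connAngle β a b x) • v - Real.sin (connAngle β a b x) • cross3 (β a) v := by
  have hx0 : x ≠ 0 := by
    rintro rfl
    simpa using hx (β a) (mem_image_of_mem β (left_mem_Icc.2 hab.le))
  have hpos : 0 < ‖x‖⁻¹ := inv_pos.2 (norm_pos_iff.2 hx0)
  rw [← connAngle_smul hpos]
  exact hV.eq_rotation_of_norm_eq_one hab hβ hnorm hclosed hv (norm_smul_inv_norm (𝕜 := ℝ) hx0)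
    (smul_mem_offCone hpos hx)

end Holonomy

section Gauge

variable {β : ℝ → E3} {a b : ℝ}

lemma continuousOn_connAngle (hab : a ≤ b) (hβ : ContDiff ℝ 1 β) :
    ContinuousOn (connAngle β a b) (offCone (β '' Icc a b)) := by
  have hβ' : Continuous (deriv β) := hβ.continuous_deriv le_rfl
  have hβc : Continuous β := hβ.continuous
  rw [continuousOn_iff_continuous_domRestrict]
  have hker : Continuous (Function.uncurry fun (x : offCone (β '' Icc a b)) (t : ℝ) ↦
      connForm x (β (projIcc a b hab t)) (deriv β (projIcc a b hab t))) := by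
    unfold connForm Function.uncurry
    refine Continuous.div ?_ (by fun_prop) fun p ↦
      (sub_pos.2 (p.1.2 _ (mem_image_of_mem β (projIcc a b hab p.2).2))).ne'
    exact (continuous_subtype_val.comp continuous_fst).inner
      (continuous_cross3 (by fun_prop) (hβ'.comp (by fun_prop)))
  refine (intervalIntegral.continuous_parametric_intervalIntegral_of_continuous' hker a b).congr
    fun x ↦ intervalIntegral.integral_congr fun t ht ↦ ?_
  simp only [projIcc_of_mem hab (uIcc_of_le hab ▸ ht)]

lemma IsParTrans.connAngle_angle_eq (hab : a < b) (hβ : ContDiff ℝ 1 β)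
    (hnorm : ∀ t ∈ Icc a b, ‖β t‖ = 1) (hclosed : β a = β b) {v : E3} (hv0 : v ≠ 0)
    (hv : ⟪v, β a⟫ = 0) {V : ℝ → E3} (hV : IsParTrans β (deriv β) a b v V) {x y : E3}
    (hx : x ∈ offCone (β '' Icc a b)) (hy : y ∈ offCone (β '' Icc a b)) :
    (connAngle β a b x : Real.Angle) = connAngle β a b y := by
  have hrot := (hV.eq_rotation hab hβ hnorm hclosed hv hx).symm.trans
    (hV.eq_rotation hab hβ hnorm hclosed hv hy)
  have hw0 : cross3 (β a) v ≠ 0 := by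
    rw [← norm_ne_zero_iff, norm_cross3_of_inner_eq_zero (by rwa [real_inner_comm]),
      hnorm a (left_mem_Icc.2 hab.le), one_mul]
    exact norm_ne_zero_iff.2 hv0
  have hvw := inner_cross3_self_right (β a) v
  apply Real.Angle.cos_sin_inj
  · simpa [inner_sub_right, real_inner_smul_right, hvw, hv0] using congrArg (⟪v, ·⟫) hrot
  · simpa [inner_sub_right, real_inner_smul_right, real_inner_comm v, hvw, hw0] using
      congrArg (⟪cross3 (β a) v, ·⟫) hrot

lemma connAngle_eq_of_isPreconnected (hab : a ≤ b) (hβ : ContDiff ℝ 1 β)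
    (hmod : ∀ x ∈ offCone (β '' Icc a b), ∀ y ∈ offCone (β '' Icc a b),
      (connAngle β a b x : Real.Angle) = connAngle β a b y)
    {C : Set E3} (hC : IsPreconnected C) (hCΓ : C ⊆ offCone (β '' Icc a b)) {x y : E3}
    (hx : x ∈ C) (hy : y ∈ C) : connAngle β a b x = connAngle β a b y :=
  (AddCircle.isCoveringMap_coe (2 * Real.pi)).constOn_of_comp hC
    ((continuousOn_connAngle hab hβ).mono hCΓ)
    (fun z hz w hw ↦ hmod z (hCΓ hz) w (hCΓ hw)) hx hy

end Gauge

section MeanZero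

open Metric

lemma norm_cross3_map (L : E3 →ₗᵢ[ℝ] E3) (x y : E3) :
    ‖cross3 (L x) (L y)‖ = ‖cross3 x y‖ := by
  rw [← sq_eq_sq₀ (norm_nonneg _) (norm_nonneg _), norm_cross3_sq, norm_cross3_sq, L.norm_map,
    L.norm_map, L.inner_map_map]

lemma abs_connForm_le (x : E3) {b : E3} (hb : ‖b‖ = 1) (d : E3) :
    |connForm x b d| ≤ 2 * ‖x‖ * ‖d‖ * ‖cross3 x b‖⁻¹ := by
  have hle : ⟪x, b⟫ ≤ ‖x‖ := by simpa [hb] using real_inner_le_norm x b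
  have hnum : |⟪x, cross3 b d⟫| ≤ ‖d‖ * ‖cross3 x b‖ := by
    rw [inner_cross3_rotate, inner_cross3_rotate]
    exact abs_real_inner_le_norm _ _
  have hsq : ‖cross3 x b‖ ^ 2 ≤ 2 * ‖x‖ * (‖x‖ - ⟪x, b⟫) := by
    rw [norm_cross3_sq, hb]
    nlinarith
  rcases (norm_nonneg (cross3 x b)).eq_or_lt with h0 | h0
  · have : ⟪x, cross3 b d⟫ = 0 := abs_nonpos_iff.1 (by simpa [← h0] using hnum)
    simp [connForm, this, ← h0]
  have hpos : 0 < ‖x‖ - ⟪x, b⟫ := (sub_nonneg.2 hle).lt_of_ne fun h ↦ by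
    rw [← h, mul_zero] at hsq
    exact (pow_pos h0 2).not_ge hsq
  rw [connForm, abs_div, abs_of_pos hpos, ← div_eq_mul_inv, div_le_div_iff₀ hpos h0]
  calc |⟪x, cross3 b d⟫| * ‖cross3 x b‖ ≤ ‖d‖ * ‖cross3 x b‖ * ‖cross3 x b‖ := by gcongr
    _ = ‖d‖ * ‖cross3 x b‖ ^ 2 := by ring
    _ ≤ ‖d‖ * (2 * ‖x‖ * (‖x‖ - ⟪x, b⟫)) := by gcongr
    _ = 2 * ‖x‖ * ‖d‖ * (‖x‖ - ⟪x, b⟫) := by ring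

lemma measure_setOf_inner_eq_zero {E : Type*} [NormedAddCommGroup E] [InnerProductSpace ℝ E]
    [FiniteDimensional ℝ E] [MeasurableSpace E] [BorelSpace E] (μ : Measure E)
    [μ.IsAddHaarMeasure] {v : E} (hv : v ≠ 0) : μ {x | ⟪v, x⟫ = 0} = 0 := by
  have h : {x : E | ⟪v, x⟫ = 0} = ((ℝ ∙ v)ᗮ : Submodule ℝ E) := by
    ext x
    exact Submodule.mem_orthogonal_singleton_iff_inner_right.symm
  rw [h]
  apply Measure.addHaar_submodule
  rwa [Ne, Submodule.orthogonal_eq_top_iff, Submodule.span_singleton_eq_bot]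

lemma ae_apply_ne_zero {ι : Type*} [Fintype ι] (i : ι) : ∀ᵐ x : EuclideanSpace ℝ ι, x i ≠ 0 := by
  classical
  have h := measure_setOf_inner_eq_zero (volume : Measure (EuclideanSpace ℝ ι))
    (v := EuclideanSpace.single i 1) (by simp)
  simpa [ae_iff, EuclideanSpace.inner_single_left] using h

lemma integrableOn_ball_prod_abs_rpow {ι : Type*} [Fintype ι] {r : ℝ} (hr : -1 < r) :
    IntegrableOn (fun x : EuclideanSpace ℝ ι ↦ ∏ i, |x i| ^ r) (ball 0 1) := by
  have hint : Integrable ((ball (0 : ℝ) 1).indicator fun s : ℝ ↦ |s| ^ r) := by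
    refine (integrable_indicator_iff isOpen_ball.measurableSet).2 ?_
    refine integrableOn_ball_of_norm_le_rpow (C := 1) (α := -r) (by simp) (by simp; linarith)
      (ae_of_all _ fun s ↦ ?_) (measurable_id.abs.pow_const r).aestronglyMeasurable
    rw [neg_neg, one_mul, Real.norm_eq_abs, Real.norm_eq_abs, abs_of_nonneg (by positivity)]
  have hprod : Integrable fun x : EuclideanSpace ℝ ι ↦
      ∏ i, (ball (0 : ℝ) 1).indicator (fun s ↦ |s| ^ r) (x i) :=
    (PiLp.volume_preserving_ofLp ι).integrable_comp_of_integrable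
      (Integrable.fintype_prod fun _ ↦ hint)
  refine hprod.integrableOn.congr_fun (fun x hx ↦ Finset.prod_congr rfl fun i _ ↦ ?_)
    isOpen_ball.measurableSet
  exact indicator_of_mem
    (mem_ball_zero_iff.2 ((PiLp.norm_apply_le x i).trans_lt (mem_ball_zero_iff.1 hx))) _

section Isometry

variable {E F : Type*} [NormedAddCommGroup E] [InnerProductSpace ℝ E] [NormedAddCommGroup F]

lemma preimage_ball_zero (L : E ≃ₗᵢ[ℝ] E) (r : ℝ) : L ⁻¹' ball 0 r = ball 0 r := by
  ext x
  simp

variable [FiniteDimensional ℝ E] [MeasurableSpace E] [BorelSpace E]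

lemma setIntegral_ball_comp_linearIsometryEquiv [NormedSpace ℝ F] (L : E ≃ₗᵢ[ℝ] E) (f : E → F)
    (r : ℝ) : ∫ x in ball 0 r, f (L x) = ∫ x in ball 0 r, f x := by
  simpa only [preimage_ball_zero] using L.measurePreserving.setIntegral_preimage_emb
    L.toHomeomorph.measurableEmbedding f (ball 0 r)

lemma integrableOn_ball_comp_linearIsometryEquiv_iff (L : E ≃ₗᵢ[ℝ] E) {f : E → F} {r : ℝ} :
    IntegrableOn (fun x ↦ f (L x)) (ball 0 r) ↔ IntegrableOn f (ball 0 r) := by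
  simpa only [preimage_ball_zero, Function.comp_def] using
    L.measurePreserving.integrableOn_comp_preimage
      L.toHomeomorph.measurableEmbedding (f := f) (s := ball 0 r)

end Isometry

lemma setIntegral_ball_inv_norm_cross3_eq {b c : E3} (h : ‖b‖ = ‖c‖) (r : ℝ) :
    ∫ x in ball 0 r, ‖cross3 x b‖⁻¹ = ∫ x in ball 0 r, ‖cross3 x c‖⁻¹ := by
  let L : E3 ≃ₗᵢ[ℝ] E3 := (ℝ ∙ (b - c))ᗮ.reflection
  have hL : L c = b := reflection_sub_right h
  rw [← setIntegral_ball_comp_linearIsometryEquiv L]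
  simp only [← hL, ← LinearIsometryEquiv.coe_toLinearIsometry, norm_cross3_map]

lemma integrableOn_inv_norm_cross3_single :
    IntegrableOn (fun x : E3 ↦ ‖cross3 x (EuclideanSpace.single 0 1)‖⁻¹) (ball 0 1) := by
  -- By AM-GM, `‖x × e₀‖² = x₁² + x₂² ≥ |x₀ x₁ x₂|` on the ball.
  refine (integrableOn_ball_prod_abs_rpow (r := -(1 / 2)) (by norm_num)).mono'
    ((continuous_cross3 continuous_id continuous_const).norm.measurable.inv.aestronglyMeasurable) ?_
  filter_upwards [ae_restrict_of_ae (ae_apply_ne_zero 0), ae_restrict_of_ae (ae_apply_ne_zero 1),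
    ae_restrict_of_ae (ae_apply_ne_zero 2), ae_restrict_mem isOpen_ball.measurableSet]
    with x h0 h1 h2 hx
  have hx0 : |x 0| ≤ 1 := (PiLp.norm_apply_le x 0).trans (mem_ball_zero_iff.1 hx).le
  have hprod : |x 0| * |x 1| * |x 2| ≤ ‖cross3 x (EuclideanSpace.single 0 1)‖ ^ 2 := by
    have hsq : ‖cross3 x (EuclideanSpace.single 0 1)‖ ^ 2 = |x 1| ^ 2 + |x 2| ^ 2 := by
      rw [EuclideanSpace.norm_sq_eq, Fin.sum_univ_three]
      simp [cross3, add_comm]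
    have hamgm := two_mul_le_add_sq |x 1| |x 2|
    have : |x 0| * (|x 1| * |x 2|) ≤ |x 1| * |x 2| := mul_le_of_le_one_left (by positivity) hx0
    rw [hsq]
    nlinarith [mul_nonneg (abs_nonneg (x 1)) (abs_nonneg (x 2))]
  rw [norm_inv, norm_norm, Fin.prod_univ_three, Real.rpow_neg (abs_nonneg _),
    Real.rpow_neg (abs_nonneg _), Real.rpow_neg (abs_nonneg _), ← mul_inv, ← mul_inv,
    ← Real.mul_rpow (abs_nonneg _) (abs_nonneg _), ← Real.mul_rpow (by positivity) (abs_nonneg _),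
    ← Real.sqrt_eq_rpow]
  exact inv_anti₀ (by positivity) (Real.sqrt_le_iff.2 ⟨norm_nonneg _, hprod⟩)

lemma integrableOn_inv_norm_cross3 {b : E3} (hb : ‖b‖ = 1) :
    IntegrableOn (fun x ↦ ‖cross3 x b‖⁻¹) (ball 0 1) := by
  let L : E3 ≃ₗᵢ[ℝ] E3 := (ℝ ∙ (b - EuclideanSpace.single 0 1))ᗮ.reflection
  have hL : L (EuclideanSpace.single 0 1) = b := reflection_sub_right (by simp [hb])
  rw [← integrableOn_ball_comp_linearIsometryEquiv_iff L]
  simpa only [← hL, ← LinearIsometryEquiv.coe_toLinearIsometry, norm_cross3_map] using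
    integrableOn_inv_norm_cross3_single

variable {β : ℝ → E3} {a b : ℝ}

lemma measurable_connForm (hβ : ContDiff ℝ 1 β) :
    Measurable fun p : E3 × ℝ ↦ connForm p.1 (β p.2) (deriv β p.2) := by
  have hβ' : Continuous (deriv β) := hβ.continuous_deriv le_rfl
  have hβc : Continuous β := hβ.continuous
  refine Measurable.div (Continuous.measurable ?_) (Continuous.measurable (by fun_prop))
  exact continuous_fst.inner (continuous_cross3 (by fun_prop) (hβ'.comp continuous_snd))

lemma integrable_connForm (hβ : ContDiff ℝ 1 β) (hnorm : ∀ t ∈ Icc a b, ‖β t‖ = 1) :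
    Integrable (fun p : E3 × ℝ ↦ connForm p.1 (β p.2) (deriv β p.2))
      ((volume.restrict (ball 0 1)).prod (volume.restrict (Ioc a b))) := by
  obtain ⟨M, hM⟩ := (isCompact_Icc (a := a) (b := b)).exists_bound_of_continuousOn
    (hβ.continuous_deriv le_rfl).continuousOn
  have hmeas := (measurable_connForm hβ).stronglyMeasurable
  have hbound : ∀ t ∈ Ioc a b, ∀ x ∈ ball (0 : E3) 1,
      ‖connForm x (β t) (deriv β t)‖ ≤ 2 * M * ‖cross3 x (β t)‖⁻¹ := fun t ht x hx ↦ by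
    refine (abs_connForm_le x (hnorm t (Ioc_subset_Icc_self ht)) _).trans ?_
    have hx' : ‖x‖ ≤ 1 := (mem_ball_zero_iff.1 hx).le
    have hMt := hM t (Ioc_subset_Icc_self ht)
    gcongr
    nlinarith [norm_nonneg x, norm_nonneg (deriv β t)]
  have hslice : ∀ t ∈ Ioc a b, IntegrableOn (fun x ↦ connForm x (β t) (deriv β t)) (ball 0 1) :=
    fun t ht ↦ ((integrableOn_inv_norm_cross3 (hnorm t (Ioc_subset_Icc_self ht))).const_mul
      (2 * M)).mono' (hmeas.comp_measurable measurable_prodMk_right).aestronglyMeasurable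
      ((ae_restrict_iff' isOpen_ball.measurableSet).2 (ae_of_all _ (hbound t ht)))
  refine (integrable_prod_iff' hmeas.aestronglyMeasurable).2
    ⟨(ae_restrict_iff' measurableSet_Ioc).2 (ae_of_all _ hslice), ?_⟩
  refine Integrable.mono' (g := fun _ ↦ 2 * M * ∫ x in ball (0 : E3) 1,
    ‖cross3 x (EuclideanSpace.single 0 1)‖⁻¹) (integrable_const _)
    hmeas.norm.integral_prod_left'.aestronglyMeasurable
    ((ae_restrict_iff' measurableSet_Ioc).2 (ae_of_all _ fun t ht ↦ ?_))
  have ht' := hnorm t (Ioc_subset_Icc_self ht)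
  rw [Real.norm_of_nonneg (by positivity), setIntegral_ball_inv_norm_cross3_eq (c := β t)
    (by simp [ht']), ← integral_const_mul]
  exact setIntegral_mono_on (hslice t ht).norm ((integrableOn_inv_norm_cross3 ht').const_mul _)
    isOpen_ball.measurableSet (hbound t ht)

lemma setIntegral_ball_connForm (c d : E3) (r : ℝ) : ∫ x in ball 0 r, connForm x c d = 0 := by
  let L : E3 ≃ₗᵢ[ℝ] E3 := (ℝ ∙ cross3 c d)ᗮ.reflection
  have hLn : L (cross3 c d) = -cross3 c d :=
    Submodule.reflection_orthogonalComplement_singleton_eq_neg _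
  have hLc : L c = c := Submodule.reflection_mem_subspace_eq_self <|
    Submodule.mem_orthogonal_singleton_iff_inner_left.2 (inner_cross3_self_left c d)
  have hodd : ∀ x, connForm (L x) c d = -connForm x c d := fun x ↦ by
    have hn : ⟪L x, cross3 c d⟫ = -⟪x, cross3 c d⟫ := by
      rw [← L.inner_map_map x, hLn, inner_neg_right, neg_neg]
    have hc : ⟪L x, c⟫ = ⟪x, c⟫ := by rw [← L.inner_map_map x, hLc]
    rw [connForm, connForm, hn, hc, L.norm_map, neg_div]
  have h := setIntegral_ball_comp_linearIsometryEquiv L (fun x ↦ connForm x c d) r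
  simp only [hodd, integral_neg] at h
  linarith

lemma setIntegral_ball_connAngle (hab : a ≤ b) (hβ : ContDiff ℝ 1 β)
    (hnorm : ∀ t ∈ Icc a b, ‖β t‖ = 1) : ∫ x in ball 0 1, connAngle β a b x = 0 := by
  simp only [connAngle, intervalIntegral.integral_of_le hab]
  rw [integral_integral_swap (integrable_connForm hβ hnorm)]
  simp only [setIntegral_ball_connForm, integral_zero]

lemma measure_compl_offCone {E : Type*} [NormedAddCommGroup E] [InnerProductSpace ℝ E]
    [MeasurableSpace E] [BorelSpace E] [FiniteDimensional ℝ E] (hE : 2 < Module.finrank ℝ E)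
    (μ : Measure E) [μ.IsAddHaarMeasure] {γ : ℝ → E} (hγ : ContDiff ℝ 1 γ) {s : Set ℝ}
    (hnorm : ∀ t ∈ s, ‖γ t‖ = 1) : μ (offCone (γ '' s))ᶜ = 0 := by
  have hdim : dimH (range fun p : ℝ × ℝ ↦ p.1 • γ p.2) ≤ 2 := by
    have hsmooth : ContDiff ℝ 1 fun p : ℝ × ℝ ↦ p.1 • γ p.2 := by fun_prop
    simpa [one_add_one_eq_two] using hsmooth.dimH_range_le
  have hnull : μ (range fun p : ℝ × ℝ ↦ p.1 • γ p.2) = 0 := by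
    refine measure_zero_of_dimH_lt (d := Module.finrank ℝ E) ?_
      (hdim.trans_lt (by exact_mod_cast hE))
    rw [Measure.isAddLeftInvariant_eq_smul μ (Measure.hausdorffMeasure (Module.finrank ℝ E))]
    exact Measure.smul_absolutelyContinuous
  refine measure_mono_null (fun x hx ↦ ?_) hnull
  simp only [offCone, mem_compl_iff, mem_ofPred_eq, not_forall, not_lt, forall_mem_image] at hx
  obtain ⟨t, ht, hxt⟩ := hx
  have heq : ⟪x, γ t⟫ = ‖x‖ * ‖γ t‖ :=
    (real_inner_le_norm _ _).antisymm (by rwa [hnorm t ht, mul_one])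
  exact ⟨(‖x‖, t), by simpa [hnorm t ht] using (inner_eq_norm_mul_iff_real.1 heq).symm⟩

end MeanZero

section Poisson

/-- The Poisson kernel of the upper half plane at height `u`, multiplied by `π`. -/
def halfPlanePoisson (u t : ℝ) : ℝ := u / (u ^ 2 + t ^ 2)

lemma halfPlanePoisson_nonneg {u : ℝ} (hu : 0 ≤ u) (t : ℝ) : 0 ≤ halfPlanePoisson u t := by
  unfold halfPlanePoisson
  positivity

lemma continuous_halfPlanePoisson {u : ℝ} (hu : 0 < u) : Continuous (halfPlanePoisson u) :=
  continuous_const.div (by fun_prop) fun t ↦ by positivity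

lemma continuousAt_halfPlanePoisson {t : ℝ} (ht : t ≠ 0) :
    ContinuousAt (fun p : ℝ × ℝ ↦ halfPlanePoisson p.1 p.2) (0, t) :=
  continuousAt_fst.div (by fun_prop) (by simpa using ht)

lemma integral_halfPlanePoisson {u : ℝ} (hu : 0 < u) (a b t₀ : ℝ) :
    ∫ t in a..b, halfPlanePoisson u (t - t₀) =
      Real.arctan ((b - t₀) / u) - Real.arctan ((a - t₀) / u) := by
  have h : ∀ t, halfPlanePoisson u t = u⁻¹ * (1 + (t / u) ^ 2)⁻¹ := fun t ↦ by
    unfold halfPlanePoisson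
    field_simp
  rw [intervalIntegral.integral_comp_sub_right (halfPlanePoisson u)]
  simp only [h, intervalIntegral.integral_const_mul]
  rw [intervalIntegral.integral_comp_div (fun s ↦ (1 + s ^ 2)⁻¹) hu.ne', smul_eq_mul,
    inv_mul_cancel_left₀ hu.ne', integral_inv_one_add_sq]

lemma tendsto_integral_halfPlanePoisson {a b t₀ : ℝ} (ht₀ : t₀ ∈ Ioo a b) :
    Tendsto (fun u ↦ ∫ t in a..b, halfPlanePoisson u (t - t₀)) (𝓝[>] 0) (𝓝 Real.pi) := by
  have hb : Tendsto (fun u ↦ Real.arctan ((b - t₀) / u)) (𝓝[>] 0) (𝓝 (Real.pi / 2)) :=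
    (Real.tendsto_arctan_atTop.mono_right nhdsWithin_le_nhds).comp
      (tendsto_inv_nhdsGT_zero.const_mul_atTop (sub_pos.2 ht₀.2))
  have ha : Tendsto (fun u ↦ Real.arctan ((a - t₀) / u)) (𝓝[>] 0) (𝓝 (-(Real.pi / 2))) :=
    (Real.tendsto_arctan_atBot.mono_right nhdsWithin_le_nhds).comp
      (tendsto_inv_nhdsGT_zero.const_mul_atTop_of_neg (sub_neg.2 ht₀.1))
  have h := hb.sub ha
  rw [sub_neg_eq_add, add_halves] at h
  refine h.congr' ?_
  filter_upwards [self_mem_nhdsWithin] with u hu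
  exact (integral_halfPlanePoisson hu a b t₀).symm

variable {k : ℝ → ℝ → ℝ} {a b t₀ c : ℝ}

lemma eventually_abs_sub_halfPlanePoisson_le_of_tendsto_mul
    (hk : Tendsto (fun p : ℝ × ℝ ↦ k p.1 p.2 * ((p.1 ^ 2 + (p.2 - t₀) ^ 2) / p.1))
      (𝓝[>] 0 ×ˢ 𝓝 t₀) (𝓝 c)) {ε : ℝ} (hε : 0 < ε) :
    ∀ᶠ p : ℝ × ℝ in 𝓝[>] 0 ×ˢ 𝓝 t₀, |k p.1 p.2 - c * halfPlanePoisson p.1 (p.2 - t₀)| ≤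
      ε * (halfPlanePoisson p.1 (p.2 - t₀) + 1) := by
  have hpos : ∀ᶠ p : ℝ × ℝ in 𝓝[>] 0 ×ˢ 𝓝 t₀, 0 < p.1 :=
    tendsto_fst.eventually self_mem_nhdsWithin
  filter_upwards [hpos, hk.eventually (Metric.closedBall_mem_nhds c hε)] with p hp hkp
  have hP := halfPlanePoisson_nonneg hp.le (p.2 - t₀)
  have heq : k p.1 p.2 - c * halfPlanePoisson p.1 (p.2 - t₀) =
      (k p.1 p.2 * ((p.1 ^ 2 + (p.2 - t₀) ^ 2) / p.1) - c) *
        halfPlanePoisson p.1 (p.2 - t₀) := by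
    unfold halfPlanePoisson
    field_simp
  rw [heq, abs_mul, abs_of_nonneg hP]
  calc _ ≤ ε * halfPlanePoisson p.1 (p.2 - t₀) := by gcongr; exact hkp
    _ ≤ _ := by gcongr; linarith

lemma eventually_abs_sub_halfPlanePoisson_le_of_tendsto_zero {t : ℝ} (ht : t ≠ t₀)
    (hk : Tendsto (fun p : ℝ × ℝ ↦ k p.1 p.2) (𝓝[>] 0 ×ˢ 𝓝 t) (𝓝 0)) (c : ℝ) {ε : ℝ}
    (hε : 0 < ε) :
    ∀ᶠ p : ℝ × ℝ in 𝓝[>] 0 ×ˢ 𝓝 t, |k p.1 p.2 - c * halfPlanePoisson p.1 (p.2 - t₀)| ≤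
      ε * (halfPlanePoisson p.1 (p.2 - t₀) + 1) := by
  have hpos : ∀ᶠ p : ℝ × ℝ in 𝓝[>] 0 ×ˢ 𝓝 t, 0 < p.1 :=
    tendsto_fst.eventually self_mem_nhdsWithin
  have hle : 𝓝[>] (0 : ℝ) ×ˢ 𝓝 t ≤ 𝓝 (0, t) := by
    rw [nhds_prod_eq]
    exact prod_mono nhdsWithin_le_nhds le_rfl
  have hcont : ContinuousAt (fun p : ℝ × ℝ ↦ halfPlanePoisson p.1 (p.2 - t₀)) (0, t) :=
    (continuousAt_halfPlanePoisson (sub_ne_zero.2 ht)).comp (x := ((0 : ℝ), t))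
      (f := fun p : ℝ × ℝ ↦ (p.1, p.2 - t₀)) (by fun_prop)
  have hdiff : Tendsto (fun p : ℝ × ℝ ↦ k p.1 p.2 - c * halfPlanePoisson p.1 (p.2 - t₀))
      (𝓝[>] 0 ×ˢ 𝓝 t) (𝓝 0) := by
    simpa [halfPlanePoisson] using hk.sub ((hcont.tendsto.mono_left hle).const_mul c)
  filter_upwards [hpos, hdiff.eventually (Metric.closedBall_mem_nhds 0 hε)] with p hp hkp
  have hP := halfPlanePoisson_nonneg hp.le (p.2 - t₀)
  rw [dist_zero_right] at hkp
  exact hkp.trans (le_mul_of_one_le_right hε.le (by linarith))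

lemma eventually_forall_abs_sub_halfPlanePoisson_le
    (hnear : Tendsto (fun p : ℝ × ℝ ↦ k p.1 p.2 * ((p.1 ^ 2 + (p.2 - t₀) ^ 2) / p.1))
      (𝓝[>] 0 ×ˢ 𝓝 t₀) (𝓝 c))
    (hfar : ∀ t ∈ Icc a b, t ≠ t₀ → Tendsto (fun p : ℝ × ℝ ↦ k p.1 p.2) (𝓝[>] 0 ×ˢ 𝓝 t) (𝓝 0))
    {ε : ℝ} (hε : 0 < ε) :
    ∀ᶠ u in 𝓝[>] 0, ∀ t ∈ Icc a b, |k u t - c * halfPlanePoisson u (t - t₀)| ≤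
      ε * (halfPlanePoisson u (t - t₀) + 1) := by
  have hlocal : ∀ t ∈ Icc a b, ∀ᶠ p : ℝ × ℝ in 𝓝[>] 0 ×ˢ 𝓝 t,
      |k p.1 p.2 - c * halfPlanePoisson p.1 (p.2 - t₀)| ≤
        ε * (halfPlanePoisson p.1 (p.2 - t₀) + 1) := by
    intro t ht
    rcases eq_or_ne t t₀ with rfl | htt₀
    · exact eventually_abs_sub_halfPlanePoisson_le_of_tendsto_mul hnear hε
    · exact eventually_abs_sub_halfPlanePoisson_le_of_tendsto_zero htt₀ (hfar t ht htt₀) c hε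
  filter_upwards [Eventually.curry (isCompact_Icc.mem_prod_nhdsSet_of_forall hlocal)]
    with u hu t ht
  exact hu.self_of_nhdsSet t ht

lemma tendsto_integral_of_tendsto_mul_halfPlanePoisson_inv (ht₀ : t₀ ∈ Ioo a b)
    (hint : ∀ᶠ u in 𝓝[>] 0, IntervalIntegrable (k u) volume a b)
    (hnear : Tendsto (fun p : ℝ × ℝ ↦ k p.1 p.2 * ((p.1 ^ 2 + (p.2 - t₀) ^ 2) / p.1))
      (𝓝[>] 0 ×ˢ 𝓝 t₀) (𝓝 c))
    (hfar : ∀ t ∈ Icc a b, t ≠ t₀ →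
      Tendsto (fun p : ℝ × ℝ ↦ k p.1 p.2) (𝓝[>] 0 ×ˢ 𝓝 t) (𝓝 0)) :
    Tendsto (fun u ↦ ∫ t in a..b, k u t) (𝓝[>] 0) (𝓝 (c * Real.pi)) := by
  have hab : a ≤ b := (ht₀.1.trans ht₀.2).le
  have hI := tendsto_integral_halfPlanePoisson ht₀
  suffices hdiff : Tendsto (fun u ↦ (∫ t in a..b, k u t) -
      c * ∫ t in a..b, halfPlanePoisson u (t - t₀)) (𝓝[>] 0) (𝓝 0) by
    simpa using hdiff.add (hI.const_mul c)
  have hM : 0 < Real.pi + 1 + (b - a) := by linarith [Real.pi_pos]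
  refine Metric.tendsto_nhds.2 fun ε hε ↦ ?_
  filter_upwards [eventually_forall_abs_sub_halfPlanePoisson_le hnear hfar
      (half_pos (div_pos hε hM)), hint, self_mem_nhdsWithin,
      hI.eventually (ge_mem_nhds (lt_add_one Real.pi))] with u hk hku hu hIu
  have hP : IntervalIntegrable (fun t ↦ halfPlanePoisson u (t - t₀)) volume a b :=
    ((continuous_halfPlanePoisson hu).comp (by fun_prop)).intervalIntegrable a b
  have hle : ‖∫ t in a..b, k u t - c * halfPlanePoisson u (t - t₀)‖ ≤
      ∫ t in a..b, ε / (Real.pi + 1 + (b - a)) / 2 * (halfPlanePoisson u (t - t₀) + 1) :=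
    intervalIntegral.norm_integral_le_of_norm_le hab
      (ae_of_all _ fun t ht ↦ hk t (Ioc_subset_Icc_self ht))
      ((hP.add intervalIntegrable_const).const_mul _)
  rw [intervalIntegral.integral_sub hku (hP.const_mul c), intervalIntegral.integral_const_mul,
    intervalIntegral.integral_const_mul, intervalIntegral.integral_add hP intervalIntegrable_const,
    intervalIntegral.integral_const, smul_eq_mul, mul_one] at hle
  rw [dist_zero_right]
  calc _ ≤ _ := hle
    _ ≤ ε / (Real.pi + 1 + (b - a)) / 2 * (Real.pi + 1 + (b - a)) := by gcongr
    _ = ε / 2 := by field_simp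
    _ < ε := half_lt_self hε

end Poisson

section Jump

open Asymptotics

lemma tendsto_sub_mul_div_of_tendsto {ι : Type*} {l : Filter ι} {n₀ n₁ d₀ d₁ u r : ι → ℝ}
    {ν κ : ℝ} (hκ : κ ≠ 0) (hn₁ : Tendsto n₁ l (𝓝 ν))
    (hd₀ : Tendsto (fun i ↦ d₀ i / r i) l (𝓝 κ))
    (hnd : Tendsto (fun i ↦ n₀ i * d₁ i / r i) l (𝓝 0))
    (hud : Tendsto (fun i ↦ u i * d₁ i / r i) l (𝓝 0)) (hu : ∀ᶠ i in l, u i ≠ 0)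
    (hr : ∀ᶠ i in l, r i ≠ 0) :
    Tendsto (fun i ↦ ((n₀ i + u i * n₁ i) / (d₀ i - u i * d₁ i) -
      (n₀ i - u i * n₁ i) / (d₀ i + u i * d₁ i)) * (r i / u i)) l (𝓝 (2 * ν / κ)) := by
  have hminus : Tendsto (fun i ↦ (d₀ i - u i * d₁ i) / r i) l (𝓝 κ) := by
    simpa only [sub_div, sub_zero] using hd₀.sub hud
  have hplus : Tendsto (fun i ↦ (d₀ i + u i * d₁ i) / r i) l (𝓝 κ) := by
    simpa only [add_div, add_zero] using hd₀.add hud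
  have h := ((((hn₁.mul hd₀).add hnd).const_mul 2).div (hminus.mul hplus) (mul_ne_zero hκ hκ))
  have hval : 2 * (ν * κ + 0) / (κ * κ) = 2 * ν / κ := by
    rw [add_zero, ← mul_assoc, mul_div_mul_right _ _ hκ]
  rw [hval] at h
  refine h.congr' ?_
  filter_upwards [hu, hr, hminus.eventually_ne hκ, hplus.eventually_ne hκ] with i hui hri hmi hpi
  have hm := (div_ne_zero_iff.1 hmi).1
  have hp := (div_ne_zero_iff.1 hpi).1
  rw [Pi.div_apply, div_sub_div _ _ hm hp]
  field_simp
  ring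

lemma norm_add_smul_cross3 {b d : E3} (hb : ‖b‖ = 1) (hbd : ⟪b, d⟫ = 0) (u : ℝ) :
    ‖b + u • cross3 b d‖ = √(1 + u ^ 2 * ‖d‖ ^ 2) := by
  rw [eq_comm, Real.sqrt_eq_iff_mul_self_eq (by positivity) (norm_nonneg _), ← sq,
    norm_add_sq_real, real_inner_smul_right, inner_cross3_self_left, norm_smul,
    norm_cross3_of_inner_eq_zero hbd, hb, mul_pow, Real.norm_eq_abs, sq_abs]
  ring

lemma isLittleO_sqrt_one_add_sq (c : ℝ) :
    (fun u : ℝ ↦ √(1 + u ^ 2 * c) - 1 - c / 2 * u ^ 2) =o[𝓝 0] fun u ↦ u ^ 2 := by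
  have hlim : Tendsto (fun u : ℝ ↦ 1 + u ^ 2 * c) (𝓝 0) (𝓝 1) :=
    Continuous.tendsto' (by fun_prop) _ _ (by simp)
  have hsqrt := (Real.hasDerivAt_sqrt one_ne_zero).isLittleO.comp_tendsto hlim
  have hO : (fun u : ℝ ↦ 1 + u ^ 2 * c - 1) =O[𝓝 0] fun u ↦ u ^ 2 := by
    simpa [mul_comm _ c] using isBigO_const_mul_self c (fun u : ℝ ↦ u ^ 2) (𝓝 0)
  refine (hsqrt.trans_isBigO hO).congr_left fun u ↦ ?_
  simp only [Function.comp_def, Real.sqrt_one, smul_eq_mul]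
  ring

lemma isBigO_inner {α E : Type*} [NormedAddCommGroup E] [InnerProductSpace ℝ E] (l : Filter α)
    (f g : α → E) : (fun x ↦ ⟪f x, g x⟫) =O[l] fun x ↦ ‖f x‖ * ‖g x‖ :=
  isBigO_of_le l fun x ↦ by simpa using norm_inner_le_norm (𝕜 := ℝ) (f x) (g x)

section LocalExpansion

variable {β β' : ℝ → E3} {t₀ : ℝ}

lemma isLittleO_inner_cross3_deriv (hβ : HasDerivAt β (β' t₀) t₀) (hβ' : ContinuousAt β' t₀) :
    (fun t ↦ ⟪β t₀, cross3 (β t) (β' t)⟫) =o[𝓝 t₀] fun t ↦ t - t₀ := by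
  have hcross : HasDerivAt (fun t ↦ cross3 (β t₀) (β t)) (cross3 (β t₀) (β' t₀)) t₀ := by
    simp only [← cross3L_apply]
    exact (cross3L (β t₀)).hasFDerivAt.comp_hasDerivAt t₀ hβ
  have hfrozen := ((hasDerivAt_const t₀ (β' t₀)).inner ℝ hcross).isLittleO
  simp only [inner_cross3_self_right, cross3_self, inner_zero_right, add_zero, smul_zero,
    sub_zero] at hfrozen
  have hβ'o : (fun t ↦ β' t - β' t₀) =o[𝓝 t₀] fun _ ↦ (1 : ℝ) :=
    (isLittleO_one_iff ℝ).2 (tendsto_sub_nhds_zero_iff.2 hβ')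
  have hO := hcross.isBigO_sub
  simp only [cross3_self, sub_zero] at hO
  have hrest : (fun t ↦ ⟪β' t - β' t₀, cross3 (β t₀) (β t)⟫) =o[𝓝 t₀] fun t ↦ t - t₀ := by
    simpa only [one_mul] using (isBigO_inner _ _ _).trans_isLittleO
      (hβ'o.norm_left.mul_isBigO hO.norm_left)
  refine (hrest.add hfrozen).congr_left fun t ↦ ?_
  rw [← inner_add_left, sub_add_cancel, ← inner_cross3_rotate, ← inner_cross3_rotate]

lemma isLittleO_one_sub_inner (hβ : HasDerivAt β (β' t₀) t₀) (hnorm : ∀ᶠ t in 𝓝 t₀, ‖β t‖ = 1) :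
    (fun t ↦ 1 - ⟪β t₀, β t⟫ - ‖β' t₀‖ ^ 2 / 2 * (t - t₀) ^ 2) =o[𝓝 t₀]
      fun t ↦ (t - t₀) ^ 2 := by
  have hsum : (fun t ↦ β t - β t₀ + (t - t₀) • β' t₀) =O[𝓝 t₀] fun t ↦ t - t₀ :=
    hβ.isBigO_sub.add (isBigO_of_le' (c := ‖β' t₀‖) _ fun t ↦ by rw [norm_smul, mul_comm])
  have hprod : (fun t ↦ ⟪β t - β t₀ - (t - t₀) • β' t₀, β t - β t₀ + (t - t₀) • β' t₀⟫)
      =o[𝓝 t₀] fun t ↦ (t - t₀) ^ 2 := by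
    simpa only [sq] using (isBigO_inner _ _ _).trans_isLittleO
      (hβ.isLittleO.norm_left.mul_isBigO hsum.norm_left)
  refine (hprod.const_mul_left (1 / 2)).congr' ?_ EventuallyEq.rfl
  filter_upwards [hnorm] with t ht
  have h₀ : ‖β t₀‖ = 1 := hnorm.self_of_nhds
  rw [inner_sub_left, inner_add_right, inner_add_right, real_inner_comm (β t - β t₀) ((t - t₀) • _),
    real_inner_self_eq_norm_sq, real_inner_self_eq_norm_sq, norm_sub_sq_real, ht, h₀, norm_smul,
    mul_pow, Real.norm_eq_abs, sq_abs, real_inner_comm (β t₀) (β t)]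
  ring

lemma isLittleO_inner_cross3 (hβ : HasDerivAt β (β' t₀) t₀) :
    (fun t ↦ ⟪cross3 (β t₀) (β' t₀), β t⟫) =o[𝓝 t₀] fun t ↦ t - t₀ := by
  have h := ((hasDerivAt_const t₀ (cross3 (β t₀) (β' t₀))).inner ℝ hβ).isLittleO
  simpa [real_inner_comm _ (cross3 _ _), inner_cross3_self_left, inner_cross3_self_right] using h

lemma isBigO_sq_add_sq_right {l : Filter (ℝ × ℝ)} (t₀ : ℝ) :
    (fun p : ℝ × ℝ ↦ (p.2 - t₀) ^ 2) =O[l] fun p ↦ p.1 ^ 2 + (p.2 - t₀) ^ 2 :=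
  isBigO_of_le _ fun p ↦ by
    rw [Real.norm_of_nonneg (by positivity), Real.norm_of_nonneg (by positivity)]
    nlinarith

lemma tendsto_sqrt_sub_inner_div (hβ : HasDerivAt β (β' t₀) t₀)
    (hnorm : ∀ᶠ t in 𝓝 t₀, ‖β t‖ = 1) :
    Tendsto (fun p : ℝ × ℝ ↦ (√(1 + p.1 ^ 2 * ‖β' t₀‖ ^ 2) - ⟪β t₀, β p.2⟫) /
      (p.1 ^ 2 + (p.2 - t₀) ^ 2)) (𝓝[>] 0 ×ˢ 𝓝 t₀) (𝓝 (‖β' t₀‖ ^ 2 / 2)) := by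
  have hO₁ : (fun p : ℝ × ℝ ↦ p.1 ^ 2) =O[𝓝[>] 0 ×ˢ 𝓝 t₀] fun p ↦ p.1 ^ 2 + (p.2 - t₀) ^ 2 :=
    isBigO_of_le _ fun p ↦ by
      rw [Real.norm_of_nonneg (by positivity), Real.norm_of_nonneg (by positivity)]
      nlinarith
  have h₁ := ((isLittleO_sqrt_one_add_sq (‖β' t₀‖ ^ 2)).comp_tendsto
    ((tendsto_fst (g := 𝓝 t₀)).mono_right nhdsWithin_le_nhds)).trans_isBigO hO₁
  have h₂ := ((isLittleO_one_sub_inner hβ hnorm).comp_tendsto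
    (tendsto_snd (f := 𝓝[>] (0 : ℝ)))).trans_isBigO (isBigO_sq_add_sq_right t₀)
  have h := (h₁.add h₂).tendsto_div_nhds_zero.add_const (‖β' t₀‖ ^ 2 / 2)
  rw [zero_add] at h
  refine h.congr' ?_
  filter_upwards [tendsto_fst.eventually self_mem_nhdsWithin] with p (hp : 0 < p.1)
  have hr : p.1 ^ 2 + (p.2 - t₀) ^ 2 ≠ 0 := by positivity
  simp only [Function.comp_apply]
  field_simp
  ring

lemma isLittleO_mul_inner_cross3 (hβ : HasDerivAt β (β' t₀) t₀) :
    (fun p : ℝ × ℝ ↦ p.1 * ⟪cross3 (β t₀) (β' t₀), β p.2⟫) =o[𝓝[>] 0 ×ˢ 𝓝 t₀]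
      fun p ↦ p.1 ^ 2 + (p.2 - t₀) ^ 2 := by
  refine ((isBigO_refl (fun p : ℝ × ℝ ↦ p.1) _).mul_isLittleO
    ((isLittleO_inner_cross3 hβ).comp_tendsto tendsto_snd)).trans_isBigO (isBigO_of_le _ fun p ↦ ?_)
  rw [Function.comp_apply, Real.norm_of_nonneg (r := _ + _) (by positivity), Real.norm_eq_abs,
    abs_le]
  constructor <;> nlinarith [sq_nonneg (p.1 + (p.2 - t₀)), sq_nonneg (p.1 - (p.2 - t₀))]

lemma tendsto_inner_cross3_cross3 (hβ : ContinuousAt β t₀) (hβ' : ContinuousAt β' t₀) :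
    Tendsto (fun t ↦ ⟪cross3 (β t₀) (β' t₀), cross3 (β t) (β' t)⟫) (𝓝 t₀)
      (𝓝 (‖cross3 (β t₀) (β' t₀)‖ ^ 2)) := by
  rw [← real_inner_self_eq_norm_sq]
  exact tendsto_const_nhds.inner <|
    (continuous_cross3 continuous_fst continuous_snd).continuousAt.tendsto.comp
      (hβ.prodMk hβ').tendsto

lemma tendsto_connForm_sub_mul (hβ : HasDerivAt β (β' t₀) t₀) (hβ' : ContinuousAt β' t₀)
    (hnorm : ∀ᶠ t in 𝓝 t₀, ‖β t‖ = 1) (horth : ⟪β t₀, β' t₀⟫ = 0) (hreg : β' t₀ ≠ 0) :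
    Tendsto (fun p : ℝ × ℝ ↦
      (connForm (β t₀ + p.1 • cross3 (β t₀) (β' t₀)) (β p.2) (β' p.2) -
        connForm (β t₀ + (-p.1) • cross3 (β t₀) (β' t₀)) (β p.2) (β' p.2)) *
        ((p.1 ^ 2 + (p.2 - t₀) ^ 2) / p.1)) (𝓝[>] 0 ×ˢ 𝓝 t₀) (𝓝 4) := by
  have hunit : ‖β t₀‖ = 1 := hnorm.self_of_nhds
  have hspeed : ‖β' t₀‖ ≠ 0 := norm_ne_zero_iff.2 hreg
  have hsnd := tendsto_snd (f := 𝓝[>] (0 : ℝ)) (g := 𝓝 t₀)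
  have hn₁ := (tendsto_inner_cross3_cross3 hβ.continuousAt hβ').comp hsnd
  rw [norm_cross3_of_inner_eq_zero horth, hunit, one_mul] at hn₁
  have hnd := (((isLittleO_inner_cross3_deriv hβ hβ').mul (isLittleO_inner_cross3 hβ)).congr_right
    fun t ↦ (sq _).symm).comp_tendsto hsnd |>.trans_isBigO (isBigO_sq_add_sq_right t₀)
  have hpos : ∀ᶠ p : ℝ × ℝ in 𝓝[>] 0 ×ˢ 𝓝 t₀, 0 < p.1 :=
    tendsto_fst.eventually self_mem_nhdsWithin
  have hlim := tendsto_sub_mul_div_of_tendsto (by positivity) hn₁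
    (tendsto_sqrt_sub_inner_div hβ hnorm) hnd.tendsto_div_nhds_zero
    (isLittleO_mul_inner_cross3 hβ).tendsto_div_nhds_zero
    (hpos.mono fun p hp ↦ hp.ne') (hpos.mono fun p hp ↦ by positivity)
  have hval : 2 * ‖β' t₀‖ ^ 2 / (‖β' t₀‖ ^ 2 / 2) = 4 := by
    field_simp
    norm_num
  rw [hval] at hlim
  refine hlim.congr fun p ↦ ?_
  simp only [connForm, norm_add_smul_cross3 hunit horth, inner_add_left, real_inner_smul_left,
    neg_sq, neg_mul, ← sub_eq_add_neg, sub_add_eq_sub_sub, sub_sub_eq_add_sub, Function.comp_apply]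
  ring_nf

end LocalExpansion

lemma tendsto_connForm_sub {b n : E3} (hb : ‖b‖ = 1) {β β' : ℝ → E3} {t : ℝ}
    (hβ : ContinuousAt β t) (hβ' : ContinuousAt β' t) (ht : ‖β t‖ = 1) (hne : β t ≠ b) :
    Tendsto (fun p : ℝ × ℝ ↦ connForm (b + p.1 • n) (β p.2) (β' p.2) -
      connForm (b + (-p.1) • n) (β p.2) (β' p.2)) (𝓝[>] 0 ×ˢ 𝓝 t) (𝓝 0) := by
  have hle : 𝓝[>] (0 : ℝ) ×ˢ 𝓝 t ≤ 𝓝 (0, t) := by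
    rw [nhds_prod_eq]
    exact prod_mono nhdsWithin_le_nhds le_rfl
  have hsnd : ContinuousAt (Prod.snd : ℝ × ℝ → ℝ) (0, t) := continuousAt_snd
  have hβ₂ : ContinuousAt (fun p : ℝ × ℝ ↦ β p.2) (0, t) := hβ.comp' hsnd
  have hcross : ContinuousAt (fun p : ℝ × ℝ ↦ cross3 (β p.2) (β' p.2)) (0, t) :=
    (continuous_cross3 continuous_fst continuous_snd).continuousAt.comp'
      (hβ₂.prodMk (hβ'.comp' hsnd))
  have hden : ‖b‖ - ⟪b, β t⟫ ≠ 0 := by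
    rw [hb, sub_ne_zero]
    exact fun h ↦ hne ((inner_eq_one_iff_of_norm_eq_one (𝕜 := ℝ) hb ht).1 h.symm).symm
  have hcont : ∀ σ : ℝ, ContinuousAt
      (fun p : ℝ × ℝ ↦ connForm (b + (σ * p.1) • n) (β p.2) (β' p.2)) (0, t) := fun σ ↦ by
    have hx : ContinuousAt (fun p : ℝ × ℝ ↦ b + (σ * p.1) • n) (0, t) := by fun_prop
    exact (hx.inner hcross).div (hx.norm.sub (hx.inner hβ₂)) (by simpa using hden)
  simpa [Pi.sub_def] using ((hcont 1).sub (hcont (-1))).tendsto.mono_left hle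

lemma tendsto_connAngle_sub {β : ℝ → E3} {a b t₀ : ℝ} (hβ : ContDiff ℝ 1 β)
    (hnorm : ∀ t ∈ Icc a b, ‖β t‖ = 1) (ht₀ : t₀ ∈ Ioo a b) (hreg : deriv β t₀ ≠ 0)
    (hinj : ∀ t ∈ Icc a b, t ≠ t₀ → β t ≠ β t₀)
    (hoff : ∀ᶠ u : ℝ in 𝓝[>] 0,
      β t₀ + u • cross3 (β t₀) (deriv β t₀) ∈ offCone (β '' Icc a b) ∧
      β t₀ + (-u) • cross3 (β t₀) (deriv β t₀) ∈ offCone (β '' Icc a b)) :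
    Tendsto (fun u : ℝ ↦ connAngle β a b (β t₀ + u • cross3 (β t₀) (deriv β t₀)) -
      connAngle β a b (β t₀ + (-u) • cross3 (β t₀) (deriv β t₀))) (𝓝[>] 0)
      (𝓝 (4 * Real.pi)) := by
  have hab : a < b := ht₀.1.trans ht₀.2
  have hβd : Differentiable ℝ β := hβ.differentiable one_ne_zero
  have hβ' : Continuous (deriv β) := hβ.continuous_deriv le_rfl
  have ht₀' := Ioo_subset_Icc_self ht₀
  have hint : ∀ x ∈ offCone (β '' Icc a b),
      IntervalIntegrable (fun t ↦ connForm x (β t) (deriv β t)) volume a b := fun x hx ↦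
    (continuousOn_connForm hβ hx).intervalIntegrable_of_Icc hab.le
  refine (tendsto_integral_of_tendsto_mul_halfPlanePoisson_inv ht₀
    (hoff.mono fun u hu ↦ (hint _ hu.1).sub (hint _ hu.2))
    (tendsto_connForm_sub_mul (hβd t₀).hasDerivAt hβ'.continuousAt
      (eventually_of_mem (Icc_mem_nhds ht₀.1 ht₀.2) hnorm)
      (inner_deriv_eq_zero_of_norm_eq_one hab hβd hnorm t₀ ht₀') hreg)
    fun t ht hne ↦ tendsto_connForm_sub (hnorm t₀ ht₀') (hβd t).continuousAt hβ'.continuousAt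
      (hnorm t ht) (hinj t ht hne)).congr' ?_
  filter_upwards [hoff] with u hu
  exact intervalIntegral.integral_sub (hint _ hu.1) (hint _ hu.2)

end Jump

section FootPoint

lemma exists_isMaxOn_Icc_deriv_eq_zero {f : ℝ → ℝ} {a b : ℝ} (hab : a < b)
    (hf : ContinuousOn f (Icc a b)) (hfa : DifferentiableAt ℝ f a) (hfb : DifferentiableAt ℝ f b)
    (hends : f a = f b) (hends' : deriv f a = deriv f b) (hne : deriv f a ≠ 0) :
    ∃ t₀ ∈ Ioo a b, IsMaxOn f (Icc a b) t₀ ∧ deriv f t₀ = 0 := by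
  have ha : ¬IsMaxOn f (Icc a b) a := fun hmax ↦ by
    have hmax' : IsMaxOn f (Icc a b) b := fun t ht ↦ (hmax ht).trans_eq hends
    have hright := hmax.localize.hasFDerivWithinAt_nonpos
      hfa.hasDerivAt.hasFDerivAt.hasFDerivWithinAt
      (sub_mem_posTangentConeAt_of_segment_subset (y := b) (segment_eq_Icc hab.le).subset)
    have hleft := hmax'.localize.hasFDerivWithinAt_nonpos
      hfb.hasDerivAt.hasFDerivAt.hasFDerivWithinAt
      (sub_mem_posTangentConeAt_of_segment_subset (y := a)
        (by rw [segment_symm, segment_eq_Icc hab.le]))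
    simp only [ContinuousLinearMap.toSpanSingleton_apply, smul_eq_mul, ← hends'] at hright hleft
    exact hne (by nlinarith)
  obtain ⟨z, hz, hlt⟩ : ∃ z ∈ Icc a b, f a < f z := by
    simpa [IsMaxOn, IsMaxFilter, and_assoc] using ha
  obtain ⟨t₀, ht₀, hmax⟩ := isCompact_Icc.exists_isMaxOn_mem_subset (s := Ioo a b) hf hz
    fun t ht ↦ by
    rw [Icc_sdiff_Ioo_same hab.le] at ht
    rcases ht with rfl | rfl
    · exact hlt
    · exact hends ▸ hlt
  exact ⟨t₀, ht₀, hmax, (hmax.isLocalMax (Icc_mem_nhds ht₀.1 ht₀.2)).deriv_eq_zero⟩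

lemma sq_norm_smul_eq_add_of_inner_eq_zero {b d x : E3} (hb : ‖b‖ = 1) (hbd : ⟪b, d⟫ = 0)
    (hx : ⟪x, d⟫ = 0) :
    ‖d‖ ^ 2 • x = (‖d‖ ^ 2 * ⟪x, b⟫) • b + ⟪x, cross3 b d⟫ • cross3 b d := by
  have h := triple_smul_eq_sum_cross3 (cross3 b d) b d x
  rwa [real_inner_self_eq_norm_sq, norm_cross3_of_inner_eq_zero hbd, hb, one_mul, hx, zero_smul,
    add_zero, cross3_cross3, real_inner_comm b d, hbd, real_inner_self_eq_norm_sq, zero_smul,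
    sub_zero, smul_smul, add_comm, mul_comm ⟪x, b⟫] at h

section HalfOpenCone

variable {E : Type*} [NormedAddCommGroup E] [InnerProductSpace ℝ E] {Γ : Set E} {x b n : E}

/-- The convex cone spanned by `x` and `b`, without the ray of `b`. -/
def halfOpenCone (x b : E) : Set E := (fun p : ℝ × ℝ ↦ p.1 • x + p.2 • b) '' (Ioi 0 ×ˢ Ici 0)

lemma convex_halfOpenCone (x b : E) : Convex ℝ (halfOpenCone x b) :=
  ((convex_Ioi 0).prod (convex_Ici 0)).is_linear_image
    (f := fun p : ℝ × ℝ ↦ p.1 • x + p.2 • b)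
    ⟨fun p q ↦ by simp only [Prod.fst_add, Prod.snd_add]; module,
      fun c p ↦ by simp only [Prod.smul_fst, Prod.smul_snd, smul_eq_mul]; module⟩

lemma left_mem_halfOpenCone (x b : E) : x ∈ halfOpenCone x b :=
  ⟨(1, 0), ⟨mem_Ioi.2 one_pos, self_mem_Ici⟩, by simp⟩

lemma notMem_span_of_isMaxOn_inner (hΓ : ∀ y ∈ Γ, ‖y‖ = 1) (hΓ' : Γ.Nontrivial)
    (hx : x ∈ offCone Γ) (hb : b ∈ Γ) (hmax : IsMaxOn (⟪x, ·⟫) Γ b) : x ∉ ℝ ∙ b := by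
  intro hmem
  obtain ⟨c, rfl⟩ := Submodule.mem_span_singleton.1 hmem
  obtain ⟨y, hy, hyb⟩ := hΓ'.exists_ne b
  have hlt : ⟪b, y⟫ < 1 := (inner_lt_one_iff_real_of_norm_eq_one (hΓ b hb) (hΓ y hy)).2 hyb.symm
  have hself := hx b hb
  have hle : ⟪c • b, y⟫ ≤ ⟪c • b, b⟫ := hmax hy
  rw [real_inner_smul_left, real_inner_self_eq_norm_sq, hΓ b hb, norm_smul, hΓ b hb, mul_one,
    Real.norm_eq_abs, one_pow, mul_one, lt_abs] at hself
  rw [real_inner_smul_left, real_inner_smul_left, real_inner_self_eq_norm_sq, hΓ b hb] at hle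
  rcases hself with h | h <;> nlinarith

lemma halfOpenCone_subset_offCone (hΓ : ∀ y ∈ Γ, ‖y‖ = 1) (hb : b ∈ Γ)
    (hmax : IsMaxOn (⟪x, ·⟫) Γ b) (hx : x ∉ ℝ ∙ b) : halfOpenCone x b ⊆ offCone Γ := by
  rintro _ ⟨⟨p, r⟩, ⟨hp : 0 < p, hr : 0 ≤ r⟩, rfl⟩ y hy
  have hle : ⟪p • x + r • b, y⟫ ≤ ⟪p • x + r • b, b⟫ := by
    have hby : ⟪b, y⟫ ≤ ⟪b, b⟫ := by
      have := real_inner_le_norm b y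
      rwa [hΓ b hb, hΓ y hy, ← hΓ b hb, ← real_inner_self_eq_norm_mul_norm] at this
    simp only [inner_add_left, real_inner_smul_left]
    gcongr
    exact hmax hy
  have hlt : ⟪p • x + r • b, b⟫ < ‖p • x + r • b‖ * ‖b‖ := by
    refine inner_lt_norm_mul_iff_real.2 fun h ↦ hx ?_
    have hspan : p • x + r • b ∈ ℝ ∙ b := by
      rw [hΓ b hb, one_smul] at h
      exact h ▸ Submodule.smul_mem _ _ (Submodule.mem_span_singleton_self b)
    rw [Submodule.add_mem_iff_left _ (Submodule.smul_mem _ _ (Submodule.mem_span_singleton_self b))]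
      at hspan
    exact (Submodule.smul_mem_iff _ hp.ne').1 hspan
  rw [hΓ b hb, mul_one] at hlt
  exact hle.trans_lt hlt

lemma eventually_add_smul_mem_halfOpenCone {α c κ : ℝ} (hκ : 0 < κ) (hc : 0 < c)
    (hx : κ • x = α • b + c • n) : ∀ᶠ u in 𝓝[>] (0 : ℝ), b + u • n ∈ halfOpenCone x b := by
  have hlim : Tendsto (fun u : ℝ ↦ 1 - u / c * α) (𝓝[>] 0) (𝓝 1) :=
    (Continuous.tendsto' (by fun_prop) _ _ (by simp)).mono_left nhdsWithin_le_nhds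
  filter_upwards [hlim.eventually_const_lt one_pos, self_mem_nhdsWithin] with u hu (hpos : 0 < u)
  refine ⟨(u / c * κ, 1 - u / c * α), ⟨mem_Ioi.2 (by positivity), hu.le⟩, ?_⟩
  simp only [mul_smul, hx]
  match_scalars <;> field_simp
  ring

end HalfOpenCone

lemma exists_convex_subset_offCone {β : ℝ → E3} {a b : ℝ} (hab : a < b)
    (hβ : Differentiable ℝ β) (hnorm : ∀ t ∈ Icc a b, ‖β t‖ = 1)
    (hreg : ∀ t ∈ Ioo a b, deriv β t ≠ 0) (hclosed : β a = β b) (hclosed' : deriv β a = deriv β b)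
    (hinj : InjOn β (Ico a b)) {x : E3} (hx : x ∈ offCone (β '' Icc a b))
    (hxa : ⟪x, deriv β a⟫ ≠ 0) :
    ∃ t₀ ∈ Ioo a b, ∃ C, Convex ℝ C ∧ C ⊆ offCone (β '' Icc a b) ∧ x ∈ C ∧
      ((∀ᶠ u in 𝓝[>] (0 : ℝ), β t₀ + u • cross3 (β t₀) (deriv β t₀) ∈ C) ∨
        ∀ᶠ u in 𝓝[>] (0 : ℝ), β t₀ + (-u) • cross3 (β t₀) (deriv β t₀) ∈ C) := by
  have hderiv : ∀ t, deriv (fun s ↦ ⟪x, β s⟫) t = ⟪x, deriv β t⟫ := fun t ↦ by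
    rw [deriv_inner_apply (𝕜 := ℝ) (by fun_prop) (hβ t)]
    simp
  have hdiff : Differentiable ℝ fun t ↦ ⟪x, β t⟫ := (differentiable_const x).inner ℝ hβ
  -- At a maximum of `⟪x, β t⟫` the vector `x` lies in the normal plane of the curve.
  obtain ⟨t₀, ht₀, hmax, hcrit⟩ := exists_isMaxOn_Icc_deriv_eq_zero hab
    hdiff.continuous.continuousOn (hdiff a) (hdiff b) (by simp only [hclosed])
    (by rw [hderiv, hderiv, hclosed']) (by rwa [hderiv])
  have ht₀' := Ioo_subset_Icc_self ht₀
  have hd : 0 < ‖deriv β t₀‖ ^ 2 := by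
    have := norm_pos_iff.2 (hreg t₀ ht₀)
    positivity
  have hΓ : ∀ y ∈ β '' Icc a b, ‖y‖ = 1 := forall_mem_image.2 hnorm
  have hmaxΓ : IsMaxOn (⟪x, ·⟫) (β '' Icc a b) (β t₀) := forall_mem_image.2 fun t ht ↦ hmax ht
  have hmem := mem_image_of_mem β ht₀'
  have hspan := notMem_span_of_isMaxOn_inner hΓ
    (nontrivial_of_mem_mem_ne (mem_image_of_mem β (left_mem_Icc.2 hab.le)) hmem
      (hinj.ne (left_mem_Ico.2 hab) (Ioo_subset_Ico_self ht₀) ht₀.1.ne)) hx hmem hmaxΓ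
  have hfoot := sq_norm_smul_eq_add_of_inner_eq_zero (hnorm t₀ ht₀')
    (inner_deriv_eq_zero_of_norm_eq_one hab hβ hnorm t₀ ht₀') (hderiv t₀ ▸ hcrit)
  refine ⟨t₀, ht₀, halfOpenCone x (β t₀), convex_halfOpenCone x (β t₀),
    halfOpenCone_subset_offCone hΓ hmem hmaxΓ hspan, left_mem_halfOpenCone x (β t₀), ?_⟩
  rcases lt_trichotomy ⟪x, cross3 (β t₀) (deriv β t₀)⟫ 0 with hneg | hzero | hpos
  · right
    simpa only [neg_smul, smul_neg] using eventually_add_smul_mem_halfOpenCone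
      (n := -cross3 (β t₀) (deriv β t₀)) hd (neg_pos.2 hneg) (by rwa [neg_smul_neg])
  · rw [hzero, zero_smul, add_zero] at hfoot
    exact absurd ((Submodule.smul_mem_iff _ hd.ne').1
      (Submodule.mem_span_singleton.2 ⟨_, hfoot.symm⟩)) hspan
  · exact .inl (eventually_add_smul_mem_halfOpenCone hd hpos hfoot)

end FootPoint

section ConeOver

open Metric

/-- The open cone with apex `0` over a subset of the unit sphere; for any other set, over its
intersection with the sphere. -/
def coneOver {E : Type*} [NormedAddCommGroup E] [NormedSpace ℝ E] (S : Set E) : Set E :=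
  {x | x ≠ 0 ∧ ‖x‖⁻¹ • x ∈ S}

variable {E : Type*} [NormedAddCommGroup E]

section NormedSpace

variable [NormedSpace ℝ E] {S T : Set E}

lemma mem_coneOver_of_inv_norm_smul_mem (hS : 0 ∉ S) {x : E} (hx : ‖x‖⁻¹ • x ∈ S) :
    x ∈ coneOver S :=
  ⟨fun h ↦ hS (by simpa [h] using hx), hx⟩

lemma subset_coneOver (hS : S ⊆ sphere 0 1) : S ⊆ coneOver S := fun x hx ↦ by
  have hnorm : ‖x‖ = 1 := mem_sphere_zero_iff_norm.1 (hS hx)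
  exact ⟨ne_zero_of_norm_ne_zero (by simp [hnorm]), by simpa [hnorm] using hx⟩

lemma coneOver_inter_sphere (S : Set E) : coneOver (S ∩ sphere 0 1) = coneOver S := by
  ext x
  refine and_congr_right fun hx ↦ and_iff_left ?_
  exact mem_sphere_zero_iff_norm.2 (norm_smul_inv_norm (𝕜 := ℝ) hx)

lemma coneOver_union (S T : Set E) : coneOver (S ∪ T) = coneOver S ∪ coneOver T :=
  ext fun _ ↦ and_or_left

lemma disjoint_coneOver (h : Disjoint S T) : Disjoint (coneOver S) (coneOver T) :=
  disjoint_left.2 fun _ hS hT ↦ disjoint_left.1 h hS.2 hT.2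

lemma isOpen_coneOver (hS : IsOpen S) : IsOpen (coneOver S) :=
  ((continuous_norm.continuousOn.inv₀ fun _ hx ↦ norm_ne_zero_iff.2 hx).smul
    continuousOn_id).isOpen_inter_preimage isOpen_ne hS

open scoped Pointwise in
lemma smul_eq_coneOver_inter (hS : S ⊆ sphere 0 1) {I : Set ℝ} (hI : I ⊆ Ioi 0) :
    I • S = coneOver S ∩ norm ⁻¹' I := by
  ext x
  constructor
  · rintro ⟨r, hr, y, hy, rfl⟩
    have hr0 : 0 < r := hI hr
    have hnorm : ‖r • y‖ = r := by
      rw [norm_smul, mem_sphere_zero_iff_norm.1 (hS hy), mul_one, Real.norm_of_nonneg hr0.le]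
    refine ⟨⟨ne_zero_of_norm_ne_zero (hnorm.trans_ne hr0.ne'), ?_⟩, ?_⟩
    · simpa only [hnorm, inv_smul_smul₀ hr0.ne'] using hy
    · exact mem_preimage.2 (hnorm.symm ▸ hr :)
  · rintro ⟨⟨hx, hxS⟩, hxI⟩
    exact ⟨‖x‖, hxI, _, hxS, smul_inv_smul₀ (norm_ne_zero_iff.2 hx) x⟩

lemma isPreconnected_coneOver (hS : S ⊆ sphere 0 1) (hS' : IsPreconnected S) :
    IsPreconnected (coneOver S) := by
  have h : coneOver S = (fun p : ℝ × E ↦ p.1 • p.2) '' (Ioi 0 ×ˢ S) := by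
    rw [image_smul_prod, smul_eq_coneOver_inter hS Subset.rfl, eq_comm, inter_eq_left]
    exact fun x hx ↦ norm_pos_iff.2 hx.1
  rw [h]
  exact (isPreconnected_Ioi.prod hS').image _ continuous_smul.continuousOn

lemma toSphere_preimage_coe [MeasurableSpace E] [BorelSpace E] [FiniteDimensional ℝ E]
    (μ : Measure E) [μ.IsAddHaarMeasure] (hS : S ⊆ sphere 0 1) (hS' : MeasurableSet S) :
    μ.toSphere ((↑) ⁻¹' S) = Module.finrank ℝ E * μ (coneOver S ∩ ball 0 1) := by
  rw [Measure.toSphere_apply' _ (measurable_subtype_coe hS'), Subtype.image_preimage_coe,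
    inter_eq_right.2 hS, smul_eq_coneOver_inter hS fun _ h ↦ h.1]
  congr 2
  ext x
  simp +contextual [coneOver]

end NormedSpace

section InnerProductSpace

variable [InnerProductSpace ℝ E] {S Γ C : Set E}

lemma coneOver_subset_offCone (hΓ : ∀ y ∈ Γ, ‖y‖ = 1) (hS : Disjoint S Γ) :
    coneOver S ⊆ offCone Γ := by
  rintro x ⟨hx, hxS⟩ y hy
  have hlt := (inner_lt_one_iff_real_of_norm_eq_one (norm_smul_inv_norm (𝕜 := ℝ) hx) (hΓ y hy)).2
    (hS.ne_of_mem hxS hy)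
  simpa [real_inner_smul_left, inv_mul_lt_iff₀ (norm_pos_iff.2 hx)] using hlt

lemma offCone_subset_coneOver_compl (hΓ : Γ.Nonempty) : offCone Γ ⊆ coneOver Γᶜ := by
  intro x hx
  have hx0 : x ≠ 0 := by
    rintro rfl
    obtain ⟨y, hy⟩ := hΓ
    simpa using hx y hy
  refine ⟨hx0, fun hmem ↦ (hx _ hmem).ne ?_⟩
  rw [real_inner_smul_right, real_inner_self_eq_norm_sq, sq,
    inv_mul_cancel_left₀ (norm_ne_zero_iff.2 hx0)]

lemma subset_coneOver_of_isPreconnected (hC : IsPreconnected C) (hS : IsOpen (coneOver S))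
    (hΓ : (closure S \ S).Nonempty) (hCΓ : C ⊆ offCone (closure S \ S))
    (hCS : (C ∩ coneOver S).Nonempty) : C ⊆ coneOver S := by
  refine hC.subset_left_of_subset_union hS
    (isOpen_coneOver isClosed_closure.isOpen_compl)
    (disjoint_coneOver (disjoint_compl_right_iff_subset.2 subset_closure)) ?_ hCS
  rw [← coneOver_union, ← Set.compl_sdiff]
  exact hCΓ.trans (offCone_subset_coneOver_compl hΓ)

end InnerProductSpace

end ConeOver

section GaussBonnet

open Metric

lemma ne_of_injOn_Ico {α : Type*} {f : ℝ → α} {a b t₀ : ℝ} (hclosed : f a = f b)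
    (hinj : InjOn f (Ico a b)) (ht₀ : t₀ ∈ Ioo a b) {t : ℝ} (ht : t ∈ Icc a b) (hne : t ≠ t₀) :
    f t ≠ f t₀ := by
  have hinj₀ : ∀ {s}, s ∈ Ico a b → s ≠ t₀ → f s ≠ f t₀ := fun hs ↦
    (hinj.ne_iff hs (Ioo_subset_Ico_self ht₀)).2
  rcases ht.2.eq_or_lt with rfl | htb
  · exact hclosed ▸ hinj₀ (left_mem_Ico.2 (ht₀.1.trans ht₀.2)) ht₀.1.ne
  · exact hinj₀ ⟨ht.1, htb⟩ hne

variable {β : ℝ → E3} {a b : ℝ} {S : Set E3} {q x : E3}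

lemma connAngle_sub_eq_four_pi (hβ : ContDiff ℝ 1 β) (hnorm : ∀ t ∈ Icc a b, ‖β t‖ = 1)
    (hclosed : β a = β b) (hinj : InjOn β (Ico a b))
    (hmod : ∀ x ∈ offCone (β '' Icc a b), ∀ y ∈ offCone (β '' Icc a b),
      (connAngle β a b x : Real.Angle) = connAngle β a b y)
    {t₀ : ℝ} (ht₀ : t₀ ∈ Ioo a b) (hreg : deriv β t₀ ≠ 0) {C D : Set E3}
    (hC : IsPreconnected C) (hCΓ : C ⊆ offCone (β '' Icc a b))
    (hD : IsPreconnected D) (hDΓ : D ⊆ offCone (β '' Icc a b))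
    (hCt₀ : ∀ᶠ u : ℝ in 𝓝[>] 0, β t₀ + u • cross3 (β t₀) (deriv β t₀) ∈ C)
    (hDt₀ : ∀ᶠ u : ℝ in 𝓝[>] 0, β t₀ + (-u) • cross3 (β t₀) (deriv β t₀) ∈ D)
    {y : E3} (hx : x ∈ C) (hy : y ∈ D) :
    connAngle β a b x - connAngle β a b y = 4 * Real.pi := by
  have hab : a ≤ b := (ht₀.1.trans ht₀.2).le
  have hjump := tendsto_connAngle_sub hβ hnorm ht₀ hreg
    (fun t ↦ ne_of_injOn_Ico hclosed hinj ht₀)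
    (hCt₀.and hDt₀ |>.mono fun _ h ↦ ⟨hCΓ h.1, hDΓ h.2⟩)
  refine tendsto_nhds_unique (tendsto_const_nhds.congr' ?_) hjump
  filter_upwards [hCt₀, hDt₀] with u huC huD
  rw [connAngle_eq_of_isPreconnected hab hβ hmod hC hCΓ hx huC,
    connAngle_eq_of_isPreconnected hab hβ hmod hD hDΓ hy huD]

lemma connAngle_eq_or_of_mem_offCone (hab : a < b) (hβ : ContDiff ℝ 1 β)
    (hnorm : ∀ t ∈ Icc a b, ‖β t‖ = 1) (hreg : ∀ t ∈ Ioo a b, deriv β t ≠ 0)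
    (hclosed : β a = β b) (hclosed' : deriv β a = deriv β b) (hinj : InjOn β (Ico a b))
    (hmod : ∀ x ∈ offCone (β '' Icc a b), ∀ y ∈ offCone (β '' Icc a b),
      (connAngle β a b x : Real.Angle) = connAngle β a b y)
    (hSsph : S ⊆ sphere 0 1) (hSopen : IsOpen (coneOver S)) (hSconn : IsPreconnected S)
    (hbdry : β '' Icc a b = closure S \ S)
    (horient : ∀ t ∈ Ioo a b,
      ∀ᶠ u : ℝ in 𝓝[>] 0, β t + u • cross3 (β t) (deriv β t) ∈ coneOver S)
    (hq : q ∈ S) (hx : x ∈ offCone (β '' Icc a b)) (hxa : ⟪x, deriv β a⟫ ≠ 0) :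
    x ∈ coneOver S ∧ connAngle β a b x = connAngle β a b q ∨
      x ∉ coneOver S ∧ connAngle β a b x = connAngle β a b q - 4 * Real.pi := by
  have hSΓ : coneOver S ⊆ offCone (β '' Icc a b) :=
    coneOver_subset_offCone (forall_mem_image.2 hnorm) (hbdry ▸ disjoint_sdiff_right)
  have hSconn' : IsPreconnected (coneOver S) := isPreconnected_coneOver hSsph hSconn
  have hconst : ∀ y ∈ coneOver S, connAngle β a b y = connAngle β a b q := fun y hy ↦
    connAngle_eq_of_isPreconnected hab.le hβ hmod hSconn' hSΓ hy (subset_coneOver hSsph hq)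
  obtain ⟨t₀, ht₀, C, hC, hCΓ, hxC, hleft | hright⟩ := exists_convex_subset_offCone hab
    (hβ.differentiable one_ne_zero) hnorm hreg hclosed hclosed' hinj hx hxa
  · have hCS : C ⊆ coneOver S := by
      refine subset_coneOver_of_isPreconnected hC.isPreconnected hSopen ?_ (hbdry ▸ hCΓ) ?_
      · exact hbdry ▸ (nonempty_Icc.2 hab.le).image β
      · obtain ⟨u, huC, huS⟩ := (hleft.and (horient t₀ ht₀)).exists
        exact ⟨_, huC, huS⟩
    exact .inl ⟨hCS hxC, hconst x (hCS hxC)⟩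
  · have hjump := connAngle_sub_eq_four_pi hβ hnorm hclosed hinj hmod ht₀ (hreg t₀ ht₀) hSconn' hSΓ
      hC.isPreconnected hCΓ (horient t₀ ht₀) hright (subset_coneOver hSsph hq) hxC
    refine .inr ⟨fun hxS ↦ ?_, by linarith⟩
    linarith [hconst x hxS, Real.pi_pos]

lemma eq_four_pi_sub_of_setIntegral_ball_eq_zero {F : E3 → ℝ} {K : Set E3} {c : ℝ}
    (hK : MeasurableSet K) (hF : ∫ x in ball 0 1, F x = 0)
    (hFK : ∀ᵐ x, x ∈ K ∧ F x = c ∨ x ∉ K ∧ F x = c - 4 * Real.pi) :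
    c = 4 * Real.pi - 3 * volume.real (K ∩ ball 0 1) := by
  have hconst (d : ℝ) : IntegrableOn (fun _ : E3 ↦ d) (ball 0 1) :=
    integrableOn_const measure_ball_lt_top.ne
  have hball : volume.real (ball (0 : E3) 1) = Real.pi * 4 / 3 := by
    rw [measureReal_def, EuclideanSpace.volume_ball_fin_three, ENNReal.ofReal_one, one_pow, one_mul,
      ENNReal.toReal_ofReal (by positivity)]
  have hF' : F =ᵐ[volume.restrict (ball 0 1)]
      fun x ↦ K.indicator (fun _ ↦ 4 * Real.pi) x + (c - 4 * Real.pi) := by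
    refine ae_restrict_of_ae (hFK.mono ?_)
    rintro x (⟨hx, h⟩ | ⟨hx, h⟩) <;> simp [hx, h]
  rw [integral_congr_ae hF', integral_add ((hconst _).indicator hK) (hconst _),
    integral_indicator hK, integral_const, integral_const, Measure.restrict_restrict hK,
    measureReal_restrict_apply_univ, measureReal_restrict_apply_univ,
    hball, smul_eq_mul, smul_eq_mul] at hF
  refine mul_left_cancel₀ (mul_ne_zero four_ne_zero Real.pi_ne_zero) ?_
  linear_combination 3 * hF

lemma connAngle_eq_four_pi_sub_area (hab : a < b) (hβ : ContDiff ℝ 1 β)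
    (hnorm : ∀ t ∈ Icc a b, ‖β t‖ = 1) (hreg : ∀ t ∈ Icc a b, deriv β t ≠ 0)
    (hclosed : β a = β b) (hclosed' : deriv β a = deriv β b) (hinj : InjOn β (Ico a b))
    (hmod : ∀ x ∈ offCone (β '' Icc a b), ∀ y ∈ offCone (β '' Icc a b),
      (connAngle β a b x : Real.Angle) = connAngle β a b y)
    (hSsph : S ⊆ sphere 0 1) (hSopen : ∃ O, IsOpen O ∧ S = O ∩ sphere 0 1)
    (hSconn : IsPreconnected S) (hbdry : β '' Icc a b = closure S \ S)
    (horient : ∀ t ∈ Ioo a b,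
      ∀ᶠ u : ℝ in 𝓝[>] 0, β t + u • cross3 (β t) (deriv β t) ∈ coneOver S) (hq : q ∈ S) :
    connAngle β a b q =
      4 * Real.pi - ((volume : Measure E3).toSphere (Subtype.val ⁻¹' S)).toReal := by
  obtain ⟨O, hO, hSO⟩ := hSopen
  have hSmeas : MeasurableSet S := hSO ▸ hO.measurableSet.inter isClosed_sphere.measurableSet
  have hcone : IsOpen (coneOver S) := hSO ▸ coneOver_inter_sphere O ▸ isOpen_coneOver hO
  have hoff : ∀ᵐ x : E3, x ∈ offCone (β '' Icc a b) :=
    mem_ae_iff.2 (measure_compl_offCone (by simp) volume hβ hnorm)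
  have hplane : ∀ᵐ x : E3, ⟪x, deriv β a⟫ ≠ 0 := by
    simpa only [ae_iff, not_not, real_inner_comm] using
      measure_setOf_inner_eq_zero volume (hreg a (left_mem_Icc.2 hab.le))
  rw [toSphere_preimage_coe volume hSsph hSmeas, finrank_euclideanSpace_fin, ENNReal.toReal_mul]
  refine eq_four_pi_sub_of_setIntegral_ball_eq_zero hcone.measurableSet
    (setIntegral_ball_connAngle hab.le hβ hnorm) ?_
  filter_upwards [hoff, hplane] with x hx hxa
  exact connAngle_eq_or_of_mem_offCone hab hβ hnorm (fun t ht ↦ hreg t (Ioo_subset_Icc_self ht))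
    hclosed hclosed' hinj hmod hSsph hcone hSconn hbdry horient hq hx hxa

end GaussBonnet

/-- Holonomy of the sphere: if `β` is a simple, positively oriented `C¹`
parametrization of the boundary of a simply connected, smoothly bounded domain `S ⊆ S²` of
spherical area `θ`, then the parallel transport around `β` is the rotation by `θ` in the
tangent plane at `β(0)`: `Π_β v = cos θ • v + sin θ • (β(0) × v)`. -/
theorem statement12
    (S : Set E3) (hSsph : S ⊆ Metric.sphere (0:E3) 1)
    (hSopen : ∃ O : Set E3, IsOpen O ∧ S = O ∩ Metric.sphere (0:E3) 1)
    (hSconn : IsConnected S)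
    (hSsimp : SimplyConnectedSpace S)
    (θ : ℝ)
    (hθ : θ = ((volume : Measure E3).toSphere ((Subtype.val) ⁻¹' S)).toReal)
    (β : ℝ → E3) (hβC1 : ContDiff ℝ 1 β)
    (hsph : ∀ t ∈ Set.Icc (0:ℝ) 1, ‖β t‖ = 1)
    (hreg : ∀ t ∈ Set.Icc (0:ℝ) 1, deriv β t ≠ 0)
    (hclosed : β 0 = β 1) (hclosed' : deriv β 0 = deriv β 1)
    (hsimple : Set.InjOn β (Set.Ico 0 1))
    (hbdry : β '' Set.Icc 0 1 = closure S \ S)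
    (horient : ∀ t ∈ Set.Icc (0:ℝ) 1, ∃ ε > (0:ℝ), ∀ s ∈ Set.Ioo (0:ℝ) ε,
      (‖β t + s • cross3 (β t) (deriv β t)‖⁻¹ : ℝ) •
        (β t + s • cross3 (β t) (deriv β t)) ∈ S) :
    ∀ (v : E3) (V : ℝ → E3), ⟪v, β 0⟫ = 0 → IsParTrans β (deriv β) 0 1 v V →
      V 1 = Real.cos θ • v + Real.sin θ • cross3 (β 0) v := by
  intro v V hv hV
  have horient' : ∀ t ∈ Ioo (0 : ℝ) 1,
      ∀ᶠ u : ℝ in 𝓝[>] 0, β t + u • cross3 (β t) (deriv β t) ∈ coneOver S := fun t ht ↦ by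
    obtain ⟨ε, hε, h⟩ := horient t (Ioo_subset_Icc_self ht)
    filter_upwards [Ioo_mem_nhdsGT hε] with u hu
    exact mem_coneOver_of_inv_norm_smul_mem (fun h0 ↦ by simpa using hSsph h0) (h u hu)
  obtain ⟨q, hq⟩ := hSconn.nonempty
  have hqΓ : q ∈ offCone (β '' Icc 0 1) :=
    coneOver_subset_offCone (forall_mem_image.2 hsph) (hbdry ▸ disjoint_sdiff_right)
      (subset_coneOver hSsph hq)
  rw [hV.eq_rotation one_pos hβC1 hsph hclosed hv hqΓ]
  rcases eq_or_ne v 0 with rfl | hv0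
  · simp only [(cross3L (β 0)).map_zero, ← cross3L_apply, smul_zero, sub_self, add_zero]
  have hangle : connAngle β 0 1 q = -θ + 2 * Real.pi + 2 * Real.pi := by
    rw [hθ, connAngle_eq_four_pi_sub_area one_pos hβC1 hsph hreg hclosed hclosed' hsimple
      (fun x hx y hy ↦ hV.connAngle_angle_eq one_pos hβC1 hsph hclosed hv0 hv hx hy)
      hSsph hSopen hSconn.isPreconnected hbdry horient' hq]
    ring
  rw [hangle, Real.cos_add_two_pi, Real.cos_add_two_pi, Real.cos_neg, Real.sin_add_two_pi,
    Real.sin_add_two_pi, Real.sin_neg, neg_smul, sub_neg_eq_add]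
end
end

section
/- For all r̄ ∈ SO(3) with rows r̄_i = r̄ᵀ e_i and all γ̄ ∈ ℝ³ with |γ̄| < 1 there exist a constant w > 0 and a C^∞ isometric immersion u : [0,1] × [−w, w] → ℝ³ (i.e. ∂_i u · ∂_j u = δ_{ij} for i, j = 1,2) satisfying u(0,0) = 0, u(1,0) = γ̄, and, for i = 1,2: ∂_i u = e_i on {0} × (−w, w) and ∂_i u = r̄_i on {1} × (−w, w). -/
open MeasureTheory Set Filter Matrix
open scoped RealInnerProductSpace Topology ENNReal NNReal

noncomputable section

/-!
Ribbons that are flat near both ends can be glued and rescaled, and a cylindrical bend is free to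
rotate any direction transversal to its rulings. Bends connect any two orthonormal pairs `(a, b)`
in dimension at least three: they change `a` with `b` fixed, and folding along the diagonal
exchanges the roles of `a` and `b`.

The pairs (length, displacement) of ribbons that return to their initial frame form a convex cone.
Its closure contains `(1, v)` for every unit vector `v`: turn towards `v`, go straight, and turn
back, with the two turns shrunk to negligible size. Hence the closure contains the solid cone
`‖p‖ ≤ L`, and, since a finite-dimensional convex set contains the interior of its closure, the
cone itself contains every `(L, p)` with `‖p‖ < L`. A small turn to the prescribed final frame
changes `(1, γ)` only slightly, so it can be compensated.
-/

variable {E : Type*}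

section Orthonormal

variable [NormedAddCommGroup E] [InnerProductSpace ℝ E]

lemma orthonormal_pair_iff {a b : E} :
    Orthonormal ℝ ![a, b] ↔ ⟪a, a⟫ = 1 ∧ ⟪b, b⟫ = 1 ∧ ⟪a, b⟫ = 0 := by
  simp only [real_inner_self_eq_norm_sq, pow_eq_one_iff_of_nonneg (norm_nonneg _) two_ne_zero,
    orthonormal_vecCons_iff]
  simp [and_comm]

lemma orthonormal_pair_of_ne {ι : Type*} {v : ι → E} (hv : Orthonormal ℝ v) {i j : ι}
    (hij : i ≠ j) : Orthonormal ℝ ![v i, v j] := by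
  simp [orthonormal_vecCons_iff, hv.norm_eq_one, hv.inner_eq_zero hij]

lemma orthonormal_pair_rotation {a b : E} (h : Orthonormal ℝ ![a, b]) {c s : ℝ}
    (hcs : c ^ 2 + s ^ 2 = 1) : Orthonormal ℝ ![c • a - s • b, s • a + c • b] := by
  obtain ⟨haa, hbb, hab⟩ := orthonormal_pair_iff.mp h
  rw [orthonormal_pair_iff]
  simp only [inner_sub_left, inner_sub_right, inner_add_left, inner_add_right, inner_smul_left,
    inner_smul_right, haa, hbb, hab, real_inner_comm a b, RCLike.conj_to_real]
  exact ⟨by linear_combination hcs, by linear_combination hcs, by ring⟩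

lemma exists_norm_eq_one_and_inner_eq_zero (hE : 2 < Module.finrank ℝ E) (x y : E) :
    ∃ n : E, ‖n‖ = 1 ∧ ⟪x, n⟫ = 0 ∧ ⟪y, n⟫ = 0 := by
  classical
  have : FiniteDimensional ℝ E := Module.finite_of_finrank_pos (by lia)
  have span_ne_top : Submodule.span ℝ {x, y} ≠ ⊤ := by
    intro htop
    have := finrank_span_finset_le_card (R := ℝ) ({x, y} : Finset E)
    rw [Finset.coe_pair, Set.finrank, htop, finrank_top] at this
    exact absurd (this.trans Finset.card_le_two) (by lia)
  obtain ⟨m, hm, hm0⟩ := Submodule.exists_mem_ne_zero_of_ne_bot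
    (mt (Submodule.orthogonal_eq_bot_iff).mp span_ne_top)
  have inner_m (z : E) (hz : z ∈ ({x, y} : Set E)) : ⟪z, m⟫ = 0 :=
    (Submodule.mem_orthogonal _ _).mp hm z (Submodule.subset_span hz)
  refine ⟨‖m‖⁻¹ • m, norm_smul_inv_norm (𝕜 := ℝ) hm0, ?_, ?_⟩ <;>
    rw [inner_smul_right, inner_m _ (by simp), mul_zero]

lemma exists_eq_cos_smul_add_sin_smul (hE : 2 < Module.finrank ℝ E) {a a' b : E}
    (hab : Orthonormal ℝ ![a, b]) (hab' : Orthonormal ℝ ![a', b]) :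
    ∃ (n : E) (φ : ℝ), ‖n‖ = 1 ∧ ⟪a, n⟫ = 0 ∧ ⟪b, n⟫ = 0 ∧
      a' = Real.cos φ • a + Real.sin φ • n := by
  obtain ⟨haa, -, hab⟩ := orthonormal_pair_iff.mp hab
  obtain ⟨haa', -, hab'⟩ := orthonormal_pair_iff.mp hab'
  set k := ⟪a, a'⟫ with hk
  set r := a' - k • a with hr
  have inner_a_r : ⟪a, r⟫ = 0 := by
    rw [hr, inner_sub_right, inner_smul_right, haa, mul_one, sub_self]
  have inner_b_r : ⟪b, r⟫ = 0 := by
    rw [hr, inner_sub_right, inner_smul_right, real_inner_comm, hab', real_inner_comm, hab,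
      mul_zero, sub_self]
  have norm_r_sq : ‖r‖ ^ 2 = 1 - k ^ 2 := by
    rw [← real_inner_self_eq_norm_sq, hr]
    simp only [inner_sub_left, inner_sub_right, inner_smul_left, inner_smul_right, haa, haa',
      real_inner_comm a a', ← hk, RCLike.conj_to_real]
    ring
  obtain ⟨n, hn, han, hbn, hrn⟩ :
      ∃ n : E, ‖n‖ = 1 ∧ ⟪a, n⟫ = 0 ∧ ⟪b, n⟫ = 0 ∧ r = ‖r‖ • n := by
    by_cases hr0 : r = 0
    · obtain ⟨n, hn, han, hbn⟩ := exists_norm_eq_one_and_inner_eq_zero hE a b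
      exact ⟨n, hn, han, hbn, by simp [hr0]⟩
    · exact ⟨‖r‖⁻¹ • r, norm_smul_inv_norm (𝕜 := ℝ) hr0, by simp [inner_smul_right, inner_a_r],
        by simp [inner_smul_right, inner_b_r], by simp [smul_smul, norm_ne_zero_iff.mpr hr0]⟩
  have abs_k_le : |k| ≤ 1 := (sq_le_one_iff_abs_le_one k).mp (by linarith [sq_nonneg ‖r‖])
  refine ⟨n, Real.arccos k, hn, han, hbn, ?_⟩
  rw [Real.cos_arccos (neg_le_of_abs_le abs_k_le) (le_of_abs_le abs_k_le), Real.sin_arccos,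
    ← norm_r_sq, Real.sqrt_sq (norm_nonneg r), ← hrn, hr, add_sub_cancel]

end Orthonormal

section ConvexCone

variable [NormedAddCommGroup E] [NormedSpace ℝ E] [FiniteDimensional ℝ E]

lemma interior_closure_subset_of_convex {s : Set E} (hs : Convex ℝ s) :
    interior (closure s) ⊆ s := by
  intro x hx
  have span_eq_top : affineSpan ℝ s = ⊤ := by
    have closure_subset : closure s ⊆ affineSpan ℝ s :=
      closure_minimal (subset_affineSpan ℝ s) (affineSpan ℝ s).closed_of_finiteDimensional
    rw [eq_top_iff, ← hs.closure.interior_nonempty_iff_affineSpan_eq_top.mp ⟨x, hx⟩]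
    exact affineSpan_le.mpr closure_subset
  have interior_nonempty := hs.interior_nonempty_iff_affineSpan_eq_top.mpr span_eq_top
  rw [hs.interior_closure_eq_interior_of_nonempty_interior interior_nonempty] at hx
  exact interior_subset hx

lemma mem_convexCone_of_norm_lt [Nontrivial E] {C : ConvexCone ℝ (ℝ × E)}
    (hC : ∀ v : E, ‖v‖ = 1 → ((1 : ℝ), v) ∈ closure (C : Set (ℝ × E)))
    {L : ℝ} {p : E} (hp : ‖p‖ < L) : (L, p) ∈ C := by
  have mem_closure_of_norm_le_one {v : E} (hv : ‖v‖ ≤ 1) :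
      ((1 : ℝ), v) ∈ closure (C : Set (ℝ × E)) := by
    have convex_slice : Convex ℝ {v : E | ((1 : ℝ), v) ∈ closure (C : Set (ℝ × E))} := by
      intro x hx y hy s t hs ht hst
      simpa [hst] using C.convex.closure hx hy hs ht hst
    have sphere_subset : Metric.sphere (0 : E) 1 ⊆ {v | ((1 : ℝ), v) ∈ closure (C : Set (ℝ × E))} :=
      fun v hv => hC v (mem_sphere_zero_iff_norm.mp hv)
    refine convexHull_min sphere_subset convex_slice ?_
    rw [convexHull_sphere_eq_closedBall _ zero_le_one]
    exact mem_closedBall_zero_iff.mpr hv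
  refine interior_closure_subset_of_convex C.convex ?_
  refine interior_maximal (t := {x : ℝ × E | ‖x.2‖ < x.1}) ?_
    (isOpen_lt (by fun_prop) (by fun_prop)) hp
  rintro ⟨l, v⟩ (hv : ‖v‖ < l)
  have hl : 0 < l := (norm_nonneg v).trans_lt hv
  have := C.closure.smul_mem hl (mem_closure_of_norm_le_one (v := l⁻¹ • v) (by
    rw [norm_smul, norm_inv, Real.norm_of_nonneg hl.le, inv_mul_le_one₀ hl]
    exact hv.le))
  simpa [hl.ne', ConvexCone.mem_closure] using this

end ConvexCone

variable [NormedAddCommGroup E] [InnerProductSpace ℝ E]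

/-- `u` is a smooth ribbon of length `L` and displacement `p` in a Euclidean space, isometric on the
strip `|q.2| < δ`. It agrees with the linear map `A` near and before its initial edge `q.1 = 0`,
and with an affine map with linear part `B` near and beyond its final edge `q.1 = L`; this flatness
is what makes ribbons gluable. The single parameter `δ` bounds both the half-width of the strip and
the size of the flat ends. -/
structure IsRibbon (δ L : ℝ) (p : E) (A B : ℝ × ℝ →L[ℝ] E) (u : ℝ × ℝ → E) : Prop where
  contDiff : ContDiff ℝ (⊤ : ℕ∞) u
  orthonormal_fderiv (q : ℝ × ℝ) :
    |q.2| < δ → Orthonormal ℝ ![fderiv ℝ u q (1, 0), fderiv ℝ u q (0, 1)]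
  eq_start (q : ℝ × ℝ) : |q.2| < δ → q.1 < δ → u q = A q
  eq_end (q : ℝ × ℝ) : |q.2| < δ → L - δ < q.1 → u q = p + B (q - (L, 0))

/-- Some ribbon of length `L` and displacement `p`, of unspecified positive width, leads from the
frame `A` to the frame `B`. -/
def HasRibbon (A B : ℝ × ℝ →L[ℝ] E) (L : ℝ) (p : E) : Prop :=
  0 < L ∧ ∃ δ > 0, ∃ u, IsRibbon δ L p A B u

variable {A B C : ℝ × ℝ →L[ℝ] E} {δ L L₁ L₂ : ℝ} {p p₁ p₂ : E} {u v : ℝ × ℝ → E}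

namespace IsRibbon

lemma mono (h : IsRibbon δ L p A B u) {δ' : ℝ} (hδ : δ' ≤ δ) : IsRibbon δ' L p A B u where
  contDiff := h.contDiff
  orthonormal_fderiv q hq := h.orthonormal_fderiv q (hq.trans_le hδ)
  eq_start q hy hx := h.eq_start q (hy.trans_le hδ) (hx.trans_le hδ)
  eq_end q hy hx := h.eq_end q (hy.trans_le hδ) (by linarith)

lemma fderiv_start (h : IsRibbon δ L p A B u) {q : ℝ × ℝ} (hy : |q.2| < δ) (hx : q.1 < δ) :
    fderiv ℝ u q = A := by
  have eq_near : u =ᶠ[𝓝 q] A := by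
    filter_upwards [(continuous_snd.abs.tendsto q).eventually_lt_const hy,
      (continuous_fst.tendsto q).eventually_lt_const hx] using h.eq_start
  rw [eq_near.fderiv_eq, A.fderiv]

lemma fderiv_end (h : IsRibbon δ L p A B u) {q : ℝ × ℝ} (hy : |q.2| < δ) (hx : L - δ < q.1) :
    fderiv ℝ u q = B := by
  have eq_near : u =ᶠ[𝓝 q] fun q => p + B (q - (L, 0)) := by
    filter_upwards [(continuous_snd.abs.tendsto q).eventually_lt_const hy,
      (continuous_fst.tendsto q).eventually_const_lt hx] using h.eq_end
  rw [eq_near.fderiv_eq, fderiv_const_add, fderiv_comp_sub, B.fderiv]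

lemma scale (h : IsRibbon δ L p A B u) {c : ℝ} (hc : 0 < c) :
    IsRibbon (c * δ) (c * L) (c • p) A B (fun q => c • u (c⁻¹ • q)) := by
  have abs_inv_smul_lt {q : ℝ × ℝ} (hq : |q.2| < c * δ) : |(c⁻¹ • q).2| < δ := by
    rwa [Prod.smul_snd, smul_eq_mul, abs_mul, abs_of_pos (inv_pos.mpr hc), inv_mul_lt_iff₀ hc]
  constructor
  · exact (h.contDiff.comp (contDiff_id.const_smul c⁻¹)).const_smul c
  · intro q hq
    have fderiv_eq : fderiv ℝ (fun q => c • u (c⁻¹ • q)) q = fderiv ℝ u (c⁻¹ • q) := by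
      rw [fderiv_fun_const_smul, fderiv_comp_smul, smul_inv_smul₀ hc.ne']
      exact ((h.contDiff.comp (contDiff_id.const_smul c⁻¹)).differentiable (by simp)) q
    rw [fderiv_eq]
    exact h.orthonormal_fderiv _ (abs_inv_smul_lt hq)
  · intro q hy hx
    have hx' : (c⁻¹ • q).1 < δ := (inv_mul_lt_iff₀ hc).mpr hx
    rw [h.eq_start _ (abs_inv_smul_lt hy) hx', map_smul, smul_inv_smul₀ hc.ne']
  · intro q hy hx
    have hx' : L - δ < (c⁻¹ • q).1 := (lt_inv_mul_iff₀ hc).mpr (by linarith)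
    have shift_eq : q - (c * L, 0) = c • (c⁻¹ • q - (L, 0)) := by
      rw [smul_sub, smul_inv_smul₀ hc.ne']
      simp
    rw [h.eq_end _ (abs_inv_smul_lt hy) hx', smul_add, shift_eq, map_smul]

/-- Two ribbons are glued by adding their deviations from the flat strip `B` that both contain;
each deviation vanishes where the other ribbon is still bent. -/
lemma concat (hu : IsRibbon δ L₁ p₁ A B u) (hv : IsRibbon δ L₂ p₂ B C v) (hδ : 0 < δ)
    (hL₁ : 0 < L₁) (hL₂ : 0 < L₂) :
    IsRibbon δ (L₁ + L₂) (p₁ + p₂) A C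
      (fun q => u q + (v (q - (L₁, 0)) - B (q - (L₁, 0)))) := by
  set U : ℝ × ℝ → E := fun q => u q + (v (q - (L₁, 0)) - B (q - (L₁, 0)))
  have abs_shift {q : ℝ × ℝ} (hy : |q.2| < δ) : |(q - (L₁, 0)).2| < δ := by simpa using hy
  have eq_first {q : ℝ × ℝ} (hy : |q.2| < δ) (hx : q.1 < L₁ + δ) : U q = u q := by
    simp only [U]
    rw [hv.eq_start _ (abs_shift hy) (sub_lt_iff_lt_add'.mpr hx), sub_self, add_zero]
  have eq_second {q : ℝ × ℝ} (hy : |q.2| < δ) (hx : L₁ - δ < q.1) :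
      U q = p₁ + v (q - (L₁, 0)) := by
    simp only [U]
    rw [hu.eq_end q hy hx]
    abel
  refine ⟨hu.contDiff.add ((hv.contDiff.comp (contDiff_id.sub contDiff_const)).sub
    (B.contDiff.comp (contDiff_id.sub contDiff_const))), ?_, ?_, ?_⟩
  · intro q hy
    have near_y := (continuous_snd.abs.tendsto q).eventually_lt_const hy
    rcases lt_or_ge q.1 (L₁ + δ) with hx | hx
    · have eq_near : U =ᶠ[𝓝 q] u := by
        filter_upwards [near_y, (continuous_fst.tendsto q).eventually_lt_const hx]
          using fun _ => eq_first
      rw [eq_near.fderiv_eq]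
      exact hu.orthonormal_fderiv q hy
    · have hx' : L₁ - δ < q.1 := by linarith
      have eq_near : U =ᶠ[𝓝 q] fun q => p₁ + v (q - (L₁, 0)) := by
        filter_upwards [near_y, (continuous_fst.tendsto q).eventually_const_lt hx']
          using fun _ => eq_second
      rw [eq_near.fderiv_eq, fderiv_const_add, fderiv_comp_sub]
      exact hv.orthonormal_fderiv _ (abs_shift hy)
  · intro q hy hx
    rw [eq_first hy (by linarith), hu.eq_start q hy hx]
  · intro q hy hx
    have hx' : L₂ - δ < (q - (L₁, 0)).1 := by
      rw [Prod.fst_sub]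
      linarith
    rw [eq_second hy (by linarith), hv.eq_end _ (abs_shift hy) hx', sub_sub, Prod.mk_add_mk,
      add_zero, add_assoc]

end IsRibbon

namespace HasRibbon

lemma straight (hA : Orthonormal ℝ ![A (1, 0), A (0, 1)]) (hL : 0 < L) :
    HasRibbon A A L (L • A (1, 0)) := by
  refine ⟨hL, 1, one_pos, A, A.contDiff, fun q _ => ?_, fun _ _ _ => rfl, fun q _ _ => ?_⟩
  · rwa [A.fderiv]
  · rw [← map_smul, ← map_add]
    simp

lemma scale (h : HasRibbon A B L p) {c : ℝ} (hc : 0 < c) : HasRibbon A B (c * L) (c • p) := by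
  obtain ⟨hL, δ, hδ, u, hu⟩ := h
  exact ⟨mul_pos hc hL, c * δ, mul_pos hc hδ, _, hu.scale hc⟩

lemma concat (h₁ : HasRibbon A B L₁ p₁) (h₂ : HasRibbon B C L₂ p₂) :
    HasRibbon A C (L₁ + L₂) (p₁ + p₂) := by
  obtain ⟨hL₁, δ₁, hδ₁, u, hu⟩ := h₁
  obtain ⟨hL₂, δ₂, hδ₂, v, hv⟩ := h₂
  have hδ := lt_min hδ₁ hδ₂
  exact ⟨add_pos hL₁ hL₂, min δ₁ δ₂, hδ, _,
    (hu.mono (min_le_left _ _)).concat (hv.mono (min_le_right _ _)) hδ hL₁ hL₂⟩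

end HasRibbon

/-- The cone of pairs (length, displacement) of the ribbons that return to their initial
frame `A`. -/
def ribbonCone (A : ℝ × ℝ →L[ℝ] E) : ConvexCone ℝ (ℝ × E) where
  carrier := {x | HasRibbon A A x.1 x.2}
  smul_mem' _ hc _ hx := hx.scale hc
  add_mem' _ hx _ hy := hx.concat hy

/-- Some ribbon, of unspecified length and displacement, leads from the frame `A` to the
frame `B`. -/
def RibbonReachable (A B : ℝ × ℝ →L[ℝ] E) : Prop := ∃ L p, HasRibbon A B L p

lemma RibbonReachable.trans (h₁ : RibbonReachable A B) (h₂ : RibbonReachable B C) :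
    RibbonReachable A C := by
  obtain ⟨_, _, h₁⟩ := h₁
  obtain ⟨_, _, h₂⟩ := h₂
  exact ⟨_, _, h₁.concat h₂⟩

/-- The linear parametrization of a plane with partial derivatives `a` and `b`, which is how a pair
of tangent vectors is encoded as the initial or final frame of a ribbon. -/
def frame (a b : E) : ℝ × ℝ →L[ℝ] E :=
  (ContinuousLinearMap.fst ℝ ℝ ℝ).smulRight a + (ContinuousLinearMap.snd ℝ ℝ ℝ).smulRight b

@[simp]
lemma frame_apply (a b : E) (q : ℝ × ℝ) : frame a b q = q.1 • a + q.2 • b := rfl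

lemma exists_contDiff_primitive_of_eq_const [CompleteSpace E] {g : ℝ → E} {g₁ : E}
    (hg : ContDiff ℝ (⊤ : ℕ∞) g) (hg0 : ∀ t ≤ 0, g t = 0) (hg1 : ∀ t ≥ 1, g t = g₁) :
    ∃ (H : ℝ → E) (h : E), ContDiff ℝ (⊤ : ℕ∞) H ∧ (∀ t, HasDerivAt H (g t) t) ∧
      (∀ t ≤ 0, H t = 0) ∧ ∀ t ≥ 1, H t = h + t • g₁ := by
  have integrable (a b : ℝ) : IntervalIntegrable g volume a b :=
    hg.continuous.intervalIntegrable a b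
  set H : ℝ → E := fun t => ∫ r in (0 : ℝ)..t, g r
  have hasDerivAt (t : ℝ) : HasDerivAt H (g t) t :=
    (hg.continuous.integral_hasStrictDerivAt 0 t).hasDerivAt
  refine ⟨H, H 1 - g₁, ?_, hasDerivAt, fun t ht => ?_, fun t ht => ?_⟩
  · rw [contDiff_infty_iff_deriv, funext fun t => (hasDerivAt t).deriv]
    exact ⟨fun t => (hasDerivAt t).differentiableAt, hg⟩
  · have eq_zero : EqOn g (fun _ => 0) (uIcc 0 t) := by
      intro r hr
      rw [uIcc_of_ge ht] at hr
      exact hg0 r hr.2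
    simp only [H, intervalIntegral.integral_congr eq_zero, intervalIntegral.integral_zero]
  · have eq_const : EqOn g (fun _ => g₁) (uIcc 1 t) := by
      intro r hr
      rw [uIcc_of_le ht] at hr
      exact hg1 r hr.1
    have split : H t = H 1 + ∫ r in (1 : ℝ)..t, g r :=
      (intervalIntegral.integral_add_adjacent_intervals (integrable 0 1) (integrable 1 t)).symm
    rw [split, intervalIntegral.integral_congr eq_const, intervalIntegral.integral_const]
    module

/-- With `H' = g`, the map `q ↦ frame a b q + H (c * q.1 + s * q.2 - 1)` is a cylinder ruled by the
lines `c * q.1 + s * q.2 = const`. As `c ≠ 0`, these are transversal to the center line, so that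
on a narrow strip the bent part stays away from both ends. -/
lemma RibbonReachable.of_cylinder [CompleteSpace E] {a b : E} {c s : ℝ} (hc : 0 < c)
    {g : ℝ → E} {g₁ : E} (hg : ContDiff ℝ (⊤ : ℕ∞) g)
    (hg0 : ∀ t ≤ 0, g t = 0) (hg1 : ∀ t ≥ 1, g t = g₁)
    (horth : ∀ t, Orthonormal ℝ ![a + c • g t, b + s • g t]) :
    RibbonReachable (frame a b) (frame (a + c • g₁) (b + s • g₁)) := by
  obtain ⟨H, h, hH, hasDerivAt, hH0, hH1⟩ := exists_contDiff_primitive_of_eq_const hg hg0 hg1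
  set l : ℝ × ℝ →L[ℝ] ℝ := frame c s
  have hl (q : ℝ × ℝ) : l q = q.1 * c + q.2 * s := rfl
  have hcs : 0 < c + |s| := by positivity
  set δ := (c + |s|)⁻¹
  have hδ : c * δ + |s| * δ = 1 := by rw [← add_mul, mul_inv_cancel₀ hcs.ne']
  have abs_le {q : ℝ × ℝ} (hy : |q.2| < δ) : |q.2 * s| ≤ |s| * δ := by
    rw [abs_mul, mul_comm]
    gcongr
  refine ⟨3 / c, (3 / c) • a + h + (2 : ℝ) • g₁, by positivity, δ, inv_pos.mpr hcs,
    fun q => frame a b q + H (l q - 1), ?_, fun q _ => ?_, fun q hy hx => ?_, fun q hy hx => ?_⟩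
  · exact (frame a b).contDiff.add (hH.comp (l.contDiff.sub contDiff_const))
  · have hasFDerivAt := (frame a b).hasFDerivAt.add
      ((hasDerivAt (l q - 1)).hasFDerivAt.comp q ((l.hasFDerivAt (x := q)).sub_const 1))
    rw [show fderiv ℝ (fun q => frame a b q + H (l q - 1)) q = _ from hasFDerivAt.fderiv]
    simpa [hl] using horth (l q - 1)
  · have : q.1 * c < c * δ := by rw [mul_comm]; gcongr
    have := le_of_abs_le (abs_le hy)
    rw [hH0 _ (by rw [hl]; linarith), add_zero]
  · have : (3 / c - δ) * c < q.1 * c := by gcongr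
    have := neg_le_of_abs_le (abs_le hy)
    have hcc : 3 / c * c = 3 := by field_simp
    rw [hH1 _ (by rw [hl]; linarith), hl]
    have : q.1 * c = (q.1 - 3 / c) * c + 3 := by linarith
    rw [this]
    simp only [frame_apply, Prod.fst_sub, Prod.snd_sub]
    module

lemma RibbonReachable.bend (hE : 2 < Module.finrank ℝ E) {d d' τ : E}
    (hd : Orthonormal ℝ ![d, τ]) (hd' : Orthonormal ℝ ![d', τ]) {c s : ℝ}
    (hcs : c ^ 2 + s ^ 2 = 1) (hc : 0 < c) :
    RibbonReachable (frame (c • d - s • τ) (s • d + c • τ))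
      (frame (c • d' - s • τ) (s • d' + c • τ)) := by
  have : FiniteDimensional ℝ E := Module.finite_of_finrank_pos (by lia)
  have : CompleteSpace E := FiniteDimensional.complete ℝ E
  obtain ⟨n, φ, hn, hdn, hτn, rfl⟩ := exists_eq_cos_smul_add_sin_smul hE hd hd'
  obtain ⟨hdd, hττ, hdτ⟩ := orthonormal_pair_iff.mp hd
  have hnn : ⟪n, n⟫ = 1 := by rw [real_inner_self_eq_norm_sq, hn, one_pow]
  set e : ℝ → E := fun θ => Real.cos θ • d + Real.sin θ • n with he
  set θ : ℝ → ℝ := fun t => φ * Real.smoothTransition t with hθ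
  have orthonormal_e (θ : ℝ) : Orthonormal ℝ ![e θ, τ] := by
    rw [orthonormal_pair_iff]
    simp only [he, inner_add_left, inner_add_right, inner_smul_left, inner_smul_right, hdd, hττ,
      hdτ, hnn, hdn, real_inner_comm d n, real_inner_comm τ n, hτn, RCLike.conj_to_real]
    exact ⟨by linear_combination Real.cos_sq_add_sin_sq θ, trivial, by ring⟩
  have contDiff_θ : ContDiff ℝ (⊤ : ℕ∞) θ := contDiff_const.mul Real.smoothTransition.contDiff
  have contDiff_e : ContDiff ℝ (⊤ : ℕ∞) fun t => e (θ t) - d :=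
    ((contDiff_θ.cos.smul contDiff_const).add (contDiff_θ.sin.smul contDiff_const)).sub
      contDiff_const
  have eq_fst (x : E) : c • d - s • τ + c • (x - d) = c • x - s • τ := by module
  have eq_snd (x : E) : s • d + c • τ + s • (x - d) = s • x + c • τ := by module
  have := RibbonReachable.of_cylinder (a := c • d - s • τ) (b := s • d + c • τ) (s := s) hc
    (g₁ := e φ - d) contDiff_e
    (fun t ht => by simp [he, hθ, Real.smoothTransition.zero_of_nonpos ht])
    (fun t ht => by simp [hθ, Real.smoothTransition.one_of_one_le ht])
    (fun t => by
      rw [eq_fst, eq_snd]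
      exact orthonormal_pair_rotation (orthonormal_e (θ t)) hcs)
  rwa [eq_fst, eq_snd] at this

lemma RibbonReachable.rotate_fst (hE : 2 < Module.finrank ℝ E) {a a' b : E}
    (hab : Orthonormal ℝ ![a, b]) (hab' : Orthonormal ℝ ![a', b]) :
    RibbonReachable (frame a b) (frame a' b) := by
  simpa using RibbonReachable.bend hE hab hab' (c := 1) (s := 0) (by norm_num) one_pos

/-- Folding by a half turn along the diagonal direction `a + b`. -/
lemma RibbonReachable.neg_swap (hE : 2 < Module.finrank ℝ E) {a b : E}
    (hab : Orthonormal ℝ ![a, b]) : RibbonReachable (frame a b) (frame (-b) (-a)) := by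
  set c : ℝ := (√2)⁻¹
  have hc : 0 < c := by positivity
  have two_mul_sq : 2 * c ^ 2 = 1 := by simp [c]
  have hd : Orthonormal ℝ ![c • a + c • b, c • b - c • a] := by
    have := orthonormal_pair_rotation hab (c := c) (s := -c) (by linarith)
    convert this using 3 <;> module
  have hd' : Orthonormal ℝ ![-(c • a + c • b), c • b - c • a] := by
    rw [orthonormal_pair_iff] at hd ⊢
    simpa only [inner_neg_left, inner_neg_right, neg_neg, neg_eq_zero] using hd
  convert RibbonReachable.bend hE hd hd' (c := c) (s := c) (by linarith) hc using 2 <;>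
    match_scalars <;> linarith

lemma RibbonReachable.rotate_snd (hE : 2 < Module.finrank ℝ E) {a b b' : E}
    (hab : Orthonormal ℝ ![a, b]) (hab' : Orthonormal ℝ ![a, b']) :
    RibbonReachable (frame a b) (frame a b') := by
  have orthonormal_neg_swap {x : E} (hx : Orthonormal ℝ ![a, x]) : Orthonormal ℝ ![-x, -a] := by
    rw [orthonormal_pair_iff] at hx ⊢
    simpa [real_inner_comm a x, and_left_comm] using hx
  have h₁ := neg_swap hE hab
  have h₂ := rotate_fst hE (orthonormal_neg_swap hab) (orthonormal_neg_swap hab')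
  have h₃ := neg_swap hE (orthonormal_neg_swap hab')
  rw [neg_neg, neg_neg] at h₃
  exact h₁.trans (h₂.trans h₃)

lemma RibbonReachable.of_orthonormal (hE : 2 < Module.finrank ℝ E) {a b a' b' : E}
    (hab : Orthonormal ℝ ![a, b]) (hab' : Orthonormal ℝ ![a', b']) :
    RibbonReachable (frame a b) (frame a' b') := by
  obtain ⟨n, hn, han, han'⟩ := exists_norm_eq_one_and_inner_eq_zero hE a a'
  have hnn : ⟪n, n⟫ = 1 := by rw [real_inner_self_eq_norm_sq, hn, one_pow]
  have han : Orthonormal ℝ ![a, n] :=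
    orthonormal_pair_iff.mpr ⟨(orthonormal_pair_iff.mp hab).1, hnn, han⟩
  have han' : Orthonormal ℝ ![a', n] :=
    orthonormal_pair_iff.mpr ⟨(orthonormal_pair_iff.mp hab').1, hnn, han'⟩
  exact (rotate_snd hE hab han).trans ((rotate_fst hE han han').trans (rotate_snd hE han' hab'))

lemma one_mem_closure_ribbonCone (hE : 2 < Module.finrank ℝ E) {a b v : E}
    (hab : Orthonormal ℝ ![a, b]) (hv : ‖v‖ = 1) :
    ((1 : ℝ), v) ∈ closure (ribbonCone (frame a b) : Set (ℝ × E)) := by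
  obtain ⟨n, hn, hvn, -⟩ := exists_norm_eq_one_and_inner_eq_zero hE v v
  have hvn : Orthonormal ℝ ![v, n] :=
    orthonormal_pair_iff.mpr ⟨by simp [hv], by simp [hn], hvn⟩
  obtain ⟨L₁, p₁, h₁⟩ := RibbonReachable.of_orthonormal hE hab hvn
  obtain ⟨L₂, p₂, h₂⟩ := RibbonReachable.of_orthonormal hE hvn hab
  have straight : HasRibbon (frame v n) (frame v n) 1 v := by
    simpa using HasRibbon.straight (A := frame v n) (by simpa using hvn) one_pos
  have mem_cone (ε : ℝ) (hε : 0 < ε) :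
      (ε * L₁ + 1 + ε * L₂, ε • p₁ + v + ε • p₂) ∈ ribbonCone (frame a b) :=
    ((h₁.scale hε).concat straight).concat (h₂.scale hε)
  have tendsto : Tendsto (fun ε : ℝ => (ε * L₁ + 1 + ε * L₂, ε • p₁ + v + ε • p₂)) (𝓝[>] 0)
      (𝓝 (1, v)) := by
    have : Continuous fun ε : ℝ => (ε * L₁ + 1 + ε * L₂, ε • p₁ + v + ε • p₂) := by fun_prop
    simpa using (this.tendsto 0).mono_left nhdsWithin_le_nhds
  exact mem_closure_of_tendsto tendsto (eventually_mem_nhdsWithin.mono mem_cone)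

lemma HasRibbon.of_norm_lt (hE : 2 < Module.finrank ℝ E) {a b a' b' : E}
    (hab : Orthonormal ℝ ![a, b]) (hab' : Orthonormal ℝ ![a', b']) (hp : ‖p‖ < L) :
    HasRibbon (frame a b) (frame a' b') L p := by
  have : FiniteDimensional ℝ E := Module.finite_of_finrank_pos (by lia)
  have : Nontrivial E := Module.nontrivial_of_finrank_pos (R := ℝ) (by lia)
  obtain ⟨Λ, c, turn⟩ := RibbonReachable.of_orthonormal hE hab hab'
  have eventually_lt : ∀ᶠ ε : ℝ in 𝓝[>] 0, ‖p - ε • c‖ < L - ε * Λ := by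
    refine nhdsWithin_le_nhds (ContinuousAt.eventually_lt ?_ ?_ (by simpa using hp)) <;> fun_prop
  obtain ⟨ε, hε, hlt⟩ := (eventually_mem_nhdsWithin.and eventually_lt).exists
  have loop : HasRibbon (frame a b) (frame a b) (L - ε * Λ) (p - ε • c) :=
    mem_convexCone_of_norm_lt (C := ribbonCone (frame a b))
      (fun _ => one_mem_closure_ribbonCone hE hab) hlt
  simpa using loop.concat (turn.scale hε)

lemma orthonormal_row3 {M : Matrix (Fin 3) (Fin 3) ℝ} (hM : M * Mᵀ = 1) :
    Orthonormal ℝ (row3 M) := by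
  rw [orthonormal_iff_ite]
  intro i j
  rw [← Matrix.one_apply, ← hM, Matrix.mul_apply]
  simp [row3, PiLp.inner_apply, mul_comm]

theorem statement14_general (hE : 2 < Module.finrank ℝ E) {a b a' b' γ : E}
    (hab : Orthonormal ℝ ![a, b]) (hab' : Orthonormal ℝ ![a', b']) (hγ : ‖γ‖ < 1) :
    ∃ (w : ℝ) (u : ℝ × ℝ → E), 0 < w ∧ ContDiff ℝ (⊤ : ℕ∞) u ∧
      (∀ p ∈ Icc (0 : ℝ) 1 ×ˢ Icc (-w) w,
        ⟪fderiv ℝ u p (1, 0), fderiv ℝ u p (1, 0)⟫ = 1 ∧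
        ⟪fderiv ℝ u p (0, 1), fderiv ℝ u p (0, 1)⟫ = 1 ∧
        ⟪fderiv ℝ u p (1, 0), fderiv ℝ u p (0, 1)⟫ = 0) ∧
      u (0, 0) = 0 ∧ u (1, 0) = γ ∧
      (∀ s ∈ Ioo (-w) w,
        fderiv ℝ u (0, s) (1, 0) = a ∧ fderiv ℝ u (0, s) (0, 1) = b ∧
        fderiv ℝ u (1, s) (1, 0) = a' ∧ fderiv ℝ u (1, s) (0, 1) = b') := by
  obtain ⟨-, δ, hδ, u, hu⟩ := HasRibbon.of_norm_lt hE hab hab' hγ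
  have abs_lt {y : ℝ} (hy : y ∈ Icc (-(δ / 2)) (δ / 2)) : |y| < δ :=
    (abs_le.mpr hy).trans_lt (half_lt_self hδ)
  refine ⟨δ / 2, u, half_pos hδ, hu.contDiff, ?_, ?_, ?_, ?_⟩
  · exact fun q hq => orthonormal_pair_iff.mp (hu.orthonormal_fderiv q (abs_lt hq.2))
  · simp [hu.eq_start (0, 0) (by simpa) hδ]
  · simp [hu.eq_end (1, 0) (by simpa) (by simpa)]
  · intro y hy
    have hy := abs_lt (Ioo_subset_Icc_self hy)
    rw [hu.fderiv_start hy hδ, hu.fderiv_end hy (by simpa)]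
    simp

/-- Ribbons with finite width: for every `r̄ ∈ SO(3)` and `γ̄` with
`|γ̄| < 1` there are `w > 0` and a `C^∞` isometric immersion `u : [0,1] × [-w,w] → ℝ³` with
`u(0,0) = 0`, `u(1,0) = γ̄`, `∂ᵢu = eᵢ` on `{0} × (-w,w)` and `∂ᵢu = r̄ᵢ` on `{1} × (-w,w)`
for `i = 1,2`. -/
theorem statement14
    (rbar : Matrix (Fin 3) (Fin 3) ℝ) (hrbar : rbar ∈ SO3)
    (γbar : E3) (hγ : ‖γbar‖ < 1) :
    ∃ (w : ℝ) (u : ℝ × ℝ → E3), 0 < w ∧ ContDiff ℝ (⊤ : ℕ∞) u ∧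
      (∀ p ∈ Set.Icc (0:ℝ) 1 ×ˢ Set.Icc (-w) w,
        ⟪fderiv ℝ u p (1, 0), fderiv ℝ u p (1, 0)⟫ = 1 ∧
        ⟪fderiv ℝ u p (0, 1), fderiv ℝ u p (0, 1)⟫ = 1 ∧
        ⟪fderiv ℝ u p (1, 0), fderiv ℝ u p (0, 1)⟫ = 0) ∧
      u (0, 0) = 0 ∧ u (1, 0) = γbar ∧
      (∀ s ∈ Set.Ioo (-w) w,
        fderiv ℝ u (0, s) (1, 0) = EuclideanSpace.single 0 1 ∧
        fderiv ℝ u (0, s) (0, 1) = EuclideanSpace.single 1 1 ∧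
        fderiv ℝ u (1, s) (1, 0) = row3 rbar 0 ∧
        fderiv ℝ u (1, s) (0, 1) = row3 rbar 1) := by
  have he := orthonormal_pair_of_ne (EuclideanSpace.orthonormal_single (𝕜 := ℝ))
    (Fin.zero_ne_one : (0 : Fin 3) ≠ 1)
  have hrow := orthonormal_pair_of_ne (orthonormal_row3 hrbar.1) (Fin.zero_ne_one : (0 : Fin 3) ≠ 1)
  exact statement14_general (by simp) he hrow hγ
end
end

section
/- For all r̄ ∈ SO(3) and all γ̄ ∈ ℝ³ with |γ̄| < 1 there exists a framed curve (γ, r) with γ ∈ C^∞([0,1], ℝ³), r ∈ C^∞([0,1], SO(3)), γ' = r₁ and r₁' · r₂ ≡ 0, such that: (i) r(0) = Id, r(1) = r̄, γ(0) = 0 and γ(1) = γ̄; (ii) there exists K_g ∈ C₀^∞(I) with |K_g| ≤ π/4 on I such that the field r̃₁(t) := cos(K_g(t)) r₁(t) + sin(K_g(t)) (r₃(t) × r₁(t)) satisfies r₃' × r̃₁ = 0 on I, i.e. the frame r̃ with rows r̃₁, r̃₂ = r₃ × r̃₁, r̃₃ = r₃ is an adapted frame for the spherical curve r₃ : I → S²;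 in particular, r₃ has bounded geodesic curvature. -/
open MeasureTheory Set Filter Matrix
open scoped RealInnerProductSpace Topology ENNReal NNReal

noncomputable section

/-!
A frame rotated as `r' = l • (tiltGen κ * r)` satisfies `r₁' · r₂ = 0` and
`r₃' = -l (cos κ r₁ + sin κ r₂)`, so that `κ` serves as the angle `K_g`. For a fixed `κ` this is a
rotation about an axis depending on `κ`, and the axes for `κ = π/4` and `κ = -π/4` are orthogonal.
By Euler angles, three such rotations therefore reach every frame, and all transitions are smooth
when the frame is brought to rest before the angle changes.

It remains to prescribe the displacement. Resting for a time `c` at a frame with first row `v`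
contributes `c v` to the curve. Choose finitely many unit vectors with `γ̄` in the interior of their
convex hull, and visit a frame with first row `v` for each of them before ending at `r̄`. The
transitions contribute a fixed displacement `D` in a fixed time `T₀`, so in total time `T` the
resting phases have to contribute `T γ̄ - D` in time `T - T₀`. The ratio tends to `γ̄` as `T → ∞`,
hence is eventually a convex combination of the chosen vectors, which gives the resting times.
Rescaling time by `1 / T` normalizes the length of the curve to `1`.
-/

local notation "Mat3" => Matrix (Fin 3) (Fin 3) ℝ

section Rodrigues

variable {𝔸 : Type*}

/-- Rodrigues' formula for `exp (θ A)`, valid when `A ^ 3 = -A`. -/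
def rodrigues [Ring 𝔸] [Algebra ℝ 𝔸] (A : 𝔸) (θ : ℝ) : 𝔸 :=
  1 + Real.sin θ • A + (1 - Real.cos θ) • A ^ 2

theorem rodrigues_zero [Ring 𝔸] [Algebra ℝ 𝔸] (A : 𝔸) : rodrigues A 0 = 1 := by
  simp [rodrigues]

theorem rodrigues_add [Ring 𝔸] [Algebra ℝ 𝔸] {A : 𝔸} (hA : A ^ 3 = -A) (s t : ℝ) :
    rodrigues A (s + t) = rodrigues A s * rodrigues A t := by
  have hA4 : A ^ 2 * A ^ 2 = -A ^ 2 := by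
    rw [← pow_add, pow_succ, hA, neg_mul, sq]
  simp only [rodrigues, add_mul, mul_add, one_mul, mul_one, smul_mul_smul_comm, ← sq A, ← pow_succ,
    ← pow_succ', hA, hA4, Real.sin_add, Real.cos_add]
  module

theorem rodrigues_conj [Ring 𝔸] [Algebra ℝ 𝔸] {U V : 𝔸} (hUV : U * V = 1) (hVU : V * U = 1)
    (A : 𝔸) (θ : ℝ) : U * rodrigues A θ * V = rodrigues (U * A * V) θ := by
  have hsq : (U * A * V) ^ 2 = U * A ^ 2 * V := by
    calc (U * A * V) ^ 2 = U * A * (V * U) * A * V := by noncomm_ring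
      _ = U * A ^ 2 * V := by rw [hVU]; noncomm_ring
  simp only [rodrigues, hsq, mul_add, add_mul, mul_one, hUV, mul_smul_comm, smul_mul_assoc]

theorem contDiff_rodrigues [NormedRing 𝔸] [NormedAlgebra ℝ 𝔸] (A : 𝔸) {n : WithTop ℕ∞} :
    ContDiff ℝ n (rodrigues A) := by
  unfold rodrigues
  fun_prop

theorem hasDerivAt_rodrigues [NormedRing 𝔸] [NormedAlgebra ℝ 𝔸] {A : 𝔸} (hA : A ^ 3 = -A)
    (θ : ℝ) : HasDerivAt (rodrigues A) (A * rodrigues A θ) θ := by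
  have h := (((Real.hasDerivAt_sin θ).smul_const A).const_add (1 : 𝔸)).add
    (((Real.hasDerivAt_cos θ).const_sub 1).smul_const (A ^ 2))
  refine h.congr_deriv ?_
  simp only [rodrigues, mul_add, mul_one, mul_smul_comm, ← sq, ← pow_succ', hA, Nat.reduceAdd]
  module

end Rodrigues

section SpecialOrthogonal

variable {n R : Type*} [Fintype n] [DecidableEq n] [CommRing R] {M : Matrix n n R}

theorem mem_specialOrthogonalGroup_iff_mul_transpose :
    M ∈ specialOrthogonalGroup n R ↔ M * Mᵀ = 1 ∧ M.det = 1 := by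
  rw [mem_specialOrthogonalGroup_iff, mem_orthogonalGroup_iff]

theorem mul_transpose_of_mem_specialOrthogonalGroup (hM : M ∈ specialOrthogonalGroup n R) :
    M * Mᵀ = 1 :=
  (mem_specialOrthogonalGroup_iff_mul_transpose.1 hM).1

theorem transpose_mul_of_mem_specialOrthogonalGroup (hM : M ∈ specialOrthogonalGroup n R) :
    Mᵀ * M = 1 :=
  mul_eq_one_comm.1 (mul_transpose_of_mem_specialOrthogonalGroup hM)

theorem det_of_mem_specialOrthogonalGroup (hM : M ∈ specialOrthogonalGroup n R) : M.det = 1 :=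
  (mem_specialOrthogonalGroup_iff_mul_transpose.1 hM).2

theorem transpose_mem_specialOrthogonalGroup (hM : M ∈ specialOrthogonalGroup n R) :
    Mᵀ ∈ specialOrthogonalGroup n R :=
  mem_specialOrthogonalGroup_iff_mul_transpose.2
    ⟨by rw [transpose_transpose, transpose_mul_of_mem_specialOrthogonalGroup hM],
      by rw [det_transpose, det_of_mem_specialOrthogonalGroup hM]⟩

theorem adjugate_of_mem_specialOrthogonalGroup (hM : M ∈ specialOrthogonalGroup n R) :
    M.adjugate = Mᵀ :=
  calc M.adjugate = Mᵀ * M * M.adjugate := by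
        rw [transpose_mul_of_mem_specialOrthogonalGroup hM, one_mul]
    _ = Mᵀ := by rw [mul_assoc, mul_adjugate, det_of_mem_specialOrthogonalGroup hM, one_smul,
        mul_one]

theorem rodrigues_mem_specialOrthogonalGroup {A : Matrix n n ℝ} (hA : A ^ 3 = -A) (hAt : Aᵀ = -A)
    (θ : ℝ) : rodrigues A θ ∈ specialOrthogonalGroup n ℝ := by
  have transpose_eq (θ : ℝ) : (rodrigues A θ)ᵀ = rodrigues A (-θ) := by
    simp [rodrigues, hAt, transpose_pow]
  have mul_transpose (θ : ℝ) : rodrigues A θ * (rodrigues A θ)ᵀ = 1 := by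
    rw [transpose_eq, ← rodrigues_add hA, add_neg_cancel, rodrigues_zero]
  have det_eq_one : (rodrigues A θ).det = 1 := by
    rw [← add_halves θ, rodrigues_add hA]
    simpa only [det_mul, det_transpose, det_one] using congrArg det (mul_transpose (θ / 2))
  exact mem_specialOrthogonalGroup_iff_mul_transpose.2 ⟨mul_transpose θ, det_eq_one⟩

end SpecialOrthogonal

theorem mem_SO3_iff {M : Mat3} : M ∈ SO3 ↔ M ∈ specialOrthogonalGroup (Fin 3) ℝ :=
  mem_specialOrthogonalGroup_iff_mul_transpose.symm

/-- Infinitesimal rotation of the frame turning `r₃` in the direction of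
`-(cos κ • r₁ + sin κ • r₂)`. -/
def tiltGen (κ : ℝ) : Mat3 :=
  !![0, 0, Real.cos κ; 0, 0, Real.sin κ; -Real.cos κ, -Real.sin κ, 0]

theorem tiltGen_transpose (κ : ℝ) : (tiltGen κ)ᵀ = -tiltGen κ := by
  ext i j
  fin_cases i <;> fin_cases j <;> simp [tiltGen]

theorem tiltGen_pow_three (κ : ℝ) : tiltGen κ ^ 3 = -tiltGen κ := by
  have hκ := Real.sin_sq_add_cos_sq κ
  rw [pow_three]
  ext i j
  fin_cases i <;> fin_cases j <;> simp [tiltGen, mul_apply, Fin.sum_univ_three] <;> grind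

/-- Rotation by the angle `θ` about the axis `(-sin κ, cos κ, 0)`. -/
def tilt (κ θ : ℝ) : Mat3 := rodrigues (tiltGen κ) θ

theorem tilt_mem (κ θ : ℝ) : tilt κ θ ∈ specialOrthogonalGroup (Fin 3) ℝ :=
  rodrigues_mem_specialOrthogonalGroup (tiltGen_pow_three κ) (tiltGen_transpose κ) θ

/-- Rotation by the angle `φ` in the plane of the first two coordinates. -/
def planeRot (φ : ℝ) : Mat3 :=
  !![Real.cos φ, -Real.sin φ, 0; Real.sin φ, Real.cos φ, 0; 0, 0, 1]

theorem planeRot_mem (φ : ℝ) : planeRot φ ∈ specialOrthogonalGroup (Fin 3) ℝ := by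
  have hφ := Real.sin_sq_add_cos_sq φ
  refine mem_SO3_iff.1 ⟨?_, by simp [planeRot, det_fin_three]; grind⟩
  ext i j
  fin_cases i <;> fin_cases j <;> simp [planeRot, mul_apply, Fin.sum_univ_three] <;> grind

theorem planeRot_conj_tiltGen (φ κ : ℝ) :
    planeRot φ * tiltGen κ * (planeRot φ)ᵀ = tiltGen (κ + φ) := by
  ext i j
  fin_cases i <;> fin_cases j <;>
    simp [planeRot, tiltGen, mul_apply, Fin.sum_univ_three, Real.cos_add, Real.sin_add] <;> ring

theorem planeRot_conj_tilt (φ κ θ : ℝ) :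
    planeRot φ * tilt κ θ * (planeRot φ)ᵀ = tilt (κ + φ) θ := by
  rw [tilt, tilt, ← planeRot_conj_tiltGen,
    rodrigues_conj (mul_transpose_of_mem_specialOrthogonalGroup (planeRot_mem φ))
      (transpose_mul_of_mem_specialOrthogonalGroup (planeRot_mem φ))]

theorem tilt_zero_left (θ : ℝ) :
    tilt 0 θ = !![Real.cos θ, 0, Real.sin θ; 0, 1, 0; -Real.sin θ, 0, Real.cos θ] := by
  ext i j
  fin_cases i <;> fin_cases j <;>
    simp [tilt, rodrigues, tiltGen, sq]

theorem tilt_pi_div_two_left (θ : ℝ) :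
    tilt (Real.pi / 2) θ = !![1, 0, 0; 0, Real.cos θ, Real.sin θ; 0, -Real.sin θ, Real.cos θ] := by
  ext i j
  fin_cases i <;> fin_cases j <;>
    simp [tilt, rodrigues, tiltGen, sq]

theorem exists_polar (x y : ℝ) : ∃ θ, √(x ^ 2 + y ^ 2) * Real.cos θ = x ∧
    √(x ^ 2 + y ^ 2) * Real.sin θ = y := by
  rw [← Complex.norm_eq_sqrt_sq_add_sq ⟨x, y⟩]
  exact ⟨_, Complex.norm_mul_cos_arg _, Complex.norm_mul_sin_arg _⟩

theorem exists_tilt_mul_tilt_mulVec_eq_single {v : Fin 3 → ℝ} (hv : v ⬝ᵥ v = 1) :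
    ∃ a b, (tilt 0 b * tilt (Real.pi / 2) a) *ᵥ v = Pi.single 0 1 := by
  obtain ⟨α, hcosα, hsinα⟩ := exists_polar (v 2) (v 1)
  set ρ := √(v 2 ^ 2 + v 1 ^ 2) with hρ
  have hunit : v 0 ^ 2 + ρ ^ 2 = 1 := by
    rw [hρ, Real.sq_sqrt (by positivity)]
    simp only [dotProduct, Fin.sum_univ_three] at hv
    linarith
  obtain ⟨β, hcosβ, hsinβ⟩ := exists_polar (v 0) ρ
  rw [hunit, Real.sqrt_one, one_mul] at hcosβ hsinβ
  have hα := Real.sin_sq_add_cos_sq α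
  have hfirst : tilt (Real.pi / 2) (-α) *ᵥ v = ![v 0, 0, ρ] := by
    ext i
    fin_cases i <;> simp [tilt_pi_div_two_left, mulVec, dotProduct, Fin.sum_univ_three] <;> grind
  refine ⟨-α, β, ?_⟩
  rw [← mulVec_mulVec, hfirst]
  ext i
  fin_cases i <;> simp [tilt_zero_left, mulVec, dotProduct, Fin.sum_univ_three] <;> grind

theorem exists_eq_tilt_of_mulVec_single {M : Mat3} (hM : M ∈ specialOrthogonalGroup (Fin 3) ℝ)
    (hfix : M *ᵥ Pi.single 0 1 = Pi.single 0 1) : ∃ θ, M = tilt (Real.pi / 2) θ := by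
  have hfix_transpose : Mᵀ *ᵥ Pi.single 0 1 = Pi.single 0 1 := by
    rw [← hfix, mulVec_mulVec, transpose_mul_of_mem_specialOrthogonalGroup hM, one_mulVec, hfix]
  have hcol (i : Fin 3) : M i 0 = (Pi.single 0 1 : Fin 3 → ℝ) i := by
    simpa using congrFun hfix i
  have hrow (j : Fin 3) : M 0 j = (Pi.single 0 1 : Fin 3 → ℝ) j := by
    simpa using congrFun hfix_transpose j
  have hadj := adjugate_of_mem_specialOrthogonalGroup hM
  rw [adjugate_fin_three] at hadj
  have h11 : M 2 2 = M 1 1 := by simpa [hcol, hrow] using congrFun₂ hadj 1 1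
  have h12 : -M 1 2 = M 2 1 := by simpa [hcol, hrow] using congrFun₂ hadj 1 2
  have hunit : M 1 1 ^ 2 + M 1 2 ^ 2 = 1 := by
    simpa [mul_apply, Fin.sum_univ_three, hcol, sq] using
      congrFun₂ (mul_transpose_of_mem_specialOrthogonalGroup hM) 1 1
  obtain ⟨θ, hcos, hsin⟩ := exists_polar (M 1 1) (M 1 2)
  rw [hunit, Real.sqrt_one, one_mul] at hcos hsin
  refine ⟨θ, ?_⟩
  ext i j
  fin_cases i <;> fin_cases j <;>
    simp [tilt_pi_div_two_left, hcol, hrow, hcos, hsin, h11, ← h12]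

theorem tilt_neg_mul_tilt (κ θ : ℝ) : tilt κ (-θ) * tilt κ θ = 1 := by
  rw [tilt, tilt, ← rodrigues_add (tiltGen_pow_three κ), neg_add_cancel, rodrigues_zero]

theorem exists_eq_tilt_mul_tilt_mul_tilt_zero {M : Mat3}
    (hM : M ∈ specialOrthogonalGroup (Fin 3) ℝ) :
    ∃ a b c, M = tilt (Real.pi / 2) a * tilt 0 b * tilt (Real.pi / 2) c := by
  have hcol : (M *ᵥ Pi.single 0 1) ⬝ᵥ (M *ᵥ Pi.single 0 1) = 1 := by
    rw [dotProduct_mulVec, ← mulVec_transpose, mulVec_mulVec,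
      transpose_mul_of_mem_specialOrthogonalGroup hM]
    simp
  obtain ⟨a, b, hab⟩ := exists_tilt_mul_tilt_mulVec_eq_single hcol
  rw [mulVec_mulVec] at hab
  obtain ⟨c, hc⟩ := exists_eq_tilt_of_mulVec_single
    (mul_mem (mul_mem (tilt_mem 0 b) (tilt_mem _ a)) hM) hab
  refine ⟨-a, -b, c, ?_⟩
  rw [← hc]
  calc M = tilt (Real.pi / 2) (-a) * (tilt 0 (-b) * tilt 0 b) * tilt (Real.pi / 2) a * M := by
        simp only [tilt_neg_mul_tilt, mul_one, one_mul]
    _ = _ := by simp only [mul_assoc]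

/-- Euler angles: the axes of `tilt κ` and `tilt (κ + π / 2)` are orthogonal. -/
theorem exists_eq_tilt_mul_tilt_mul_tilt {M : Mat3} (hM : M ∈ specialOrthogonalGroup (Fin 3) ℝ)
    (κ : ℝ) : ∃ a b c, M = tilt (κ + Real.pi / 2) a * tilt κ b * tilt (κ + Real.pi / 2) c := by
  set P := planeRot κ with hP
  have hPmem := planeRot_mem κ
  have hPP := mul_transpose_of_mem_specialOrthogonalGroup hPmem
  have hPP' := transpose_mul_of_mem_specialOrthogonalGroup hPmem
  rw [← hP] at hPP hPP'
  obtain ⟨a, b, c, habc⟩ := exists_eq_tilt_mul_tilt_mul_tilt_zero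
    (mul_mem (mul_mem (transpose_mem_specialOrthogonalGroup hPmem) hM) hPmem)
  refine ⟨a, b, c, ?_⟩
  calc M = P * (Pᵀ * M * P) * Pᵀ := by
        rw [mul_assoc Pᵀ, ← mul_assoc P, hPP, one_mul, mul_assoc, hPP, mul_one]
    _ = P * tilt (Real.pi / 2) a * (Pᵀ * P) * tilt 0 b * (Pᵀ * P) * tilt (Real.pi / 2) c * Pᵀ := by
        rw [habc, hPP']; simp only [mul_one, mul_assoc]
    _ = (P * tilt (Real.pi / 2) a * Pᵀ) * (P * tilt 0 b * Pᵀ) *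
          (P * tilt (Real.pi / 2) c * Pᵀ) := by simp only [mul_assoc]
    _ = _ := by simp only [hP, planeRot_conj_tilt, zero_add, add_comm (Real.pi / 2)]

theorem exists_mem_specialOrthogonalGroup_row_zero_eq {v : Fin 3 → ℝ} (hv : v ⬝ᵥ v = 1) :
    ∃ Q ∈ specialOrthogonalGroup (Fin 3) ℝ, Q 0 = v := by
  obtain ⟨a, b, hab⟩ := exists_tilt_mul_tilt_mulVec_eq_single hv
  have hmem := mul_mem (tilt_mem 0 b) (tilt_mem (Real.pi / 2) a)
  set Q := tilt 0 b * tilt (Real.pi / 2) a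
  refine ⟨Q, hmem, ?_⟩
  calc Q 0 = Qᵀ *ᵥ Pi.single 0 1 := by simp; rfl
    _ = v := by
      rw [← hab, mulVec_mulVec, transpose_mul_of_mem_specialOrthogonalGroup hmem, one_mulVec]

theorem exists_mem_specialOrthogonalGroup_row3_eq {v : E3} (hv : ‖v‖ = 1) :
    ∃ Q ∈ specialOrthogonalGroup (Fin 3) ℝ, row3 Q 0 = v := by
  have hdot : v.ofLp ⬝ᵥ v.ofLp = 1 := by
    calc v.ofLp ⬝ᵥ v.ofLp = ⟪v, v⟫ := by
          simp only [EuclideanSpace.inner_eq_star_dotProduct, star_trivial]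
      _ = 1 := by rw [real_inner_self_eq_norm_sq, hv, one_pow]
  obtain ⟨Q, hQ, hrow⟩ := exists_mem_specialOrthogonalGroup_row_zero_eq hdot
  exact ⟨Q, hQ, congrArg (WithLp.toLp 2) hrow⟩

theorem eq_zero_of_hasDerivAt_of_eqOn_const {𝕜 E : Type*} [NontriviallyNormedField 𝕜]
    [NormedAddCommGroup E] [NormedSpace 𝕜 E] {f : 𝕜 → E} {f' c : E} {s : Set 𝕜} {x : 𝕜}
    (hf : HasDerivAt f f' x) (hs : UniqueDiffWithinAt 𝕜 s x) (hx : x ∈ s)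
    (hc : EqOn f (fun _ => c) s) : f' = 0 :=
  hs.eq_deriv _ hf.hasDerivWithinAt ((hasDerivWithinAt_const x s c).congr hc (hc hx))

theorem exists_smooth_ramp_plateau : ∃ φ ψ : ℝ → ℝ,
    ContDiff ℝ (⊤ : ℕ∞) φ ∧ (∀ t ≤ 0, φ t = 0) ∧ (∀ t, 1 ≤ t → φ t = 1) ∧
    ContDiff ℝ (⊤ : ℕ∞) ψ ∧ tsupport ψ ⊆ Ioo 0 1 ∧ (∀ t, ψ t ∈ Icc 0 1) ∧
    ∀ t, ψ t = 1 ∨ deriv φ t = 0 := by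
  let φ : ℝ → ℝ := fun t => Real.smoothTransition (3 * t - 1)
  let ψ : ContDiffBump (1 / 2 : ℝ) := ⟨1 / 6, 1 / 3, by norm_num, by norm_num⟩
  have hφ : ContDiff ℝ (⊤ : ℕ∞) φ := Real.smoothTransition.contDiff.comp (by fun_prop)
  have hφ_zero {t : ℝ} (ht : t ≤ 1 / 3) : φ t = 0 :=
    Real.smoothTransition.zero_of_nonpos (by linarith)
  have hφ_one {t : ℝ} (ht : 2 / 3 ≤ t) : φ t = 1 :=
    Real.smoothTransition.one_of_one_le (by linarith)
  refine ⟨φ, ψ, hφ, fun t ht => hφ_zero (by linarith), fun t ht => hφ_one (by linarith),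
    ψ.contDiff, ?_, fun t => ⟨ψ.nonneg, ψ.le_one⟩, fun t => ?_⟩
  · rw [ψ.tsupport_eq, Real.closedBall_eq_Icc]
    exact Icc_subset_Ioo (by norm_num [ψ]) (by norm_num [ψ])
  · have hφt : HasDerivAt φ (deriv φ t) t := (hφ.differentiable (by simp) t).hasDerivAt
    rcases le_total t (1 / 3) with hlow | hlow
    · exact .inr <| eq_zero_of_hasDerivAt_of_eqOn_const hφt (uniqueDiffWithinAt_Iic t) self_mem_Iic
        fun s hs => hφ_zero (hs.trans hlow)
    rcases le_total (2 / 3) t with hhigh | hhigh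
    · exact .inr <| eq_zero_of_hasDerivAt_of_eqOn_const hφt (uniqueDiffWithinAt_Ici t) self_mem_Ici
        fun s hs => hφ_one (hhigh.trans hs)
    · refine .inl (ψ.one_of_mem_closedBall ?_)
      rw [Real.closedBall_eq_Icc]
      constructor <;> norm_num [ψ] <;> linarith

/-! ### Ribbon frames -/

section RibbonFrames

open scoped Matrix.Norms.Operator

/-- `r` is a smooth frame on `[0, T]` starting at the identity and extended by constants, whose
derivative is at each time a multiple of the infinitesimal rotation `tiltGen (K t)`; the angle `K`
is smooth with support in `(0, T)` and bounded by `π / 4`. -/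
structure IsRibbonFrame (T : ℝ) (r : ℝ → Mat3) (K : ℝ → ℝ) : Prop where
  nonneg : 0 ≤ T
  contDiff : ContDiff ℝ (⊤ : ℕ∞) r
  mem (t : ℝ) : r t ∈ specialOrthogonalGroup (Fin 3) ℝ
  eq_one {t : ℝ} : t ≤ 0 → r t = 1
  eq_end {t : ℝ} : T ≤ t → r t = r T
  contDiff_angle : ContDiff ℝ (⊤ : ℕ∞) K
  tsupport_angle : tsupport K ⊆ Ioo 0 T
  abs_angle_le (t : ℝ) : |K t| ≤ Real.pi / 4
  exists_hasDerivAt (t : ℝ) : ∃ l : ℝ, HasDerivAt r (l • (tiltGen (K t) * r t)) t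

theorem IsRibbonFrame.wait {T : ℝ} (hT : 0 ≤ T) : IsRibbonFrame T (fun _ => 1) 0 where
  nonneg := hT
  contDiff := contDiff_const
  mem _ := one_mem _
  eq_one _ := rfl
  eq_end _ := rfl
  contDiff_angle := contDiff_const
  tsupport_angle := by simp
  abs_angle_le _ := by simpa using by positivity
  exists_hasDerivAt t := ⟨0, by simpa using! hasDerivAt_const t (1 : Mat3)⟩

theorem IsRibbonFrame.scale {T c : ℝ} {r : ℝ → Mat3} {K : ℝ → ℝ} (h : IsRibbonFrame T r K)
    (hc : 0 < c) : IsRibbonFrame (c * T) (fun t => r (t / c)) (fun t => K (t / c)) where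
  nonneg := mul_nonneg hc.le h.nonneg
  contDiff := h.contDiff.comp (contDiff_id.div_const c)
  mem _ := h.mem _
  eq_one ht := h.eq_one (div_nonpos_of_nonpos_of_nonneg ht hc.le)
  eq_end ht := by
    rw [h.eq_end ((le_div_iff₀' hc).2 ht), mul_div_cancel_left₀ _ hc.ne']
  contDiff_angle := h.contDiff_angle.comp (contDiff_id.div_const c)
  tsupport_angle t ht := by
    have hmem : t / c ∈ Ioo 0 T :=
      h.tsupport_angle (tsupport_comp_subset_preimage K (continuous_id.div_const c) ht)
    exact ⟨(div_pos_iff_of_pos_right hc).1 hmem.1, (div_lt_iff₀' hc).1 hmem.2⟩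
  abs_angle_le _ := h.abs_angle_le _
  exists_hasDerivAt t := by
    obtain ⟨l, hl⟩ := h.exists_hasDerivAt (t / c)
    refine ⟨1 / c * l, ?_⟩
    simpa only [smul_smul] using! hl.scomp t ((hasDerivAt_id t).div_const c)

theorem IsRibbonFrame.angle_eq_zero {T t : ℝ} {r : ℝ → Mat3} {K : ℝ → ℝ}
    (h : IsRibbonFrame T r K) (ht : t ∉ Ioo 0 T) : K t = 0 :=
  image_eq_zero_of_notMem_tsupport fun hmem => ht (h.tsupport_angle hmem)

section Concat

variable {T₁ T₂ : ℝ} {r₁ r₂ : ℝ → Mat3} {K₁ K₂ : ℝ → ℝ}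

theorem IsRibbonFrame.concat_angle_of_le (h₂ : IsRibbonFrame T₂ r₂ K₂) {t : ℝ} (ht : t ≤ T₁) :
    K₁ t + K₂ (t - T₁) = K₁ t := by
  rw [h₂.angle_eq_zero fun h => ht.not_gt (sub_pos.1 h.1), add_zero]

theorem IsRibbonFrame.concat_angle_of_ge (h₁ : IsRibbonFrame T₁ r₁ K₁) {t : ℝ} (ht : T₁ ≤ t) :
    K₁ t + K₂ (t - T₁) = K₂ (t - T₁) := by
  rw [h₁.angle_eq_zero fun h => ht.not_gt h.2, zero_add]

theorem IsRibbonFrame.exists_hasDerivAt_concat (h₁ : IsRibbonFrame T₁ r₁ K₁)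
    (h₂ : IsRibbonFrame T₂ r₂ K₂) (t : ℝ) : ∃ l : ℝ, HasDerivAt (fun t => r₂ (t - T₁) * r₁ t)
      (l • (tiltGen (K₁ t + K₂ (t - T₁)) * (r₂ (t - T₁) * r₁ t))) t := by
  obtain ⟨l₁, hl₁⟩ := h₁.exists_hasDerivAt t
  obtain ⟨l₂, hl₂⟩ := h₂.exists_hasDerivAt (t - T₁)
  have hprod := (hl₂.comp_sub_const t T₁).mul hl₁
  rcases le_total t T₁ with ht | ht
  · have hrest := eq_zero_of_hasDerivAt_of_eqOn_const hl₂ (uniqueDiffWithinAt_Iic _) self_mem_Iic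
      fun s hs => h₂.eq_one (hs.trans (sub_nonpos.2 ht))
    refine ⟨l₁, hprod.congr_deriv ?_⟩
    rw [hrest, h₂.concat_angle_of_le ht, h₂.eq_one (sub_nonpos.2 ht), zero_mul, zero_add, one_mul,
      one_mul]
  · have hrest := eq_zero_of_hasDerivAt_of_eqOn_const hl₁ (uniqueDiffWithinAt_Ici _) self_mem_Ici
      fun s hs => h₁.eq_end (ht.trans hs)
    refine ⟨l₂, hprod.congr_deriv ?_⟩
    rw [hrest, h₁.concat_angle_of_ge ht, mul_zero, add_zero, smul_mul_assoc, mul_assoc]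

theorem IsRibbonFrame.concat (h₁ : IsRibbonFrame T₁ r₁ K₁) (h₂ : IsRibbonFrame T₂ r₂ K₂) :
    IsRibbonFrame (T₁ + T₂) (fun t => r₂ (t - T₁) * r₁ t) (fun t => K₁ t + K₂ (t - T₁)) where
  nonneg := add_nonneg h₁.nonneg h₂.nonneg
  contDiff := (h₂.contDiff.comp (contDiff_id.sub contDiff_const)).mul h₁.contDiff
  mem t := mul_mem (h₂.mem _) (h₁.mem t)
  eq_one ht := by
    rw [h₁.eq_one ht, h₂.eq_one (by linarith [h₁.nonneg]), mul_one]
  eq_end {t} ht := by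
    rw [h₁.eq_end (by linarith [h₂.nonneg]), h₁.eq_end (t := T₁ + T₂) (by linarith [h₂.nonneg]),
      h₂.eq_end (t := t - T₁) (by linarith), add_sub_cancel_left]
  contDiff_angle := h₁.contDiff_angle.add (h₂.contDiff_angle.comp (contDiff_id.sub contDiff_const))
  tsupport_angle t ht := by
    rcases tsupport_add _ _ ht with ht | ht
    · have hmem := h₁.tsupport_angle ht
      exact ⟨hmem.1, by linarith [hmem.2, h₂.nonneg]⟩
    · have hmem : t - T₁ ∈ Ioo 0 T₂ := h₂.tsupport_angle
        (tsupport_comp_subset_preimage K₂ (continuous_id.sub continuous_const) ht)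
      constructor <;> linarith [hmem.1, hmem.2, h₁.nonneg]
  abs_angle_le t := by
    rcases le_total t T₁ with ht | ht
    · rw [h₂.concat_angle_of_le ht]
      exact h₁.abs_angle_le t
    · rw [h₁.concat_angle_of_ge ht]
      exact h₂.abs_angle_le _
  exists_hasDerivAt := h₁.exists_hasDerivAt_concat h₂

end Concat

theorem exists_isRibbonFrame_tilt {κ : ℝ} (hκ : |κ| ≤ Real.pi / 4) (θ : ℝ) :
    ∃ r K, IsRibbonFrame 1 r K ∧ r 1 = tilt κ θ := by
  obtain ⟨φ, ψ, hφ, hφ_zero, hφ_one, hψ, hψ_supp, hψ_mem, hψ_plateau⟩ := exists_smooth_ramp_plateau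
  refine ⟨fun t => tilt κ (θ * φ t), fun t => κ * ψ t, ⟨zero_le_one, ?_, fun t => tilt_mem _ _,
    fun ht => ?_, fun ht => ?_, contDiff_const.mul hψ,
    tsupport_mul_subset_right.trans hψ_supp, fun t => ?_, fun t => ?_⟩,
    by simp only [hφ_one 1 le_rfl, mul_one]⟩
  · exact (contDiff_rodrigues (tiltGen κ)).comp (contDiff_const.mul hφ)
  · rw [hφ_zero _ ht, mul_zero, tilt, rodrigues_zero]
  · rw [hφ_one _ ht, hφ_one 1 le_rfl]
  · rw [abs_mul, abs_of_nonneg (hψ_mem t).1]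
    exact (mul_le_of_le_one_right (abs_nonneg κ) (hψ_mem t).2).trans hκ
  · have hφt : HasDerivAt φ (deriv φ t) t := (hφ.differentiable (by simp) t).hasDerivAt
    have hr : HasDerivAt (fun t => tilt κ (θ * φ t))
        ((θ * deriv φ t) • (tiltGen κ * tilt κ (θ * φ t))) t :=
      (hasDerivAt_rodrigues (tiltGen_pow_three κ) (θ * φ t)).scomp t (hφt.const_mul θ)
    -- Where the angle differs from `κ` the frame is at rest, so that every angle is admissible.
    rcases hψ_plateau t with hψt | hφt_zero
    · exact ⟨θ * deriv φ t, by simpa only [hψt, mul_one] using hr⟩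
    · exact ⟨0, hr.congr_deriv (by rw [hφt_zero, mul_zero, zero_smul, zero_smul])⟩

/-- The frame `M` can be reached in time `T` along a ribbon frame with integral `P`. The row
`P 0` is the displacement of the framed curve; keeping the other rows makes the integral of a
concatenation computable from those of its pieces. -/
def IsReachable (T : ℝ) (M P : Mat3) : Prop :=
  ∃ r K, IsRibbonFrame T r K ∧ r T = M ∧ ∫ t in (0 : ℝ)..T, r t = P

theorem IsReachable.wait {T : ℝ} (hT : 0 ≤ T) : IsReachable T 1 (T • 1) :=
  ⟨_, _, .wait hT, rfl, by simp⟩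

theorem IsReachable.scale {T c : ℝ} {M P : Mat3} (h : IsReachable T M P) (hc : 0 < c) :
    IsReachable (c * T) M (c • P) := by
  obtain ⟨r, K, hr, hM, hP⟩ := h
  refine ⟨_, _, hr.scale hc, ?_, ?_⟩
  · rw [mul_div_cancel_left₀ _ hc.ne', hM]
  · rw [intervalIntegral.integral_comp_div _ hc.ne', zero_div, mul_div_cancel_left₀ _ hc.ne', hP]

theorem IsReachable.concat {T₁ T₂ : ℝ} {M₁ M₂ P₁ P₂ : Mat3} (h₁ : IsReachable T₁ M₁ P₁)
    (h₂ : IsReachable T₂ M₂ P₂) : IsReachable (T₁ + T₂) (M₂ * M₁) (P₁ + P₂ * M₁) := by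
  obtain ⟨r₁, K₁, hr₁, hM₁, hP₁⟩ := h₁
  obtain ⟨r₂, K₂, hr₂, hM₂, hP₂⟩ := h₂
  have hr := hr₁.concat hr₂
  have hT₂ : T₁ ≤ T₁ + T₂ := le_add_of_nonneg_right hr₂.nonneg
  have hintegrable (a b : ℝ) := hr.contDiff.continuous.intervalIntegrable (μ := volume) a b
  have hfirst : ∫ t in (0 : ℝ)..T₁, r₂ (t - T₁) * r₁ t = P₁ := by
    rw [← hP₁]
    refine intervalIntegral.integral_congr fun t ht => ?_
    rw [uIcc_of_le hr₁.nonneg] at ht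
    simp only [hr₂.eq_one (sub_nonpos.2 ht.2), one_mul]
  have hsecond : ∫ t in T₁..(T₁ + T₂), r₂ (t - T₁) * r₁ t = P₂ * M₁ := by
    calc ∫ t in T₁..(T₁ + T₂), r₂ (t - T₁) * r₁ t
        = ∫ t in T₁..(T₁ + T₂), r₂ (t - T₁) * M₁ := by
          refine intervalIntegral.integral_congr fun t ht => ?_
          rw [uIcc_of_le hT₂] at ht
          simp only [hr₁.eq_end ht.1, hM₁]
      _ = ∫ t in (0 : ℝ)..T₂, r₂ t * M₁ := by
          rw [intervalIntegral.integral_comp_sub_right (fun t => r₂ t * M₁), sub_self,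
            add_sub_cancel_left]
      _ = P₂ * M₁ := by
          rw [← hP₂]
          exact ((ContinuousLinearMap.mul ℝ Mat3).flip M₁).intervalIntegral_comp_comm
            (hr₂.contDiff.continuous.intervalIntegrable 0 T₂)
  refine ⟨_, _, hr, ?_, ?_⟩
  · rw [add_sub_cancel_left, hM₂, hr₁.eq_end hT₂, hM₁]
  · rw [← intervalIntegral.integral_add_adjacent_intervals (hintegrable 0 T₁)
      (hintegrable T₁ _), hfirst, hsecond]

theorem exists_isReachable_tilt {κ : ℝ} (hκ : |κ| ≤ Real.pi / 4) (θ : ℝ) :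
    ∃ P, IsReachable 1 (tilt κ θ) P := by
  obtain ⟨r, K, hr, hend⟩ := exists_isRibbonFrame_tilt hκ θ
  exact ⟨_, r, K, hr, hend, rfl⟩

theorem exists_isReachable {M : Mat3} (hM : M ∈ specialOrthogonalGroup (Fin 3) ℝ) :
    ∃ T P, IsReachable T M P := by
  obtain ⟨a, b, c, rfl⟩ := exists_eq_tilt_mul_tilt_mul_tilt hM (-(Real.pi / 4))
  have hpos : |-(Real.pi / 4) + Real.pi / 2| ≤ Real.pi / 4 := by
    rw [abs_of_nonneg] <;> linarith [Real.pi_pos]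
  have hneg : |-(Real.pi / 4)| ≤ Real.pi / 4 := by
    rw [abs_neg, abs_of_nonneg (by positivity)]
  obtain ⟨P₁, h₁⟩ := exists_isReachable_tilt hpos c
  obtain ⟨P₂, h₂⟩ := exists_isReachable_tilt hneg b
  obtain ⟨P₃, h₃⟩ := exists_isReachable_tilt hpos a
  exact ⟨_, _, mul_assoc (tilt _ a) _ _ ▸ (h₁.concat h₂).concat h₃⟩

theorem exists_isReachable_add_sum_wait {ι : Type*} {Q : ι → Mat3} (s : Finset ι)
    (hQ : ∀ i ∈ s, Q i ∈ specialOrthogonalGroup (Fin 3) ℝ) {M : Mat3}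
    (hM : M ∈ specialOrthogonalGroup (Fin 3) ℝ) :
    ∃ T P, ∀ c : ι → ℝ, (∀ i ∈ s, 0 ≤ c i) →
      IsReachable (T + ∑ i ∈ s, c i) M (P + ∑ i ∈ s, c i • Q i) := by
  induction s using Finset.cons_induction generalizing M with
  | empty =>
    obtain ⟨T, P, h⟩ := exists_isReachable hM
    exact ⟨T, P, fun c _ => by simpa using h⟩
  | cons i s hi ih =>
    rw [Finset.forall_mem_cons] at hQ
    obtain ⟨T₁, P₁, h₁⟩ := ih hQ.2 hQ.1
    obtain ⟨T₂, P₂, h₂⟩ :=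
      exists_isReachable (mul_mem hM (transpose_mem_specialOrthogonalGroup hQ.1))
    refine ⟨T₁ + T₂, P₁ + P₂ * Q i, fun c hc => ?_⟩
    rw [Finset.forall_mem_cons] at hc
    convert ((h₁ c hc.2).concat (.wait hc.1)).concat h₂ using 1
    · rw [Finset.sum_cons]
      ring
    · rw [one_mul, mul_assoc, transpose_mul_of_mem_specialOrthogonalGroup hQ.1, mul_one]
    · rw [Finset.sum_cons, one_mul, smul_mul_assoc, one_mul]
      abel

/-! ### Prescribing the displacement -/

theorem exists_finset_subset_mem_interior_convexHull {E : Type*} [NormedAddCommGroup E]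
    [NormedSpace ℝ E] [FiniteDimensional ℝ E] {s : Set E} {x : E}
    (hx : x ∈ interior (convexHull ℝ s)) :
    ∃ t : Finset E, (t : Set E) ⊆ s ∧ x ∈ interior (convexHull ℝ (t : Set E)) := by
  classical
  obtain ⟨b, hxb, hbs⟩ :=
    exists_mem_interior_convexHull_affineBasis (mem_interior_iff_mem_nhds.1 hx)
  have hvertex (i) : ∃ t : Finset E, (t : Set E) ⊆ s ∧ b i ∈ convexHull ℝ (t : Set E) := by
    have hbi : b i ∈ convexHull ℝ s := hbs (subset_convexHull ℝ _ (mem_range_self i))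
    rw [convexHull_eq_union_convexHull_finite_subsets] at hbi
    simpa only [mem_iUnion, exists_prop] using hbi
  choose t ht hbt using hvertex
  refine ⟨Finset.univ.biUnion t, by simpa using ht, interior_mono ?_ hxb⟩
  refine convexHull_min (range_subset_iff.2 fun i => ?_) (convex_convexHull ℝ _)
  exact convexHull_mono (by simpa using subset_iUnion (fun i => (t i : Set E)) i) (hbt i)

/-- `row3` as a continuous linear map of the matrix. -/
def row3CLM (i : Fin 3) : Mat3 →L[ℝ] E3 :=
  LinearMap.toContinuousLinearMap
    { toFun := fun M => row3 M i, map_add' := fun _ _ => rfl, map_smul' := fun _ _ => rfl }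

theorem row3CLM_apply (i : Fin 3) (M : Mat3) : row3CLM i M = row3 M i := rfl

theorem eventually_exists_isReachable_row3_eq {M : Mat3}
    (hM : M ∈ specialOrthogonalGroup (Fin 3) ℝ) {g : E3} (hg : ‖g‖ < 1) :
    ∀ᶠ T in atTop, ∃ P, IsReachable T M P ∧ row3 P 0 = T • g := by
  have hball : g ∈ interior (convexHull ℝ (Metric.sphere (0 : E3) 1)) := by
    rwa [convexHull_sphere_eq_closedBall _ zero_le_one, interior_closedBall _ one_ne_zero,
      mem_ball_zero_iff]
  obtain ⟨s, hs, hgs⟩ := exists_finset_subset_mem_interior_convexHull hball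
  choose! Q hQ hQrow using fun (v : E3) (hv : v ∈ s) =>
    exists_mem_specialOrthogonalGroup_row3_eq (mem_sphere_zero_iff_norm.1 (hs hv))
  obtain ⟨T₀, P₀, h⟩ := exists_isReachable_add_sum_wait s hQ hM
  have hlim : Tendsto (fun T : ℝ => g + (T - T₀)⁻¹ • (T₀ • g - row3 P₀ 0)) atTop (𝓝 g) := by
    have hinv : Tendsto (fun T : ℝ => (T - T₀)⁻¹) atTop (𝓝 0) :=
      tendsto_inv_atTop_zero.comp (tendsto_atTop_add_const_right _ (-T₀) tendsto_id)
    simpa using (hinv.smul_const (T₀ • g - row3 P₀ 0)).const_add g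
  filter_upwards [hlim (mem_interior_iff_mem_nhds.1 hgs), eventually_gt_atTop T₀] with T hT hT₀
  obtain ⟨w, hw_nonneg, hw_sum, hw⟩ := Finset.mem_convexHull'.1 hT
  refine ⟨P₀ + ∑ v ∈ s, ((T - T₀) * w v) • Q v, ?_, ?_⟩
  · convert h (fun v => (T - T₀) * w v) fun v hv =>
      mul_nonneg (sub_nonneg.2 hT₀.le) (hw_nonneg v hv) using 1
    rw [← Finset.mul_sum, hw_sum, mul_one, add_sub_cancel]
  · calc row3 (P₀ + ∑ v ∈ s, ((T - T₀) * w v) • Q v) 0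
        = row3 P₀ 0 + (T - T₀) • ∑ v ∈ s, w v • v := by
          simp only [← row3CLM_apply, map_add, map_sum, map_smul, Finset.smul_sum, smul_smul]
          congr 1
          refine Finset.sum_congr rfl fun v hv => ?_
          rw [row3CLM_apply, hQrow v hv]
      _ = T • g := by
          rw [hw, smul_add, smul_inv_smul₀ (sub_pos.2 hT₀).ne']
          module

theorem exists_isRibbonFrame_integral_row3_eq {M : Mat3}
    (hM : M ∈ specialOrthogonalGroup (Fin 3) ℝ) {g : E3} (hg : ‖g‖ < 1) :
    ∃ r K, IsRibbonFrame 1 r K ∧ r 1 = M ∧ ∫ t in (0 : ℝ)..1, row3 (r t) 0 = g := by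
  obtain ⟨T, ⟨P, hreach, hP⟩, hT⟩ :=
    ((eventually_exists_isReachable_row3_eq hM hg).and (eventually_gt_atTop 0)).exists
  obtain ⟨r, K, hr, hend, hintegral⟩ := hreach.scale (inv_pos.2 hT)
  rw [inv_mul_cancel₀ hT.ne'] at hr hend hintegral
  refine ⟨r, K, hr, hend, ?_⟩
  calc ∫ t in (0 : ℝ)..1, row3 (r t) 0 = row3CLM 0 (∫ t in (0 : ℝ)..1, r t) :=
        (row3CLM 0).intervalIntegral_comp_comm (hr.contDiff.continuous.intervalIntegrable 0 1)
    _ = g := by rw [hintegral, map_smul, row3CLM_apply, hP, inv_smul_smul₀ hT.ne']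

/-! ### Rows of a ribbon frame -/

theorem row3_smul_tiltGen_mul_zero (l κ : ℝ) (N : Mat3) :
    row3 (l • (tiltGen κ * N)) 0 = (l * Real.cos κ) • row3 N 2 := by
  ext j
  simp [row3, tiltGen, vecMul, dotProduct, Fin.sum_univ_three, mul_assoc]

theorem row3_smul_tiltGen_mul_two (l κ : ℝ) (N : Mat3) :
    row3 (l • (tiltGen κ * N)) 2 =
      -l • (Real.cos κ • row3 N 0 + Real.sin κ • row3 N 1) := by
  ext j
  simp [row3, tiltGen, vecMul, dotProduct, Fin.sum_univ_three]
  ring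

theorem inner_row3_eq_zero_of_ne {N : Mat3} (hN : N ∈ specialOrthogonalGroup (Fin 3) ℝ)
    {i j : Fin 3} (hij : i ≠ j) : ⟪row3 N i, row3 N j⟫ = 0 := by
  have hdot := congrFun₂ (mul_transpose_of_mem_specialOrthogonalGroup hN) j i
  rw [one_apply_ne hij.symm] at hdot
  rw [EuclideanSpace.inner_eq_star_dotProduct, star_trivial]
  exact hdot

theorem cross3_row3_two_row3_zero {N : Mat3} (hN : N ∈ specialOrthogonalGroup (Fin 3) ℝ) :
    cross3 (row3 N 2) (row3 N 0) = row3 N 1 := by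
  have hadj := adjugate_of_mem_specialOrthogonalGroup hN
  rw [adjugate_fin_three] at hadj
  ext j
  have hentry := congrFun₂ hadj j 1
  fin_cases j <;> simp [cross3, row3] at hentry ⊢ <;> linarith

theorem cross3_smul_self (a : ℝ) (v : E3) : cross3 (a • v) v = 0 := by
  ext j
  fin_cases j <;> simp [cross3] <;> ring

section Rows

variable {T : ℝ} {r : ℝ → Mat3} {K : ℝ → ℝ}

theorem IsRibbonFrame.contDiff_row3 (h : IsRibbonFrame T r K) (i : Fin 3) :
    ContDiff ℝ (⊤ : ℕ∞) fun t => row3 (r t) i :=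
  (row3CLM i).contDiff.comp h.contDiff

theorem IsRibbonFrame.exists_deriv_row3 (h : IsRibbonFrame T r K) (t : ℝ) :
    ∃ l : ℝ, ∀ i, deriv (fun s => row3 (r s) i) t = row3 (l • (tiltGen (K t) * r t)) i := by
  obtain ⟨l, hl⟩ := h.exists_hasDerivAt t
  exact ⟨l, fun i => ((row3CLM i).hasFDerivAt.comp_hasDerivAt t hl).deriv⟩

theorem IsRibbonFrame.inner_deriv_row3_zero (h : IsRibbonFrame T r K) (t : ℝ) :
    ⟪deriv (fun s => row3 (r s) 0) t, row3 (r t) 1⟫ = 0 := by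
  obtain ⟨l, hl⟩ := h.exists_deriv_row3 t
  rw [hl, row3_smul_tiltGen_mul_zero, real_inner_smul_left,
    inner_row3_eq_zero_of_ne (h.mem t) (by decide), mul_zero]

theorem IsRibbonFrame.cross3_deriv_row3_two (h : IsRibbonFrame T r K) (t : ℝ) :
    cross3 (deriv (fun s => row3 (r s) 2) t) (Real.cos (K t) • row3 (r t) 0 +
      Real.sin (K t) • cross3 (row3 (r t) 2) (row3 (r t) 0)) = 0 := by
  obtain ⟨l, hl⟩ := h.exists_deriv_row3 t
  rw [hl, row3_smul_tiltGen_mul_two, cross3_row3_two_row3_zero (h.mem t), cross3_smul_self]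

theorem IsRibbonFrame.hasCompactSupport_angle (h : IsRibbonFrame T r K) : HasCompactSupport K :=
  isCompact_Icc.of_isClosed_subset (isClosed_tsupport K)
    (h.tsupport_angle.trans Ioo_subset_Icc_self)

end Rows

end RibbonFrames

theorem contDiff_integral_of_contDiff {E : Type*} [NormedAddCommGroup E] [NormedSpace ℝ E]
    [CompleteSpace E] {f : ℝ → E} (hf : ContDiff ℝ (⊤ : ℕ∞) f) (a : ℝ) :
    ContDiff ℝ (⊤ : ℕ∞) fun t => ∫ s in a..t, f s := by
  have hderiv := hf.continuous.integral_hasStrictDerivAt a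
  refine contDiff_infty_iff_deriv.2 ⟨fun t => (hderiv t).hasDerivAt.differentiableAt, ?_⟩
  rwa [funext fun t => (hderiv t).hasDerivAt.deriv]

/-- Framed curves for finite ribbons: for all `r̄ ∈ SO(3)` and `γ̄` with
`|γ̄| < 1` there is a smooth framed curve `(γ, r)` with `γ' = r₁`, `r₁'·r₂ ≡ 0`, satisfying the
clamped boundary conditions `r(0) = Id`, `r(1) = r̄`, `γ(0) = 0`, `γ(1) = γ̄`, and such that
there exists `K_g ∈ C₀^∞(I)` with `|K_g| ≤ π/4` for which
`r̃₁ = cos(K_g) r₁ + sin(K_g) (r₃ × r₁)` satisfies `r₃' × r̃₁ = 0` (an adapted frame for the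
spherical curve `r₃`). -/
theorem statement17
    (rbar : Matrix (Fin 3) (Fin 3) ℝ) (hrbar : rbar ∈ SO3)
    (γbar : E3) (hγ : ‖γbar‖ < 1) :
    ∃ (γ : ℝ → E3) (r : ℝ → Matrix (Fin 3) (Fin 3) ℝ),
      ContDiff ℝ (⊤ : ℕ∞) γ ∧ (∀ i : Fin 3, ContDiff ℝ (⊤ : ℕ∞) (fun t => row3 (r t) i)) ∧
      (∀ t ∈ Set.Icc (0:ℝ) 1, r t ∈ SO3) ∧
      (∀ t ∈ Set.Icc (0:ℝ) 1, deriv γ t = row3 (r t) 0) ∧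
      (∀ t ∈ Set.Icc (0:ℝ) 1, ⟪deriv (fun s => row3 (r s) 0) t, row3 (r t) 1⟫ = 0) ∧
      r 0 = 1 ∧ r 1 = rbar ∧ γ 0 = 0 ∧ γ 1 = γbar ∧
      ∃ Kg : ℝ → ℝ, ContDiff ℝ (⊤ : ℕ∞) Kg ∧ HasCompactSupport Kg ∧
        tsupport Kg ⊆ Set.Ioo 0 1 ∧
        (∀ t, |Kg t| ≤ Real.pi / 4) ∧
        (∀ t ∈ Set.Icc (0:ℝ) 1,
          cross3 (deriv (fun s => row3 (r s) 2) t)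
            (Real.cos (Kg t) • row3 (r t) 0 +
              Real.sin (Kg t) • cross3 (row3 (r t) 2) (row3 (r t) 0)) = 0) := by
  obtain ⟨r, K, hr, hend, hintegral⟩ :=
    exists_isRibbonFrame_integral_row3_eq (mem_SO3_iff.1 hrbar) hγ
  have hrow := hr.contDiff_row3 0
  refine ⟨fun t => ∫ s in (0 : ℝ)..t, row3 (r s) 0, r,
    contDiff_integral_of_contDiff hrow 0, hr.contDiff_row3,
    fun t _ => mem_SO3_iff.2 (hr.mem t),
    fun t _ => hrow.continuous.deriv_integral _ 0 t,
    fun t _ => hr.inner_deriv_row3_zero t,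
    hr.eq_one le_rfl, hend, intervalIntegral.integral_same, hintegral,
    K, hr.contDiff_angle, hr.hasCompactSupport_angle, hr.tsupport_angle, hr.abs_angle_le,
    fun t _ => hr.cross3_deriv_row3_two t⟩
end
end
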